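/- For all positive integers d, δ, n, m there exists a constant γ'(d,δ,n,m) with the following property: for every degree-d algebraic extension 𝓛 of ℚ, regarded as a subfield of ℂ, and every k×n m-sparse polynomial system G over 𝓛, the number of isolated roots of G in ℂ^n that are of degree at most δ over 𝓛 is at most γ'(d,δ,n,m). -/

import Mathlib

/-!
The proof is `2`-adic and proceeds by contradiction through an ultrafilter; it yields no explicit
bound.

*Reduction to a `p`-adic field.* Over `ℂ`, an isolated root is algebraically isolated: the local ring
of the zero set at the root is artinian (`algIsolated_of_isolated`, by Noether normalisation of a
positive-dimensional component and continuity of roots). This property is preserved by field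
isomorphisms, in particular by `ℂ ≃+* ℂ_[2]` (`nonempty_ringEquiv_padicComplex`). A system supported
on `m` monomials may be replaced by one with `m` equations (`exists_square_sparseSys`).

*Elements of bounded degree.* A coordinate of degree at most `δ` over `𝓛` has degree at most `d * δ`
over `ℚ`. There are `π` and a finite set of units, depending only on `d * δ`, such that every nonzero
element of that degree is `π ^ v * ζ * u` with `ζ` in the finite set and `‖u - 1‖ ≤ ‖2‖ ^ 2`
(`exists_decomposition`): the values lie in a discrete group and the units are totally bounded.

*Uniform bound* (`core_bound`). Suppose that there are systems with more and more such roots. The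
roots of all these systems carry an ultrafilter that charges no family with a bounded number of
roots per system (`exists_ultrafilter_not_few`); along it, the finite data (vanishing coordinates,
units `ζ`, dominant terms of the equations) are constant. By `core_aux`, almost every root then lies
on a nonconstant formal arc of zeros, which contradicts isolation (`AlgIsolated.arc_eq`).

*The arc.* After division by dominant terms, the equations become power series relations, with
coefficients depending only on the system, between small monomials in `π ^ v` and the small
coordinates `(u - 1) / p`; the large integer exponents enter through the `p`-adic binomial series
`genBinomial` with indeterminate exponent, so that everything lives in one noetherian power series
ring, whatever the degrees. The ideal of relations valid at almost all points is prime. If it is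
homogeneous for the natural grading, one-parameter groups of torus automorphisms preserve it and
provide the arc (`Chart.flow_of_homogeneous`). Otherwise it contains a relation whose dominant terms
involve the small coordinates only (`Chart.nonhomogeneous_relation`); a change of variables makes
it distinguished, Weierstrass division and Hensel's lemma eliminate one coordinate (`Chart.step`,
`extend_flow`), and induction on the number of coordinates concludes (`Chart.dichotomy`).
-/

open MvPolynomial Filter Topology

/-- The zero set in `F^n` of a `k`-tuple of `n`-variate polynomials. -/
def zeroSet {F : Type*} [CommSemiring F] {k n : ℕ}
    (G : Fin k → MvPolynomial (Fin n) F) : Set (Fin n → F) :=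
  {x | ∀ i, MvPolynomial.eval x (G i) = 0}

/-- `ζ` is an isolated root of the system `G`: it is a root, and an isolated point of the
zero set of `G` in the metric topology. -/
def IsIsolatedRoot {F : Type*} [NormedField F] {k n : ℕ}
    (G : Fin k → MvPolynomial (Fin n) F) (ζ : Fin n → F) : Prop :=
  ζ ∈ zeroSet G ∧ 𝓝[zeroSet G \ {ζ}] ζ = ⊥

/-- A `k × n` `m`-sparse polynomial system: all the `gᵢ` are nonzero and the union of their
supports has exactly `m` elements. -/
def IsSparseSystem {F : Type*} [CommSemiring F] {k n : ℕ}
    (G : Fin k → MvPolynomial (Fin n) F) (m : ℕ) : Prop :=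
  (∀ i, G i ≠ 0) ∧ (Finset.univ.biUnion fun i => (G i).support).card = m

/-- `x` is algebraic of degree at most `δ` over (the image of) `L`, i.e. it is annihilated by
some nonzero polynomial over `L` of degree at most `δ`. -/
def HasDegreeAtMost {L F : Type*} [Field L] [Field F] (ι : L →+* F) (δ : ℕ) (x : F) : Prop :=
  ∃ q : Polynomial L, q ≠ 0 ∧ q.natDegree ≤ δ ∧ Polynomial.eval₂ ι x q = 0

set_option linter.unusedSectionVars false
set_option linter.unusedVariables false
set_option linter.deprecated false
set_option linter.unusedSimpArgs false

/-! ### Evaluation of power series over an ultrametric field, and uniqueness of arcs -/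

section Eval

variable {C : Type*} [NormedField C]
variable {σ : Type*} [Fintype σ] {R : Type*} [CommRing R]

theorem mem_pow_span_X_of_coeff [Finite σ] (N : ℕ) (f : MvPowerSeries σ R)
    (hf : ∀ κ : σ →₀ ℕ, κ.degree < N → MvPowerSeries.coeff κ f = 0) :
    f ∈ (Ideal.span (Set.range (MvPowerSeries.X : σ → MvPowerSeries σ R))) ^ N := by
  classical
  cases nonempty_fintype σ
  induction N generalizing f with
  | zero => simp
  | succ N ih =>
    -- choose a variable occurring in each nonzero exponent
    have hc : ∀ κ : σ →₀ ℕ, ∃ i : Option σ, (κ = 0 ∧ i = none) ∨ ∃ j, i = some j ∧ κ j ≠ 0 := by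
      intro κ
      by_cases h : κ = 0
      · exact ⟨none, Or.inl ⟨h, rfl⟩⟩
      · obtain ⟨j, hj⟩ := Finsupp.ne_iff.mp h
        exact ⟨some j, Or.inr ⟨j, rfl, by simpa using hj⟩⟩
    choose c hc using hc
    let g : σ → MvPowerSeries σ R := fun i κ =>
      if c (κ + Finsupp.single i 1) = some i then
        MvPowerSeries.coeff (κ + Finsupp.single i 1) f else 0
    have hg : ∀ i κ, MvPowerSeries.coeff κ (g i) =
      if c (κ + Finsupp.single i 1) = some i then
        MvPowerSeries.coeff (κ + Finsupp.single i 1) f else 0 := fun i κ => rfl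
    have hsum : f = ∑ i, MvPowerSeries.X i * g i := by
      ext κ
      rw [map_sum]
      have hterm : ∀ i, MvPowerSeries.coeff κ (MvPowerSeries.X i * g i) =
          if c κ = some i then MvPowerSeries.coeff κ f else 0 := by
        intro i
        rw [MvPowerSeries.X, MvPowerSeries.coeff_monomial_mul]
        by_cases h : Finsupp.single i 1 ≤ κ
        · rw [if_pos h, hg, tsub_add_cancel_of_le h, one_mul]
        · rw [if_neg h, if_neg]
          intro hci
          rcases hc κ with ⟨_, h2⟩ | ⟨j, h2, h3⟩
          · rw [hci] at h2; cases h2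
          · rw [hci] at h2
            cases h2
            apply h
            rw [Finsupp.single_le_iff]
            omega
      simp_rw [hterm]
      rcases hc κ with ⟨h1, h2⟩ | ⟨j, h2, h3⟩
      · simp only [h2, reduceCtorEq, if_false, Finset.sum_const_zero]
        apply hf
        simp [h1]
      · simp [h2]
    rw [hsum]
    refine Ideal.sum_mem _ fun i _ => ?_
    rw [pow_succ']
    refine Ideal.mul_mem_mul (Ideal.subset_span ⟨i, rfl⟩) (ih _ fun κ hκ => ?_)
    rw [hg]
    split_ifs
    · apply hf
      rw [map_add, Finsupp.degree_single]
      omega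
    · rfl

theorem prod_pow_norm_le {x : σ → C} {r : ℝ} (hx : ∀ i, ‖x i‖ ≤ r) (κ : σ →₀ ℕ) :
    ‖∏ i, x i ^ κ i‖ ≤ r ^ κ.degree := by
  rw [norm_prod, Finsupp.degree_eq_sum, ← Finset.prod_pow_eq_pow_sum]
  refine Finset.prod_le_prod (fun i _ => norm_nonneg _) fun i _ => ?_
  rw [norm_pow]
  exact pow_le_pow_left₀ (norm_nonneg _) (hx i) _

theorem exists_bound_lt_one {x : σ → C} (hx : ∀ i, ‖x i‖ < 1) :
    ∃ r : ℝ, 0 ≤ r ∧ r < 1 ∧ ∀ i, ‖x i‖ ≤ r := by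
  classical
  by_cases h : Nonempty σ
  · refine ⟨Finset.univ.sup' Finset.univ_nonempty fun i => ‖x i‖, ?_, ?_, ?_⟩
    · obtain ⟨i⟩ := h
      exact (norm_nonneg (x i)).trans (Finset.le_sup' (fun i => ‖x i‖) (Finset.mem_univ i))
    · rw [Finset.sup'_lt_iff]; exact fun i _ => hx i
    · exact fun i => Finset.le_sup' (fun i => ‖x i‖) (Finset.mem_univ i)
  · exact ⟨0, le_rfl, one_pos, fun i => (h ⟨i⟩).elim⟩

theorem tendsto_degree_cofinite :
    Tendsto (fun κ : σ →₀ ℕ => κ.degree) cofinite atTop := by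
  refine tendsto_atTop.2 fun N => ?_
  rw [eventually_cofinite]
  refine (Finsupp.finite_of_degree_le (σ := σ) N).subset fun κ hκ => ?_
  simp only [Set.mem_ofPred_eq, not_le] at hκ ⊢
  exact hκ.le

variable [CompleteSpace C] [IsUltrametricDist C]

theorem summable_eval {x : σ → C} (hx : ∀ i, ‖x i‖ < 1) {c : (σ →₀ ℕ) → C}
    (hc : ∀ κ, ‖c κ‖ ≤ 1) : Summable fun κ => c κ * ∏ i, x i ^ κ i := by
  apply NonarchimedeanAddGroup.summable_of_tendsto_cofinite_zero
  obtain ⟨r, hr0, hr1, hr⟩ := exists_bound_lt_one hx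
  refine squeeze_zero_norm (a := fun κ : σ →₀ ℕ => r ^ κ.degree) (fun κ => ?_) ?_
  · rw [norm_mul]
    calc _ ≤ 1 * r ^ κ.degree :=
          mul_le_mul (hc κ) (prod_pow_norm_le hr κ) (norm_nonneg _) zero_le_one
      _ = _ := one_mul _
  · exact (tendsto_pow_atTop_nhds_zero_of_lt_one hr0 hr1).comp tendsto_degree_cofinite

theorem evalHom_mul_aux (ev : R →+* C) (hev : ∀ b, ‖ev b‖ ≤ 1) (x : σ → C)
    (hx : ∀ i, ‖x i‖ < 1) (f g : MvPowerSeries σ R) :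
    ∑' κ : σ →₀ ℕ, ev (MvPowerSeries.coeff κ (f * g)) * ∏ i, x i ^ κ i =
    (∑' κ : σ →₀ ℕ, ev (MvPowerSeries.coeff κ f) * ∏ i, x i ^ κ i) *
    ∑' κ : σ →₀ ℕ, ev (MvPowerSeries.coeff κ g) * ∏ i, x i ^ κ i := by
  classical
  have hf : Summable fun κ : σ →₀ ℕ => ev (MvPowerSeries.coeff κ f) * ∏ i, x i ^ κ i :=
    summable_eval hx fun κ => hev (MvPowerSeries.coeff κ f)
  have hg : Summable fun κ : σ →₀ ℕ => ev (MvPowerSeries.coeff κ g) * ∏ i, x i ^ κ i :=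
    summable_eval hx fun κ => hev (MvPowerSeries.coeff κ g)
  have : NonarchimedeanRing C := { is_nonarchimedean := NonarchimedeanAddGroup.is_nonarchimedean }
  have hfg := hf.mul_of_nonarchimedean hg
  rw [hf.tsum_mul_tsum_eq_tsum_sum_antidiagonal hg hfg]
  refine tsum_congr fun κ => ?_
  rw [MvPowerSeries.coeff_mul, map_sum, Finset.sum_mul]
  refine Finset.sum_congr rfl fun p hp => ?_
  have hp' : p.1 + p.2 = κ := Finset.HasAntidiagonal.mem_antidiagonal.1 hp
  rw [← hp', map_mul]
  simp only [Finsupp.add_apply, pow_add, Finset.prod_mul_distrib]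
  ring

/-- Evaluation of a power series at a point of the open unit polydisc, the coefficients being
specialised along a ring homomorphism `ev` into the closed unit ball. -/
noncomputable def evalHom (ev : R →+* C) (hev : ∀ b, ‖ev b‖ ≤ 1) (x : σ → C)
    (hx : ∀ i, ‖x i‖ < 1) : MvPowerSeries σ R →+* C where
  toFun f := ∑' κ : σ →₀ ℕ, ev (MvPowerSeries.coeff κ f) * ∏ i, x i ^ κ i
  map_one' := by
    classical
    rw [tsum_eq_single 0]
    · simp
    · intro κ hκ
      simp [MvPowerSeries.coeff_one, hκ]
  map_zero' := by simp
  map_add' f g := by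
    have hf := summable_eval hx fun κ => hev (MvPowerSeries.coeff κ f)
    have hg := summable_eval hx fun κ => hev (MvPowerSeries.coeff κ g)
    rw [← hf.tsum_add hg]
    refine tsum_congr fun κ => ?_
    rw [map_add, map_add, add_mul]
  map_mul' f g := evalHom_mul_aux ev hev x hx f g

variable (ev : R →+* C) (hev : ∀ b, ‖ev b‖ ≤ 1) (x : σ → C) (hx : ∀ i, ‖x i‖ < 1)

theorem evalHom_apply (f : MvPowerSeries σ R) : evalHom ev hev x hx f =
    ∑' κ : σ →₀ ℕ, ev (MvPowerSeries.coeff κ f) * ∏ i, x i ^ κ i := rfl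

theorem evalHom_monomial (κ : σ →₀ ℕ) (b : R) :
    evalHom ev hev x hx (MvPowerSeries.monomial κ b) = ev b * ∏ i, x i ^ κ i := by
  classical
  rw [evalHom_apply, tsum_eq_single κ]
  · simp
  · intro κ' hκ
    simp [MvPowerSeries.coeff_monomial, hκ]

@[simp] theorem evalHom_C (b : R) : evalHom ev hev x hx (MvPowerSeries.C b) = ev b := by
  have := evalHom_monomial ev hev x hx 0 b
  simpa using this

@[simp] theorem evalHom_X (i : σ) : evalHom ev hev x hx (MvPowerSeries.X i) = x i := by
  classical
  rw [MvPowerSeries.X, evalHom_monomial]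
  simp [Finsupp.single_apply, Finset.prod_ite_eq]

theorem norm_evalHom_le (f : MvPowerSeries σ R) : ‖evalHom ev hev x hx f‖ ≤ 1 := by
  rw [evalHom_apply]
  refine IsUltrametricDist.norm_tsum_le_of_forall_le_of_nonneg zero_le_one fun κ => ?_
  rw [norm_mul]
  refine mul_le_one₀ (hev _) (norm_nonneg _) ?_
  refine (prod_pow_norm_le (r := 1) (fun i => (hx i).le) κ).trans (by simp)

theorem norm_evalHom_lt (f : MvPowerSeries σ R) (hf : MvPowerSeries.constantCoeff f = 0) :
    ‖evalHom ev hev x hx f‖ < 1 := by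
  obtain ⟨r, hr0, hr1, hr⟩ := exists_bound_lt_one hx
  refine lt_of_le_of_lt ?_ hr1
  rw [evalHom_apply]
  refine IsUltrametricDist.norm_tsum_le_of_forall_le_of_nonneg hr0 fun κ => ?_
  by_cases hκ : κ = 0
  · subst hκ; simp [hf, hr0]
  rw [norm_mul]
  calc _ ≤ 1 * r ^ κ.degree := mul_le_mul (hev _) (prod_pow_norm_le hr κ) (norm_nonneg _) zero_le_one
    _ ≤ r := by
      rw [one_mul]
      refine pow_le_of_le_one hr0 hr1.le ?_
      rwa [Ne, Finsupp.degree_eq_zero_iff]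

theorem norm_evalHom_eq_one (f : MvPowerSeries σ R) (hf : MvPowerSeries.constantCoeff f = 1) :
    ‖evalHom ev hev x hx f‖ = 1 := by
  have h1 : f = 1 + (f - 1) := by ring
  rw [h1, map_add, map_one]
  have h2 : ‖evalHom ev hev x hx (f - 1)‖ < 1 := norm_evalHom_lt _ _ _ _ _ (by simp [hf])
  rw [IsUltrametricDist.norm_add_eq_max_of_norm_ne_norm (by rw [norm_one]; exact h2.ne'), norm_one,
    max_eq_left h2.le]

end Eval

section Uniq

open PowerSeries

variable {C : Type*} [NormedField C] [IsUltrametricDist C]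

/-- The terms of degree at most `j` of `F` are bounded by `r` for the Gauss norm of radius `ρ`. -/
def GaussLe (ρ : ℝ) (j : ℕ) (r : ℝ) (F : PowerSeries C) : Prop :=
  ∀ a ≤ j, ‖coeff a F‖ * ρ ^ a ≤ r

theorem GaussLe.mul {ρ : ℝ} (hρ : 0 ≤ ρ) {j : ℕ} {r r' : ℝ} (hr : 0 ≤ r) (hr' : 0 ≤ r')
    {F F' : PowerSeries C} (h : GaussLe ρ j r F) (h' : GaussLe ρ j r' F') :
    GaussLe ρ j (r * r') (F * F') := by
  intro a ha
  rw [PowerSeries.coeff_mul]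
  obtain ⟨p, hp, hle⟩ := IsUltrametricDist.exists_norm_finsetSum_le_of_nonempty
    (t := Finset.HasAntidiagonal.antidiagonal a) ⟨(0, a), by simp⟩ (fun p => coeff p.1 F * coeff p.2 F')
  have hpa := Finset.HasAntidiagonal.mem_antidiagonal.1 hp
  calc _ ≤ ‖coeff p.1 F * coeff p.2 F'‖ * ρ ^ a := by gcongr
    _ = (‖coeff p.1 F‖ * ρ ^ p.1) * (‖coeff p.2 F'‖ * ρ ^ p.2) := by
        rw [norm_mul, ← hpa, pow_add]; ring
    _ ≤ r * r' := mul_le_mul (h _ (by omega)) (h' _ (by omega)) (by positivity) hr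

theorem GaussLe.add {ρ : ℝ} (hρ : 0 ≤ ρ) {j : ℕ} {r : ℝ}
    {F F' : PowerSeries C} (h : GaussLe ρ j r F) (h' : GaussLe ρ j r F') :
    GaussLe ρ j r (F + F') := by
  intro a ha
  rw [map_add]
  have := IsUltrametricDist.norm_add_le_max (coeff a F) (coeff a F')
  have := mul_le_mul_of_nonneg_right this (pow_nonneg hρ a)
  refine this.trans ?_
  rcases max_choice ‖coeff a F‖ ‖coeff a F'‖ with e | e <;> rw [e]
  · exact h a ha
  · exact h' a ha

/-- A homomorphism into `C⟦X⟧` each of whose coefficient functionals is bounded. -/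
def CoeffBdd {R : Type*} [CommRing R] (Ψ : R →+* PowerSeries C) : Prop :=
  ∀ j, ∃ K : ℝ, ∀ f, ‖coeff j (Ψ f)‖ ≤ K

theorem CoeffBdd.comp {R R' : Type*} [CommRing R] [CommRing R'] {Ψ : R →+* PowerSeries C}
    (h : CoeffBdd Ψ) (φ : R' →+* R) : CoeffBdd (Ψ.comp φ) := fun j =>
  let ⟨K, hK⟩ := h j
  ⟨K, fun f => hK _⟩

theorem CoeffBdd.of_C {R : Type*} [CommRing R] {φ : R →+* C} (h : ∀ f, ‖φ f‖ ≤ 1) :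
    CoeffBdd ((PowerSeries.C (R := C)).comp φ) := fun j => by
  refine ⟨1, fun f => ?_⟩
  rw [RingHom.comp_apply, PowerSeries.coeff_C]
  split_ifs
  · exact h f
  · simp

theorem CoeffBdd.exists_gaussLe {R : Type*} [CommRing R] {Ψ : R →+* PowerSeries C}
    (h : CoeffBdd Ψ) (ρ : ℝ) (hρ : 0 ≤ ρ) (j : ℕ) : ∃ K : ℝ, 0 ≤ K ∧ ∀ f, GaussLe ρ j K (Ψ f) := by
  choose K hK using h
  refine ⟨∑ a ∈ Finset.range (j+1), |K a| * ρ ^ a, Finset.sum_nonneg fun a _ => by positivity, ?_⟩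
  intro f a ha
  calc _ ≤ |K a| * ρ ^ a := by
        gcongr
        exact (hK a f).trans (le_abs_self _)
    _ ≤ _ := Finset.single_le_sum (f := fun a => |K a| * ρ ^ a) (fun a _ => by positivity)
        (Finset.mem_range.2 (by omega))

theorem exists_gauss_radius {ι : Type*} [Finite ι] (F : ι → PowerSeries C)
    (hF : ∀ i, ‖constantCoeff (F i)‖ < 1) (j : ℕ) :
    ∃ ρ : ℝ, 0 < ρ ∧ ∃ r : ℝ, 0 ≤ r ∧ r < 1 ∧ ∀ i, GaussLe ρ j r (F i) := by
  cases nonempty_fintype ι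
  obtain ⟨r, hr0, hr1, hr⟩ := exists_bound_lt_one (x := fun i => constantCoeff (F i)) hF
  -- any radius below `r' / K`, with `K` bounding the higher coefficients, will do
  set K : ℝ := 1 + ∑ i, ∑ a ∈ Finset.range (j+1), ‖coeff a (F i)‖ with hK
  have hK1 : 1 ≤ K := by
    have : 0 ≤ ∑ i, ∑ a ∈ Finset.range (j+1), ‖coeff a (F i)‖ := by positivity
    linarith
  have hKle : ∀ i, ∀ a ≤ j, ‖coeff a (F i)‖ ≤ K := by
    intro i a ha
    have h1 : ‖coeff a (F i)‖ ≤ ∑ a ∈ Finset.range (j+1), ‖coeff a (F i)‖ :=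
      Finset.single_le_sum (f := fun a => ‖coeff a (F i)‖) (fun a _ => by positivity)
        (Finset.mem_range.2 (by omega))
    have h2 : ∑ a ∈ Finset.range (j+1), ‖coeff a (F i)‖ ≤
        ∑ i, ∑ a ∈ Finset.range (j+1), ‖coeff a (F i)‖ :=
      Finset.single_le_sum (f := fun i => ∑ a ∈ Finset.range (j+1), ‖coeff a (F i)‖)
        (fun a _ => by positivity) (Finset.mem_univ i)
    linarith
  set r' := (1 + r) / 2
  have hr' : r ≤ r' ∧ r' < 1 ∧ 0 < r' := by
    simp only [r']; refine ⟨by linarith, by linarith, by linarith⟩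
  have hKpos : 0 < K := by linarith
  refine ⟨r' / K, div_pos hr'.2.2 hKpos, r', hr'.2.2.le, hr'.2.1, fun i a ha => ?_⟩
  rcases Nat.eq_zero_or_pos a with rfl | hapos
  · have := hr i
    rw [PowerSeries.coeff_zero_eq_constantCoeff, pow_zero, mul_one]
    exact this.trans hr'.1
  · have h1 : r' / K ≤ 1 := by rw [div_le_one hKpos]; linarith [hr'.2.1]
    have h2 : (r' / K) ^ a ≤ r' / K := pow_le_of_le_one (div_pos hr'.2.2 hKpos).le h1 hapos.ne'
    calc _ ≤ K * (r' / K) := by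
            gcongr
            · exact hKle i a ha
      _ = r' := by field_simp

/-- A coefficientwise bounded homomorphism carries deep powers of an ideal of topologically
nilpotent elements close to zero. -/
theorem CoeffBdd.eq_zero_of_mem_pow {R : Type*} [CommRing R] {Ψ : R →+* PowerSeries C}
    (h : CoeffBdd Ψ) {ι : Type*} [Finite ι] (t : ι → R)
    (ht : ∀ i, ‖constantCoeff (Ψ (t i))‖ < 1) (j : ℕ) :
    ∃ ρ : ℝ, 0 < ρ ∧ ∃ r : ℝ, 0 ≤ r ∧ r < 1 ∧ ∃ K : ℝ, 0 ≤ K ∧ ∀ N, ∀ f ∈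
      (Ideal.span (Set.range t)) ^ N, GaussLe ρ j (r ^ N * K) (Ψ f) := by
  obtain ⟨ρ, hρ, r, hr0, hr1, hr⟩ := exists_gauss_radius (fun i => Ψ (t i)) ht j
  obtain ⟨K, hK0, hK⟩ := h.exists_gaussLe ρ hρ.le j
  refine ⟨ρ, hρ, r, hr0, hr1, K, hK0, fun N => ?_⟩
  induction N with
  | zero => intro f _; simpa using hK f
  | succ N ih =>
    intro f hf
    rw [pow_succ'] at hf
    refine Submodule.mul_induction_on hf (fun a ha b hb => ?_) (fun a b ha hb => ?_)
    · -- `a` itself is a combination of the generators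
      have key : ∀ b ∈ (Ideal.span (Set.range t)) ^ N, GaussLe ρ j (r ^ (N+1) * K) (Ψ (a * b)) := by
        refine Submodule.span_induction (p := fun a _ => ∀ b ∈ (Ideal.span (Set.range t)) ^ N,
          GaussLe ρ j (r ^ (N+1) * K) (Ψ (a * b))) ?_ ?_ ?_ ?_ ha
        · rintro _ ⟨i, rfl⟩ b hb
          rw [map_mul, pow_succ', mul_assoc]
          exact (hr i).mul hρ.le hr0 (by positivity) (ih b hb)
        · intro b _ a _
          simp; positivity
        · intro x y _ _ hx hy b hb
          rw [add_mul, map_add]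
          exact (hx b hb).add hρ.le (hy b hb)
        · intro c x _ hx b hb
          have : c • x * b = x * (c * b) := by rw [smul_eq_mul]; ring
          rw [this]
          exact hx _ (Ideal.mul_mem_left _ _ hb)
      exact key b hb
    · rw [map_add]; exact ha.add hρ.le hb

theorem PowerSeries.eq_zero_of_gaussLe {F : PowerSeries C}
    (h : ∀ j, ∃ ρ : ℝ, 0 < ρ ∧ ∃ r : ℝ, 0 ≤ r ∧ r < 1 ∧ ∃ K : ℝ, ∃ N₀ : ℕ, ∀ N ≥ N₀,
      GaussLe ρ j (r ^ N * K) F) : F = 0 := by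
  ext j
  obtain ⟨ρ, hρ, r, hr0, hr1, K, N₀, hN⟩ := h j
  have h1 : Tendsto (fun N => r ^ N * K) atTop (𝓝 (0 * K)) :=
    (tendsto_pow_atTop_nhds_zero_of_lt_one hr0 hr1).mul_const K
  rw [zero_mul] at h1
  have h2 : ‖coeff j F‖ * ρ ^ j ≤ 0 :=
    ge_of_tendsto h1 (eventually_atTop.2 ⟨N₀, fun N hNN => hN N hNN j le_rfl⟩)
  have h3 : ‖coeff j F‖ ≤ 0 := by
    by_contra h
    push Not at h
    have : 0 < ‖coeff j F‖ * ρ ^ j := by positivity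
    linarith
  rw [map_zero]
  exact norm_le_zero_iff.1 h3

variable {σ : Type*} [Fintype σ] {R : Type*} [CommRing R]

/-- A coefficientwise bounded homomorphism out of a power series ring is determined by its values
on the constants and the variables. -/
theorem CoeffBdd.ext {Ψ Ψ' : MvPowerSeries σ R →+* PowerSeries C} (h : CoeffBdd Ψ)
    (h' : CoeffBdd Ψ') (hC : ∀ b, Ψ (MvPowerSeries.C b) = Ψ' (MvPowerSeries.C b))
    (hX : ∀ i, Ψ (MvPowerSeries.X i) = Ψ' (MvPowerSeries.X i))
    (hlt : ∀ i, ‖constantCoeff (Ψ (MvPowerSeries.X i))‖ < 1) : Ψ = Ψ' := by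
  have hlt' : ∀ i, ‖constantCoeff (Ψ' (MvPowerSeries.X i))‖ < 1 := fun i => by rw [← hX]; exact hlt i
  have hpoly : ∀ q : MvPolynomial σ R, Ψ (q : MvPowerSeries σ R) = Ψ' (q : MvPowerSeries σ R) := by
    intro q
    have : (Ψ.comp (MvPolynomial.coeToMvPowerSeries.ringHom)) =
        (Ψ'.comp (MvPolynomial.coeToMvPowerSeries.ringHom)) := by
      apply MvPolynomial.ringHom_ext
      · intro b; simpa using hC b
      · intro i; simpa using hX i
    exact congrArg (fun φ => φ q) this
  apply RingHom.ext
  intro f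
  rw [← sub_eq_zero]
  apply PowerSeries.eq_zero_of_gaussLe
  intro j
  obtain ⟨ρ, hρ, r, hr0, hr1, hr⟩ := exists_gauss_radius
    (fun i => Ψ (MvPowerSeries.X i)) hlt j
  -- both homomorphisms are estimated at a common radius
  obtain ⟨K, hK0, hK⟩ := h.exists_gaussLe ρ hρ.le j
  obtain ⟨K', hK0', hK'⟩ := h'.exists_gaussLe ρ hρ.le j
  have aux : ∀ (Φ : MvPowerSeries σ R →+* PowerSeries C) (L : ℝ), 0 ≤ L →
      (∀ f, GaussLe ρ j L (Φ f)) → (∀ i, GaussLe ρ j r (Φ (MvPowerSeries.X i))) →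
      ∀ N, ∀ f ∈ (Ideal.span (Set.range (MvPowerSeries.X : σ → MvPowerSeries σ R))) ^ N,
        GaussLe ρ j (r ^ N * L) (Φ f) := by
    intro Φ L hL0 hL hX N
    induction N with
    | zero => intro f _; simpa using hL f
    | succ N ih =>
      intro f hf
      rw [pow_succ'] at hf
      refine Submodule.mul_induction_on hf (fun a ha b hb => ?_) (fun a b ha hb => ?_)
      · refine Submodule.span_induction (p := fun a _ => ∀ b ∈ (Ideal.span (Set.range
          MvPowerSeries.X)) ^ N, GaussLe ρ j (r ^ (N+1) * L) (Φ (a * b))) ?_ ?_ ?_ ?_ ha b hb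
        · rintro _ ⟨i, rfl⟩ b hb
          rw [map_mul, pow_succ', mul_assoc]
          exact (hX i).mul hρ.le hr0 (by positivity) (ih b hb)
        · intro b _ a _
          simp; positivity
        · intro x y _ _ hx hy b hb
          rw [add_mul, map_add]
          exact (hx b hb).add hρ.le (hy b hb)
        · intro c x _ hx b hb
          have : c • x * b = x * (c * b) := by rw [smul_eq_mul]; ring
          rw [this]
          exact hx _ (Ideal.mul_mem_left _ _ hb)
      · rw [map_add]; exact ha.add hρ.le hb
  refine ⟨ρ, hρ, r, hr0, hr1, max K K', 0, fun N _ => ?_⟩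
  set q := MvPowerSeries.truncTotal N f
  have hq : f - (q : MvPowerSeries σ R) ∈
      (Ideal.span (Set.range (MvPowerSeries.X : σ → MvPowerSeries σ R))) ^ N := by
    apply mem_pow_span_X_of_coeff
    intro κ hκ
    rw [map_sub, MvPolynomial.coeff_coe, MvPowerSeries.coeff_truncTotal _ hκ, sub_self]
  have e : Ψ f - Ψ' f = Ψ (f - q) + Ψ' (-(f - q)) := by
    rw [map_neg, map_sub, map_sub, hpoly q]; ring
  rw [e]
  refine GaussLe.add hρ.le ?_ ?_
  · exact aux Ψ _ (hK0.trans (le_max_left _ _)) (fun f a ha => (hK f a ha).trans (le_max_left _ _))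
      hr N _ hq
  · exact aux Ψ' _ (hK0.trans (le_max_left _ _))
      (fun f a ha => (hK' f a ha).trans (le_max_right _ _)) (fun i => by rw [← hX]; exact hr i) N _
      (Ideal.neg_mem_iff _ |>.2 hq)

/-- Scalar version of `CoeffBdd.ext`. -/
theorem hom_ext_of_norm_le {φ φ' : MvPowerSeries σ R →+* C} (h : ∀ f, ‖φ f‖ ≤ 1)
    (h' : ∀ f, ‖φ' f‖ ≤ 1) (hC : ∀ b, φ (MvPowerSeries.C b) = φ' (MvPowerSeries.C b))
    (hX : ∀ i, φ (MvPowerSeries.X i) = φ' (MvPowerSeries.X i))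
    (hlt : ∀ i, ‖φ (MvPowerSeries.X i)‖ < 1) : φ = φ' := by
  have := CoeffBdd.ext (CoeffBdd.of_C h) (CoeffBdd.of_C h') (by simp [hC]) (by simp [hX])
    (by simpa using hlt)
  apply RingHom.ext
  intro f
  have := congrArg (fun Φ => PowerSeries.constantCoeff (Φ f)) this
  simpa using this

end Uniq

/-! ### Homogeneous components of power series -/

section Graded

variable {σ : Type*} {R : Type*} [CommRing R] {Γ : Type*} [AddCommMonoid Γ]
  (wt : (σ →₀ ℕ) →+ Γ)

open Classical in
/-- The component of weight `γ` of a power series. -/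
noncomputable def wcomp (γ : Γ) (f : MvPowerSeries σ R) : MvPowerSeries σ R :=
  fun κ => if wt κ = γ then MvPowerSeries.coeff κ f else 0

open Classical in
theorem coeff_wcomp (γ : Γ) (f : MvPowerSeries σ R) (κ : σ →₀ ℕ) :
    MvPowerSeries.coeff κ (wcomp wt γ f) = if wt κ = γ then MvPowerSeries.coeff κ f else 0 := rfl

/-- Over a noetherian ring a power series is a combination, with coefficients of constant term `1`,
of finitely many of its weight components; these generate all the components. -/
theorem graded_decomp [Finite σ] [IsNoetherianRing R] (f : MvPowerSeries σ R) :
    ∃ (T : Finset Γ) (F : Γ → MvPowerSeries σ R),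
      (∀ h ∈ T, MvPowerSeries.constantCoeff (F h) = 1) ∧
      f = ∑ h ∈ T, wcomp wt h f * F h ∧
      ∀ γ, wcomp wt γ f ∈ Ideal.span ((fun h => wcomp wt h f) '' (T : Set Γ)) := by
  classical
  have hfg : (Ideal.span (Set.range fun h => wcomp wt h f)).FG := IsNoetherian.noetherian _
  obtain ⟨s, hs, hspan⟩ := (Submodule.fg_span_iff_fg_span_finset_subset _).1 hfg
  obtain ⟨T, hT⟩ : ∃ T : Finset Γ, T.image (fun h => wcomp wt h f) = s := by
    obtain ⟨T, -, hT⟩ := Finset.subset_set_image_iff.1 (show (s : Set _) ⊆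
      (fun h => wcomp wt h f) '' Set.univ by rwa [Set.image_univ])
    exact ⟨T, hT⟩
  have hmem : ∀ γ, wcomp wt γ f ∈ Ideal.span ((fun h => wcomp wt h f) '' (T : Set Γ)) := by
    intro γ
    have h1 : wcomp wt γ f ∈ Ideal.span (Set.range fun h => wcomp wt h f) :=
      Ideal.subset_span ⟨γ, rfl⟩
    rw [← Finset.coe_image, hT]
    have h2 : Ideal.span (Set.range fun h => wcomp wt h f) = Ideal.span (s : Set _) := hspan
    rw [← h2]; exact h1
  have ha : ∀ γ, ∃ a : Γ → MvPowerSeries σ R, wcomp wt γ f = ∑ h ∈ T, a h * wcomp wt h f := by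
    intro γ
    obtain ⟨a, ha⟩ := (Submodule.mem_span_image_finset_iff_exists_fun' (MvPowerSeries σ R)).1 (hmem γ)
    exact ⟨a, ha.symm⟩
  choose a ha using ha
  let F : Γ → MvPowerSeries σ R := fun h κ =>
    if wt κ + h ∈ T then (if κ = 0 then 1 else 0) else MvPowerSeries.coeff κ (a (wt κ + h) h)
  have hF : ∀ h κ, MvPowerSeries.coeff κ (F h) =
    if wt κ + h ∈ T then (if κ = 0 then 1 else 0) else MvPowerSeries.coeff κ (a (wt κ + h) h) :=
    fun h κ => rfl
  refine ⟨T, F, fun h hh => ?_, ?_, hmem⟩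
  · rw [← MvPowerSeries.coeff_zero_eq_constantCoeff_apply, hF]
    simp [hh]
  · ext κ
    rw [map_sum]
    by_cases hκ : wt κ ∈ T
    · -- only the component of weight `wt κ`, with trivial cofactor, contributes
      have : ∀ h ∈ T, MvPowerSeries.coeff κ (wcomp wt h f * F h) =
          if h = wt κ then MvPowerSeries.coeff κ f else 0 := by
        intro h hh
        rw [MvPowerSeries.coeff_mul, Finset.sum_eq_single (κ, 0)]
        · rw [coeff_wcomp, hF]
          simp only [map_zero, zero_add, hh, if_true, mul_one]
          simp only [eq_comm]
        · rintro ⟨p, q⟩ hpq hne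
          have hpq' : p + q = κ := Finset.HasAntidiagonal.mem_antidiagonal.1 hpq
          rw [coeff_wcomp, hF]
          by_cases hp : wt p = h
          · have : wt q + h = wt κ := by rw [← hpq', map_add, hp, add_comm]
            simp only [this, hκ, if_true]
            have hq : q ≠ 0 := by
              rintro rfl
              apply hne
              simp only [add_zero] at hpq'
              rw [hpq']
            simp [hq]
          · simp [hp]
        · intro h'
          exact (h' (by simp)).elim
      rw [Finset.sum_congr rfl this]
      simp [hκ]
    · have : ∀ h ∈ T, MvPowerSeries.coeff κ (wcomp wt h f * F h) =
          MvPowerSeries.coeff κ (a (wt κ) h * wcomp wt h f) := by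
        intro h hh
        rw [mul_comm (a _ _), MvPowerSeries.coeff_mul, MvPowerSeries.coeff_mul]
        refine Finset.sum_congr rfl ?_
        rintro ⟨p, q⟩ hpq
        have hpq' : p + q = κ := Finset.HasAntidiagonal.mem_antidiagonal.1 hpq
        rw [coeff_wcomp, hF]
        by_cases hp : wt p = h
        · have : wt q + h = wt κ := by rw [← hpq', map_add, hp, add_comm]
          simp only [this, hκ, if_false]
        · simp [hp]
      rw [Finset.sum_congr rfl this, ← map_sum, ← ha, coeff_wcomp, if_pos rfl]

end Graded

/-! ### Extension of arcs by Hensel's lemma, and Weierstrass division -/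

section Extension

variable {C : Type*} [NormedField C] [IsUltrametricDist C]

theorem isUnit_of_constantCoeff_ne_zero {F : PowerSeries C}
    (h : PowerSeries.constantCoeff F ≠ 0) : IsUnit F :=
  PowerSeries.isUnit_iff_constantCoeff.2 h.isUnit

/-- Hensel's lemma in `C⟦X⟧`, for a polynomial with invertible leading coefficient. -/
theorem hensel_powerSeries (H : Polynomial (PowerSeries C))
    (hlc : PowerSeries.constantCoeff H.leadingCoeff ≠ 0) (c : C)
    (h0 : PowerSeries.constantCoeff (H.eval (PowerSeries.C c)) = 0)
    (h1 : PowerSeries.constantCoeff (H.derivative.eval (PowerSeries.C c)) ≠ 0) :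
    ∃ y : PowerSeries C, H.eval y = 0 ∧ PowerSeries.constantCoeff y = c := by
  obtain ⟨u, hu⟩ := isUnit_of_constantCoeff_ne_zero hlc
  have hmonic : (Polynomial.C (↑u⁻¹ : PowerSeries C) * H).Monic := by
    rw [Polynomial.Monic, Polynomial.leadingCoeff_mul, Polynomial.leadingCoeff_C, ← hu]
    simp
  have huinv : IsUnit (↑u⁻¹ : PowerSeries C) := u⁻¹.isUnit
  obtain ⟨y, hy, hyc⟩ := HenselianRing.is_henselian (I := Ideal.span {(PowerSeries.X : PowerSeries C)})
    _ hmonic (PowerSeries.C c)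
    (by
      rw [Ideal.mem_span_singleton, PowerSeries.X_dvd_iff, Polynomial.eval_mul, map_mul, h0, mul_zero])
    (by
      apply IsUnit.map
      rw [Polynomial.derivative_C_mul, Polynomial.eval_mul, Polynomial.eval_C]
      exact huinv.mul (isUnit_of_constantCoeff_ne_zero h1))
  refine ⟨y, ?_, ?_⟩
  · rw [Polynomial.IsRoot, Polynomial.eval_mul, Polynomial.eval_C] at hy
    exact (huinv.mul_right_eq_zero).1 hy
  · rw [Ideal.mem_span_singleton, PowerSeries.X_dvd_iff, map_sub, sub_eq_zero] at hyc
    simpa using hyc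

/-- Flows extend along a generically finite extension: if `W` is, modulo a prime `PW`, generated by
one element integral over `N`, a homomorphism `N → C⟦X⟧` lifting a generic point extends to `W`. -/
theorem extend_flow {N W : Type*} [CommRing N] [CommRing W] (ρ : Polynomial N →+* W)
    (PW : Ideal W) [PW.IsPrime] (hnat : ∀ k : ℕ, k ≠ 0 → (k : W) ∉ PW)
    (Q : Polynomial N) (hQ : Q.Monic) (hQP : ρ Q ∈ PW) (e : ℕ)
    (hrep : ∀ f : W, ∃ r : Polynomial N, r.degree < e ∧ f - ρ r ∈ PW) :
    ∃ h : Polynomial N, ρ (Polynomial.C h.leadingCoeff) ∉ PW ∧ ρ h.derivative ∉ PW ∧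
      ∀ (evW : W →+* C), (∀ f ∈ PW, evW f = 0) → evW (ρ (Polynomial.C h.leadingCoeff)) ≠ 0 →
        evW (ρ h.derivative) ≠ 0 → ∀ Ψ' : N →+* PowerSeries C, CoeffBdd Ψ' →
        (∀ a, PowerSeries.constantCoeff (Ψ' a) = evW (ρ (Polynomial.C a))) →
        (∀ a, ρ (Polynomial.C a) ∈ PW → Ψ' a = 0) →
        ∃ Ψ : W →+* PowerSeries C, CoeffBdd Ψ ∧ (∀ f ∈ PW, Ψ f = 0) ∧
          (∀ f, PowerSeries.constantCoeff (Ψ f) = evW f) ∧ ∀ a, Ψ (ρ (Polynomial.C a)) = Ψ' a := by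
  classical
  let Good : Polynomial N → Prop := fun h => ρ h ∈ PW ∧ ∃ j, ρ (Polynomial.C (h.coeff j)) ∉ PW
  have hone : (1 : W) ∉ PW := fun h => Ideal.IsPrime.ne_top inferInstance ((Ideal.eq_top_iff_one PW).2 h)
  have hex : ∃ n, ∃ h, Good h ∧ h.natDegree = n := by
    refine ⟨_, Q, ⟨hQP, Q.natDegree, ?_⟩, rfl⟩
    rw [← Polynomial.leadingCoeff, hQ.leadingCoeff, map_one, map_one]
    exact hone
  obtain ⟨h, hgood, hdeg⟩ := Nat.find_spec hex
  have hmin : ∀ f : Polynomial N, ρ f ∈ PW → f.natDegree < h.natDegree →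
      ∀ j, ρ (Polynomial.C (f.coeff j)) ∈ PW := by
    intro f hf hlt j
    by_contra hj
    exact Nat.find_min hex (hdeg ▸ hlt) ⟨f, ⟨hf, j, hj⟩, rfl⟩
  have hpos : 0 < h.natDegree := by
    rw [Nat.pos_iff_ne_zero]
    intro h0
    obtain ⟨hP, j, hj⟩ := hgood
    rw [Polynomial.eq_C_of_natDegree_eq_zero h0] at hP hj
    rw [Polynomial.coeff_C] at hj
    split_ifs at hj
    · exact hj hP
    · simp at hj
  have hlc : ρ (Polynomial.C h.leadingCoeff) ∉ PW := by
    intro hl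
    obtain ⟨hP, j, hj⟩ := hgood
    have h1 : ρ h.eraseLead ∈ PW := by
      have := Polynomial.eraseLead_add_C_mul_X_pow h
      have h2 : ρ h.eraseLead = ρ h - ρ (Polynomial.C h.leadingCoeff) * ρ (Polynomial.X ^ h.natDegree) := by
        rw [← map_mul, ← map_sub]; congr 1; rw [eq_sub_iff_add_eq]; exact this
      rw [h2]
      exact PW.sub_mem hP (PW.mul_mem_right _ hl)
    have h3 : j ≠ h.natDegree := by rintro rfl; exact hj hl
    have h4 := hmin _ h1 (lt_of_le_of_lt (Polynomial.eraseLead_natDegree_le h) (by omega)) j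
    rw [Polynomial.eraseLead_coeff_of_ne _ h3] at h4
    exact hj h4
  have hder : ρ h.derivative ∉ PW := by
    intro hd
    have h1 := hmin _ hd (Polynomial.natDegree_derivative_lt hpos.ne') (h.natDegree - 1)
    rw [Polynomial.coeff_derivative, Nat.sub_add_cancel hpos, map_mul, map_mul] at h1
    rcases Ideal.IsPrime.mem_or_mem inferInstance h1 with h2 | h2
    · exact hlc h2
    · have h3 : ((((h.natDegree - 1 : ℕ) : N) + 1)) = ((h.natDegree : ℕ) : N) := by
        rw [← Nat.cast_succ, Nat.succ_eq_add_one, Nat.sub_add_cancel hpos]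
      rw [h3, map_natCast, map_natCast] at h2
      exact hnat _ hpos.ne' h2
  refine ⟨h, hlc, hder, fun evW hev hev1 hev2 Ψ' hb hconst hkill => ?_⟩
  -- the root of `h` deforms along `Ψ'` by Hensel's lemma
  set c : C := evW (ρ Polynomial.X) with hc
  have hcomp : ∀ f : Polynomial N,
      PowerSeries.constantCoeff ((f.map Ψ').eval (PowerSeries.C c)) = evW (ρ f) := by
    intro f
    rw [Polynomial.eval_map]
    have : (PowerSeries.constantCoeff.comp (Polynomial.eval₂RingHom Ψ' (PowerSeries.C c))) =
        evW.comp ρ := by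
      apply Polynomial.ringHom_ext
      · intro a; simpa using hconst a
      · simp [hc]
    exact congrArg (fun φ => φ f) this
  have hΨlc : Ψ' h.leadingCoeff ≠ 0 := by
    intro h0
    apply hev1
    rw [← hconst, h0, map_zero]
  have hlead : (h.map Ψ').leadingCoeff = Ψ' h.leadingCoeff :=
    Polynomial.leadingCoeff_map_of_leadingCoeff_ne_zero _ hΨlc
  obtain ⟨y, hy, hyc⟩ := hensel_powerSeries (h.map Ψ') (by rw [hlead, hconst]; exact hev1) c
    (by rw [hcomp]; exact hev _ hgood.1)
    (by rw [Polynomial.derivative_map, hcomp]; exact hev2)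
  set Φ : Polynomial N →+* PowerSeries C := Polynomial.eval₂RingHom Ψ' y with hΦ
  have hΦC : ∀ a, Φ (Polynomial.C a) = Ψ' a := fun a => by simp [hΦ]
  have hΦh : Φ h = 0 := by rw [hΦ, Polynomial.coe_eval₂RingHom, ← Polynomial.eval_map]; exact hy
  have hΦconst : ∀ f, PowerSeries.constantCoeff (Φ f) = evW (ρ f) := by
    intro f
    have : (PowerSeries.constantCoeff.comp Φ) = evW.comp ρ := by
      apply Polynomial.ringHom_ext
      · intro a; simpa [hΦ] using hconst a
      · simp [hΦ, hyc, hc]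
    exact congrArg (fun φ => φ f) this
  have hsmall : ∀ f : Polynomial N, (∀ j, ρ (Polynomial.C (f.coeff j)) ∈ PW) → Φ f = 0 := by
    intro f hf
    rw [f.as_sum_range_C_mul_X_pow, map_sum]
    refine Finset.sum_eq_zero fun j _ => ?_
    rw [map_mul, hΦC, hkill _ (hf j), zero_mul]
  have hΦkill : ∀ n : ℕ, ∀ f : Polynomial N, f.degree < n → ρ f ∈ PW → Φ f = 0 := by
    intro n
    induction n with
    | zero =>
      intro f hf _
      have : f = 0 := by
        rw [← Polynomial.degree_eq_bot]
        simpa using hf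
      rw [this, map_zero]
    | succ n ih =>
      intro f hf hfP
      by_cases hn : n < h.natDegree
      · apply hsmall
        apply hmin _ hfP
        by_cases hf0 : f = 0
        · rw [hf0]; simpa using hpos
        · have := (Polynomial.natDegree_lt_iff_degree_lt hf0).2 hf
          omega
      · push Not at hn
        set f1 := Polynomial.C h.leadingCoeff * f -
          Polynomial.C (f.coeff n) * (Polynomial.X ^ (n - h.natDegree) * h) with hf1
        have hdeg1 : f1.degree < n := by
          rw [Polynomial.degree_lt_iff_coeff_zero]
          intro m hm
          rw [hf1, Polynomial.coeff_sub, Polynomial.coeff_C_mul, Polynomial.coeff_C_mul,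
            Polynomial.coeff_X_pow_mul', if_pos (by omega)]
          rcases hm.eq_or_lt with rfl | hm
          · have : n - (n - h.natDegree) = h.natDegree := by omega
            rw [this, Polynomial.coeff_natDegree]; ring
          · rw [(Polynomial.degree_lt_iff_coeff_zero _ _).1 hf m (by omega),
              Polynomial.coeff_eq_zero_of_natDegree_lt (p := h) (by omega)]
            simp
        have hP1 : ρ f1 ∈ PW := by
          rw [hf1, map_sub, map_mul, map_mul, map_mul]
          exact PW.sub_mem (PW.mul_mem_left _ hfP) (PW.mul_mem_left _ (PW.mul_mem_left _ hgood.1))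
        have := ih f1 hdeg1 hP1
        rw [hf1, map_sub, map_mul, map_mul, map_mul, hΦh, hΦC, mul_zero, mul_zero, sub_zero] at this
        exact (mul_eq_zero.1 this).resolve_left hΨlc
  have hΦkill' : ∀ f, ρ f ∈ PW → Φ f = 0 := fun f hf =>
    hΦkill (f.natDegree + 1) f (by
      refine lt_of_le_of_lt Polynomial.degree_le_natDegree ?_
      exact_mod_cast Nat.lt_succ_self _) hf
  choose rem hremdeg hrem using hrep
  have hwell : ∀ f r, f - ρ r ∈ PW → Φ (rem f) = Φ r := by
    intro f r hr
    rw [← sub_eq_zero, ← map_sub]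
    apply hΦkill'
    rw [map_sub]
    have : ρ (rem f) - ρ r = (f - ρ r) - (f - ρ (rem f)) := by ring
    rw [this]
    exact PW.sub_mem hr (hrem f)
  let Ψ : W →+* PowerSeries C :=
    { toFun := fun f => Φ (rem f)
      map_one' := by rw [hwell 1 1 (by simp), map_one]
      map_zero' := by rw [hwell 0 0 (by simp), map_zero]
      map_add' := fun f g => by
        rw [hwell (f + g) (rem f + rem g), map_add]
        have : f + g - ρ (rem f + rem g) = (f - ρ (rem f)) + (g - ρ (rem g)) := by
          rw [map_add]; ring
        rw [this]
        exact PW.add_mem (hrem f) (hrem g)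
      map_mul' := fun f g => by
        rw [hwell (f * g) (rem f * rem g), map_mul]
        have : f * g - ρ (rem f * rem g) = (f - ρ (rem f)) * g + ρ (rem f) * (g - ρ (rem g)) := by
          rw [map_mul]; ring
        rw [this]
        exact PW.add_mem (PW.mul_mem_right _ (hrem f)) (PW.mul_mem_left _ (hrem g)) }
  have hΨ : ∀ f, Ψ f = Φ (rem f) := fun f => rfl
  refine ⟨Ψ, ?_, ?_, ?_, ?_⟩
  · intro j
    obtain ⟨K, hK0, hK⟩ := hb.exists_gaussLe 1 zero_le_one j
    -- bound the finitely many coefficients of degree at most `j` of the powers of `y`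
    set L : ℝ := ∑ i ∈ Finset.range e, ∑ a ∈ Finset.range (j + 1), ‖PowerSeries.coeff a (y ^ i)‖
    have hL0 : 0 ≤ L := by positivity
    have hL : ∀ i < e, GaussLe 1 j L (y ^ i) := by
      intro i hi a ha
      have h1 : ‖PowerSeries.coeff a (y ^ i)‖ ≤
          ∑ a ∈ Finset.range (j + 1), ‖PowerSeries.coeff a (y ^ i)‖ :=
        Finset.single_le_sum (f := fun a => ‖PowerSeries.coeff a (y ^ i)‖)
          (fun _ _ => norm_nonneg _) (Finset.mem_range.2 (by omega))
      have h2 := Finset.single_le_sum (f := fun i => ∑ a ∈ Finset.range (j + 1),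
        ‖PowerSeries.coeff a (y ^ i)‖) (fun i _ => by positivity) (Finset.mem_range.2 hi)
      rw [one_pow, mul_one]
      exact h1.trans h2
    refine ⟨K * L, fun f => ?_⟩
    have key : GaussLe 1 j (K * L) (Φ (rem f)) := by
      rw [hΦ, Polynomial.coe_eval₂RingHom, Polynomial.eval₂_eq_sum_range' Ψ' (n := e)]
      · have : ∀ m ≤ e, GaussLe 1 j (K * L)
            (∑ i ∈ Finset.range m, Ψ' ((rem f).coeff i) * y ^ i) := by
          intro m
          induction m with
          | zero => intro _ a ha; simp; positivity
          | succ m ih =>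
            intro hm
            rw [Finset.sum_range_succ]
            exact (ih (by omega)).add zero_le_one
              ((hK _).mul zero_le_one hK0 hL0 (hL m (by omega)))
        exact this e le_rfl
      · by_cases h0 : rem f = 0
        · rw [h0, Polynomial.natDegree_zero]
          rcases Nat.eq_zero_or_pos e with he | he
          · exfalso
            subst he
            have h1 := hremdeg 1
            have h2 : rem 1 = 0 := by
              rw [← Polynomial.degree_eq_bot]; simpa using h1
            have h3 := hrem 1
            rw [h2, map_zero, sub_zero] at h3
            exact hone h3
          · exact he
        · exact (Polynomial.natDegree_lt_iff_degree_lt h0).2 (hremdeg f)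
    have := key j le_rfl
    rw [one_pow, mul_one] at this
    rw [hΨ]
    exact this
  · intro f hf
    rw [hΨ, hwell f 0 (by simpa using hf), map_zero]
  · intro f
    rw [hΨ, hΦconst]
    have := hev _ (hrem f)
    rw [map_sub, sub_eq_zero] at this
    exact this.symm
  · intro a
    rw [hΨ, hwell _ (Polynomial.C a) (by simp), hΦC]

end Extension

section Weierstrass

/-- Weierstrass division over a power series ring: `G` is regular of degree `e` in the
distinguished variable modulo the other variables. -/
theorem weierstrass_mvPowerSeries {τ : Type*} [Finite τ] {B : Type*} [CommRing B] [Nontrivial B]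
    (G : PowerSeries (MvPowerSeries τ B)) (e : ℕ)
    (hlt : ∀ j < e, MvPowerSeries.constantCoeff (PowerSeries.coeff j G) = 0)
    (he : MvPowerSeries.constantCoeff (PowerSeries.coeff e G) = 1)
    (f : PowerSeries (MvPowerSeries τ B)) :
    ∃ (q : PowerSeries (MvPowerSeries τ B)) (r : Polynomial (MvPowerSeries τ B)),
      r.degree < e ∧ f = G * q + r := by
  cases nonempty_fintype τ
  set J : Ideal (MvPowerSeries τ B) := Ideal.span (Set.range MvPowerSeries.X) with hJ
  have hmem : ∀ a : MvPowerSeries τ B, a ∈ J ↔ MvPowerSeries.constantCoeff a = 0 := by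
    intro a
    constructor
    · intro ha
      have : J ≤ RingHom.ker (MvPowerSeries.constantCoeff (σ := τ) (R := B)) := by
        rw [hJ, Ideal.span_le]
        rintro _ ⟨i, rfl⟩
        simp [RingHom.mem_ker]
      exact RingHom.mem_ker.1 (this ha)
    · intro ha
      have := mem_pow_span_X_of_coeff 1 a (fun κ hκ => by
        have : κ = 0 := by
          rw [← Finsupp.degree_eq_zero_iff]; omega
        rw [this]; simpa using ha)
      simpa [hJ] using this
  have hord : (G.map (Ideal.Quotient.mk J)).order = e := by
    rw [PowerSeries.order_eq_nat]
    constructor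
    · rw [PowerSeries.coeff_map, Ne, Ideal.Quotient.eq_zero_iff_mem, hmem, he]
      exact one_ne_zero
    · intro i hi
      rw [PowerSeries.coeff_map, Ideal.Quotient.eq_zero_iff_mem, hmem]
      exact hlt i hi
  have hdiv : G.IsWeierstrassDivisorAt J := by
    rw [PowerSeries.IsWeierstrassDivisorAt, hord, ENat.toNat_coe,
      MvPowerSeries.isUnit_iff_constantCoeff, he]
    exact isUnit_one
  have := hdiv.isWeierstrassDivisionAt_div_mod f
  refine ⟨hdiv.div f, hdiv.mod f, ?_, this.2⟩
  have h1 := this.1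
  rw [hord, ENat.toNat_coe] at h1
  exact h1

end Weierstrass

/-! ### Scales, charts and torus actions -/

section Delta

variable {σ : Type*} {R : Type*} [CommRing R]

/-- The `j`-th coefficient of `deltaHom`. -/
noncomputable def deltaComp (L : (σ →₀ ℕ) →+ ℤ) (j : ℕ) (f : MvPowerSeries σ R) :
    MvPowerSeries σ R :=
  fun κ => Ring.choose (L κ) j • MvPowerSeries.coeff κ f

theorem coeff_deltaComp (L : (σ →₀ ℕ) →+ ℤ) (j : ℕ) (f : MvPowerSeries σ R) (κ : σ →₀ ℕ) :
    MvPowerSeries.coeff κ (deltaComp L j f) = Ring.choose (L κ) j • MvPowerSeries.coeff κ f := rfl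

/-- The one-parameter group of torus automorphisms `X^κ ↦ (1 + t) ^ (L κ) X^κ`, expanded in
powers of `t`. -/
noncomputable def deltaHom (L : (σ →₀ ℕ) →+ ℤ) :
    MvPowerSeries σ R →+* PowerSeries (MvPowerSeries σ R) where
  toFun f := PowerSeries.mk fun j => deltaComp L j f
  map_one' := by
    classical
    ext j κ
    rw [PowerSeries.coeff_mk, coeff_deltaComp, MvPowerSeries.coeff_one, PowerSeries.coeff_one]
    by_cases hκ : κ = 0
    · subst hκ
      rw [map_zero, Ring.choose_zero_ite, if_pos rfl]
      by_cases hj : j = 0 <;> simp [hj]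
    · simp only [hκ, if_false, smul_zero]
      split_ifs <;> simp [MvPowerSeries.coeff_one, hκ]
  map_zero' := by
    ext j κ
    rw [PowerSeries.coeff_mk, coeff_deltaComp]
    simp
  map_add' f g := by
    ext j κ
    rw [PowerSeries.coeff_mk, map_add, map_add, PowerSeries.coeff_mk, PowerSeries.coeff_mk]
    simp only [coeff_deltaComp]
    rw [map_add, smul_add]
  map_mul' f g := by
    classical
    ext j κ
    rw [PowerSeries.coeff_mk, PowerSeries.coeff_mul, map_sum]
    simp_rw [PowerSeries.coeff_mk, coeff_deltaComp, MvPowerSeries.coeff_mul]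
    rw [Finset.sum_comm, Finset.smul_sum]
    refine Finset.sum_congr rfl fun p hp => ?_
    have hp' : p.1 + p.2 = κ := Finset.HasAntidiagonal.mem_antidiagonal.1 hp
    rw [← hp', map_add, Ring.add_choose_eq j (Commute.all _ _), Finset.sum_smul]
    refine Finset.sum_congr rfl fun q hq => ?_
    simp only [coeff_deltaComp]
    rw [smul_mul_smul_comm]

theorem coeff_coeff_deltaHom (L : (σ →₀ ℕ) →+ ℤ) (f : MvPowerSeries σ R) (j : ℕ) (κ : σ →₀ ℕ) :
    MvPowerSeries.coeff κ (PowerSeries.coeff j (deltaHom L f)) =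
      Ring.choose (L κ) j • MvPowerSeries.coeff κ f := by
  have : PowerSeries.coeff j (deltaHom L f) = deltaComp L j f := by
    change PowerSeries.coeff j (PowerSeries.mk fun j => deltaComp L j f) = _
    rw [PowerSeries.coeff_mk]
  rw [this, coeff_deltaComp]

theorem coeff_deltaHom_monomial (L : (σ →₀ ℕ) →+ ℤ) (κ : σ →₀ ℕ) (b : R) (j : ℕ) :
    PowerSeries.coeff j (deltaHom L (MvPowerSeries.monomial κ b)) =
      Ring.choose (L κ) j • MvPowerSeries.monomial κ b := by
  classical
  ext κ'
  rw [coeff_coeff_deltaHom, map_zsmul, MvPowerSeries.coeff_monomial]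
  split_ifs with h
  · rw [h]
  · simp

variable {Γ : Type*} [AddCommMonoid Γ] (wt : (σ →₀ ℕ) →+ Γ)

/-- A homogeneous ideal is preserved by the one-parameter groups of torus automorphisms compatible with
the grading. -/
theorem coeff_deltaHom_mem [Finite σ] [IsNoetherianRing R] (ℓ : Γ →+ ℤ)
    (P : Ideal (MvPowerSeries σ R)) (hP : ∀ f ∈ P, ∀ γ, wcomp wt γ f ∈ P)
    (f : MvPowerSeries σ R) (hf : f ∈ P) (j : ℕ) :
    PowerSeries.coeff j (deltaHom (ℓ.comp wt) f) ∈ P := by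
  classical
  obtain ⟨T, F, -, hsum, -⟩ := graded_decomp wt f
  have hw : ∀ h a, PowerSeries.coeff a (deltaHom (ℓ.comp wt) (wcomp wt h f)) =
      Ring.choose (ℓ h) a • wcomp wt h f := by
    intro h a
    ext κ
    rw [coeff_coeff_deltaHom, map_zsmul, coeff_wcomp, AddMonoidHom.comp_apply]
    split_ifs with hκ
    · rw [hκ]
    · simp
  rw [hsum, map_sum, map_sum]
  refine P.sum_mem fun h hh => ?_
  rw [map_mul, PowerSeries.coeff_mul]
  refine P.sum_mem fun p _ => P.mul_mem_right _ ?_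
  rw [hw]
  exact zsmul_mem (hP f hf h) _

end Delta

/-- A family of points `ω : Ω`, grouped into instances by `inst`, seen along an ultrafilter. The
group `G` indexes monomials `M g` in the quantities that vary with the point; the norm of a
nontrivial one never depends on the instance alone. `lam` records the exponents of a
one-parameter group moving the monomials, and `flag` the degenerate case without any of them. -/
structure Scales (C Ω I : Type*) [NormedField C] where
  inst : Ω → I
  U : Ultrafilter Ω
  G : Type
  [grp : AddCommGroup G]
  M : G → Ω → C
  M_zero : ∀ ω, M 0 ω = 1
  M_add : ∀ g h ω, M (g + h) ω = M g ω * M h ω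
  M_inj : ∀ g, (∃ c : I → ℝ, ∀ᶠ ω in U, ‖M g ω‖ = c (inst ω)) → g = 0
  lam : G →+ (I → ℤ)
  flag : Prop
  flag_eq : flag → ∀ g : G, g = 0

attribute [instance] Scales.grp

/-- Small parameters `s ω l`, each an instance-level constant times a monomial, together with a
noetherian ring of instance-level coefficients. -/
structure Chart {C Ω I : Type*} [NormedField C] (𝒮 : Scales C Ω I) where
  B : Type
  [ring : CommRing B]
  [noeth : IsNoetherianRing B]
  S : Type
  [fin : Fintype S]
  ev : I → B →+* C
  hev : ∀ i b, ‖ev i b‖ ≤ 1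
  wt : S → 𝒮.G
  s : Ω → S → C
  hs : ∀ ω l, ‖s ω l‖ < 1
  coef : S → I → C
  hcoef : ∀ l, ∀ᶠ ω in 𝒮.U, s ω l = coef l (𝒮.inst ω) * 𝒮.M (wt l) ω

attribute [instance] Chart.ring Chart.noeth Chart.fin

theorem eventually_eq_of_finite {Ω α : Type*} [Finite α] (U : Ultrafilter Ω) (f : Ω → α) :
    ∃ a, ∀ᶠ ω in U, f ω = a := by
  obtain ⟨a, ha⟩ := (U.map f).eq_pure_of_finite
  refine ⟨a, ?_⟩
  have : {a} ∈ U.map f := by rw [ha]; exact Set.mem_singleton _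
  exact this

section ChartLemmas

variable {C Ω I : Type*} [NormedField C] [CompleteSpace C] [IsUltrametricDist C]
  {𝒮 : Scales C Ω I}

theorem Scales.M_ne (𝒮 : Scales C Ω I) (g : 𝒮.G) (ω : Ω) : 𝒮.M g ω ≠ 0 := by
  intro h
  have := 𝒮.M_add g (-g) ω
  rw [add_neg_cancel, 𝒮.M_zero, h, zero_mul] at this
  exact one_ne_zero this

theorem Scales.M_sub (𝒮 : Scales C Ω I) (g h : 𝒮.G) (ω : Ω) :
    𝒮.M (g - h) ω = 𝒮.M g ω / 𝒮.M h ω := by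
  rw [eq_div_iff (𝒮.M_ne _ _), ← 𝒮.M_add, sub_add_cancel]

theorem Scales.M_nsmul (𝒮 : Scales C Ω I) (k : ℕ) (g : 𝒮.G) (ω : Ω) :
    𝒮.M (k • g) ω = 𝒮.M g ω ^ k := by
  induction k with
  | zero => simp [𝒮.M_zero]
  | succ k ih => rw [succ_nsmul, 𝒮.M_add, ih, pow_succ]

theorem Scales.M_sum (𝒮 : Scales C Ω I) {α : Type*} (t : Finset α) (g : α → 𝒮.G) (ω : Ω) :
    𝒮.M (∑ a ∈ t, g a) ω = ∏ a ∈ t, 𝒮.M (g a) ω := by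
  classical
  induction t using Finset.induction_on with
  | empty => simp [𝒮.M_zero]
  | insert a t ha ih => rw [Finset.sum_insert ha, Finset.prod_insert ha, 𝒮.M_add, ih]

variable (ch : Chart 𝒮) {n : ℕ} (z : Ω → Fin n → C) (hz : ∀ ω k, ‖z ω k‖ < 1)

/-- The power series ring attached to a chart with `n` further small coordinates. -/
abbrev Chart.R (ch : Chart 𝒮) (n : ℕ) : Type := MvPowerSeries (ch.S ⊕ Fin n) ch.B

theorem Chart.pt_lt (ch : Chart 𝒮) (z : Ω → Fin n → C) (hz : ∀ ω k, ‖z ω k‖ < 1) (ω : Ω) :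
    ∀ i, ‖Sum.elim (ch.s ω) (z ω) i‖ < 1 := by
  rintro (l | k)
  · exact ch.hs ω l
  · exact hz ω k

/-- Evaluation at the point `ω`. -/
noncomputable def Chart.evl (ch : Chart 𝒮) (z : Ω → Fin n → C) (hz : ∀ ω k, ‖z ω k‖ < 1) (ω : Ω) :
    ch.R n →+* C :=
  evalHom (ch.ev (𝒮.inst ω)) (ch.hev _) (Sum.elim (ch.s ω) (z ω)) (ch.pt_lt z hz ω)

theorem Chart.evl_C (ω : Ω) (b : ch.B) : ch.evl z hz ω (MvPowerSeries.C b) = ch.ev (𝒮.inst ω) b :=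
  evalHom_C _ _ _ _ _

theorem Chart.evl_inl (ω : Ω) (l : ch.S) :
    ch.evl z hz ω (MvPowerSeries.X (Sum.inl l)) = ch.s ω l := evalHom_X _ _ _ _ _

theorem Chart.evl_inr (ω : Ω) (k : Fin n) :
    ch.evl z hz ω (MvPowerSeries.X (Sum.inr k)) = z ω k := evalHom_X _ _ _ _ _

/-- Given homomorphisms into `C` indexed by `Ω`, the ideal of elements mapping to zero for almost
every `ω`. -/
def aeKer {W : Type*} [CommRing W] (U : Ultrafilter Ω) (φ : Ω → W →+* C) : Ideal W where
  carrier := {f | ∀ᶠ ω in U, φ ω f = 0}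
  zero_mem' := by simp
  add_mem' := by
    intro a b ha hb
    have ha' : ∀ᶠ ω in U, φ ω a = 0 := ha
    have hb' : ∀ᶠ ω in U, φ ω b = 0 := hb
    change ∀ᶠ ω in U, φ ω (a + b) = 0
    filter_upwards [ha', hb'] with ω h1 h2
    rw [map_add, h1, h2, add_zero]
  smul_mem' := by
    intro c a ha
    have ha' : ∀ᶠ ω in U, φ ω a = 0 := ha
    change ∀ᶠ ω in U, φ ω (c • a) = 0
    filter_upwards [ha'] with ω h1
    rw [smul_eq_mul, map_mul, h1, mul_zero]

theorem mem_aeKer {W : Type*} [CommRing W] {U : Ultrafilter Ω} {φ : Ω → W →+* C} {f : W} :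
    f ∈ aeKer U φ ↔ ∀ᶠ ω in U, φ ω f = 0 := Iff.rfl

theorem not_mem_aeKer {W : Type*} [CommRing W] {U : Ultrafilter Ω} {φ : Ω → W →+* C} {f : W} :
    f ∉ aeKer U φ ↔ ∀ᶠ ω in U, φ ω f ≠ 0 := by
  rw [mem_aeKer, ← Ultrafilter.eventually_not]

theorem aeKer_isPrime {W : Type*} [CommRing W] (U : Ultrafilter Ω) (φ : Ω → W →+* C) :
    (aeKer U φ).IsPrime := by
  constructor
  · rw [Ne, Ideal.eq_top_iff_one, not_mem_aeKer]
    simp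
  · intro a b hab
    rw [mem_aeKer] at hab
    simp only [map_mul, mul_eq_zero] at hab
    exact Ultrafilter.eventually_or.1 hab

theorem aeKer_eventually {W : Type*} [CommRing W] [IsNoetherianRing W] (U : Ultrafilter Ω)
    (φ : Ω → W →+* C) : ∀ᶠ ω in U, ∀ f ∈ aeKer U φ, φ ω f = 0 := by
  obtain ⟨t, ht⟩ : (aeKer U φ).FG := IsNoetherian.noetherian _
  have h1 : ∀ᶠ ω in U, ∀ f ∈ t, φ ω f = 0 := by
    rw [Filter.eventually_all_finset]
    intro f hf
    have : f ∈ aeKer U φ := by rw [← ht]; exact Ideal.subset_span hf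
    exact this
  filter_upwards [h1] with ω hω f hf
  have h2 : aeKer U φ ≤ RingHom.ker (φ ω) := by
    rw [← ht]
    exact Ideal.span_le.2 fun f hf => hω f hf
  exact h2 hf

/-- The ideal of relations valid at almost all points. -/
noncomputable abbrev Chart.P (ch : Chart 𝒮) (z : Ω → Fin n → C) (hz : ∀ ω k, ‖z ω k‖ < 1) :
    Ideal (ch.R n) := aeKer 𝒮.U (ch.evl z hz)

/-- The multigrading of `Chart.R` by monomial classes and exponents of the `z`-variables. -/
noncomputable def Chart.gr (ch : Chart 𝒮) (n : ℕ) :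
    ((ch.S ⊕ Fin n) →₀ ℕ) →+ 𝒮.G × (Fin n → ℕ) where
  toFun κ := (∑ l, κ (Sum.inl l) • ch.wt l, fun k => κ (Sum.inr k))
  map_zero' := by ext <;> simp
  map_add' κ κ' := by ext <;> simp [add_smul, Finset.sum_add_distrib]

/-- The instance-level factor of a homogeneous component. -/
noncomputable def Chart.hval (ch : Chart 𝒮) {n : ℕ} (f : ch.R n) (i : I) : C :=
  ∑' κ : (ch.S ⊕ Fin n) →₀ ℕ, ch.ev i (MvPowerSeries.coeff κ f) *
    ∏ l, ch.coef l i ^ κ (Sum.inl l)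

/-- A homogeneous component evaluates to an instance-level constant times a monomial. -/
theorem Chart.evl_wcomp (f : ch.R n) (γ : 𝒮.G × (Fin n → ℕ)) :
    ∀ᶠ ω in 𝒮.U, ch.evl z hz ω (wcomp (ch.gr n) γ f) =
      ch.hval (wcomp (ch.gr n) γ f) (𝒮.inst ω) * 𝒮.M γ.1 ω * ∏ k, z ω k ^ γ.2 k := by
  classical
  have hall : ∀ᶠ ω in 𝒮.U, ∀ l, ch.s ω l = ch.coef l (𝒮.inst ω) * 𝒮.M (ch.wt l) ω :=
    Filter.eventually_all.2 ch.hcoef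
  filter_upwards [hall] with ω hω
  rw [Chart.evl, evalHom_apply, Chart.hval, mul_assoc, ← tsum_mul_right]
  refine tsum_congr fun κ => ?_
  rw [coeff_wcomp]
  split_ifs with hκ
  · rw [Fintype.prod_sum_type]
    simp only [Sum.elim_inl, Sum.elim_inr, hω, mul_pow, Finset.prod_mul_distrib]
    have h1 : γ.1 = ∑ l, κ (Sum.inl l) • ch.wt l := by rw [← hκ]; rfl
    have h2 : ∀ k, γ.2 k = κ (Sum.inr k) := by intro k; rw [← hκ]; rfl
    rw [h1, 𝒮.M_sum]
    simp only [𝒮.M_nsmul, h2]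
    ring
  · simp

/-- A formal arc through almost every point, along which all almost everywhere valid relations
persist. -/
def Chart.Flow (ch : Chart 𝒮) (z : Ω → Fin n → C) (hz : ∀ ω k, ‖z ω k‖ < 1) : Prop :=
  ∀ᶠ ω in 𝒮.U, ∃ (Ψ : ch.R n →+* PowerSeries C) (ε : ℤ),
    CoeffBdd Ψ ∧ (∀ b, Ψ (MvPowerSeries.C b) = PowerSeries.C (ch.ev (𝒮.inst ω) b)) ∧
    (∀ f, PowerSeries.constantCoeff (Ψ f) = ch.evl z hz ω f) ∧
    (∀ l, Ψ (MvPowerSeries.X (Sum.inl l)) = PowerSeries.C (ch.s ω l) *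
      PowerSeries.binomialSeries C (ε * 𝒮.lam (ch.wt l) (𝒮.inst ω))) ∧
    (∀ f ∈ ch.P z hz, Ψ f = 0) ∧ (𝒮.flag → ε = 0) ∧
    (ε ≠ 0 ∨ ∃ k, Ψ (MvPowerSeries.X (Sum.inr k)) ≠ PowerSeries.C (z ω k))

/-- Almost every point lies, in its instance, in a finite set of uniformly bounded size. -/
def FewValues (𝒮 : Scales C Ω I) {α : Type*} (z : Ω → α) : Prop :=
  ∃ (F : I → Finset α) (b : ℕ), (∀ i, (F i).card ≤ b) ∧ ∀ᶠ ω in 𝒮.U, z ω ∈ F (𝒮.inst ω)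

/-- If the ideal of relations is homogeneous, torus automorphisms preserve it, and a suitable
one-parameter group of them gives the flow: it scales a nonvanishing coordinate `z k` if there is
one, and the monomials otherwise. Only the case `𝒮.flag` with `z = 0` remains. -/
theorem Chart.flow_of_homogeneous
    (hP : ∀ f ∈ ch.P z hz, ∀ γ, wcomp (ch.gr n) γ f ∈ ch.P z hz) :
    (𝒮.flag ∧ FewValues 𝒮 z) ∨ ch.Flow z hz := by
  classical
  have hker := aeKer_eventually 𝒮.U (ch.evl z hz)
  -- the flow attached to a linear form `ℓ` on the grading group
  have main : ∀ ω, (∀ f ∈ ch.P z hz, ch.evl z hz ω f = 0) → ∀ ℓ : 𝒮.G × (Fin n → ℕ) →+ ℤ,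
      ∃ Ψ : ch.R n →+* PowerSeries C, CoeffBdd Ψ ∧
        (∀ b, Ψ (MvPowerSeries.C b) = PowerSeries.C (ch.ev (𝒮.inst ω) b)) ∧
        (∀ f, PowerSeries.constantCoeff (Ψ f) = ch.evl z hz ω f) ∧
        (∀ l, Ψ (MvPowerSeries.X (Sum.inl l)) = PowerSeries.C (ch.s ω l) *
          PowerSeries.binomialSeries C (ℓ (ch.wt l, 0))) ∧
        (∀ k, Ψ (MvPowerSeries.X (Sum.inr k)) = PowerSeries.C (z ω k) *
          PowerSeries.binomialSeries C (ℓ (0, Pi.single k 1))) ∧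
        (∀ f ∈ ch.P z hz, Ψ f = 0) := by
    intro ω hω ℓ
    set Ψ : ch.R n →+* PowerSeries C :=
      (PowerSeries.map (ch.evl z hz ω)).comp (deltaHom (ℓ.comp (ch.gr n))) with hΨ
    have hco : ∀ f j, PowerSeries.coeff j (Ψ f) =
        ch.evl z hz ω (PowerSeries.coeff j (deltaHom (ℓ.comp (ch.gr n)) f)) := fun f j => by
      rw [hΨ, RingHom.comp_apply, PowerSeries.coeff_map]
    have hmon : ∀ κ (b : ch.B), Ψ (MvPowerSeries.monomial κ b) =
        PowerSeries.C (ch.evl z hz ω (MvPowerSeries.monomial κ b)) *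
          PowerSeries.binomialSeries C (ℓ (ch.gr n κ)) := by
      intro κ b
      ext j
      rw [hco, coeff_deltaHom_monomial, map_zsmul, PowerSeries.coeff_C_mul,
        PowerSeries.binomialSeries_coeff, mul_smul_comm, mul_one, AddMonoidHom.comp_apply]
    refine ⟨Ψ, ?_, ?_, ?_, ?_, ?_, ?_⟩
    · intro j
      exact ⟨1, fun f => by rw [hco]; exact norm_evalHom_le _ _ _ _ _⟩
    · intro b
      have := hmon 0 b
      rw [map_zero, map_zero, PowerSeries.binomialSeries_zero, mul_one,
        MvPowerSeries.monomial_zero_eq_C_apply, ch.evl_C] at this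
      exact this
    · intro f
      rw [← PowerSeries.coeff_zero_eq_constantCoeff_apply, hco]
      congr 1
      ext κ
      rw [coeff_coeff_deltaHom, Ring.choose_zero_right, one_smul]
    · intro l
      have hgr : ch.gr n (Finsupp.single (Sum.inl l) 1) = (ch.wt l, 0) := by
        rw [Chart.gr]
        ext
        · simp [Finsupp.single_apply, ite_smul]
        · simp [Finsupp.single_apply]
      have := hmon (Finsupp.single (Sum.inl l) 1) 1
      rw [hgr, ← MvPowerSeries.X_def, ch.evl_inl] at this
      exact this
    · intro k
      have hgr : ch.gr n (Finsupp.single (Sum.inr k) 1) = (0, Pi.single k 1) := by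
        rw [Chart.gr]
        ext k'
        · simp [Finsupp.single_apply]
        · simp [Finsupp.single_apply, Pi.single_apply, eq_comm]
      have := hmon (Finsupp.single (Sum.inr k) 1) 1
      rw [hgr, ← MvPowerSeries.X_def, ch.evl_inr] at this
      exact this
    · intro f hf
      ext j
      rw [hco, hω _ (coeff_deltaHom_mem (ch.gr n) ℓ _ hP f hf j), map_zero]
  by_cases hk : ∃ k, ∀ᶠ ω in 𝒮.U, z ω k ≠ 0
  · obtain ⟨k, hk⟩ := hk
    right
    filter_upwards [hk, hker] with ω hzk hω
    let ℓ : 𝒮.G × (Fin n → ℕ) →+ ℤ :=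
      { toFun := fun γ => (γ.2 k : ℤ), map_zero' := by simp, map_add' := by simp }
    obtain ⟨Ψ, h1, h2, h3, h4, h5, h6⟩ := main ω hω ℓ
    refine ⟨Ψ, 0, h1, h2, h3, fun l => ?_, h6, fun _ => rfl, Or.inr ⟨k, ?_⟩⟩
    · rw [h4, zero_mul]; rfl
    · rw [h5]
      intro hcon
      have := congrArg (PowerSeries.coeff 1) hcon
      rw [PowerSeries.coeff_C_mul, PowerSeries.binomialSeries_coeff, PowerSeries.coeff_C] at this
      simp [ℓ] at this
      exact hzk this
  · push Not at hk
    have hz0 : ∀ᶠ ω in 𝒮.U, ∀ k, z ω k = 0 := by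
      rw [Filter.eventually_all]
      intro k
      exact hk k
    by_cases hfl : 𝒮.flag
    · left
      refine ⟨hfl, fun _ => {0}, 1, by simp, ?_⟩
      filter_upwards [hz0] with ω hω
      rw [Finset.mem_singleton]
      exact funext hω
    · right
      filter_upwards [hker] with ω hω
      let ℓ : 𝒮.G × (Fin n → ℕ) →+ ℤ :=
        { toFun := fun γ => 𝒮.lam γ.1 (𝒮.inst ω), map_zero' := by simp, map_add' := by simp }
      obtain ⟨Ψ, h1, h2, h3, h4, h5, h6⟩ := main ω hω ℓ
      refine ⟨Ψ, 1, h1, h2, h3, fun l => ?_, h6, fun h => (hfl h).elim, Or.inl one_ne_zero⟩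
      rw [h4, one_mul]; rfl

end ChartLemmas

/-! ### Elimination of one coordinate -/

section Substitution

theorem sub_C_mem_span_X {σ : Type*} [Finite σ] {B : Type*} [CommRing B] (f : MvPowerSeries σ B) :
    f - MvPowerSeries.C (MvPowerSeries.constantCoeff f) ∈
      Ideal.span (Set.range (MvPowerSeries.X : σ → MvPowerSeries σ B)) := by
  cases nonempty_fintype σ
  have := mem_pow_span_X_of_coeff 1
    (f - MvPowerSeries.C (MvPowerSeries.constantCoeff f)) (fun κ hκ => by
      have : κ = 0 := by
        rw [← Finsupp.degree_eq_zero_iff]; omega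
      rw [this]; simp)
  rwa [pow_one] at this

variable {σ τ : Type*} [Finite σ] [Fintype τ] {B B' : Type*} [CommRing B] [CommRing B']

/-- Substitution of power series without constant term, in a form with one distinguished target
variable. -/
theorem exists_subst (β : B →+* B') (a : σ → PowerSeries (MvPowerSeries τ B'))
    (ha : ∀ i, MvPowerSeries.constantCoeff (PowerSeries.constantCoeff (a i)) = 0) :
    ∃ Θ : MvPowerSeries σ B →+* PowerSeries (MvPowerSeries τ B'),
      (∀ b, Θ (MvPowerSeries.C b) = PowerSeries.C (MvPowerSeries.C (β b))) ∧
      (∀ i, Θ (MvPowerSeries.X i) = a i) ∧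
      ∀ f, MvPowerSeries.constantCoeff (PowerSeries.constantCoeff (Θ f)) =
        β (MvPowerSeries.constantCoeff f) := by
  let a' : σ → MvPowerSeries (Option τ) B' := fun i =>
    (MvPowerSeries.optionEquivLeft τ B').symm (a i)
  have ha' : ∀ i, MvPowerSeries.constantCoeff (a' i) = 0 := by
    intro i
    have h1 := MvPowerSeries.coeff_coeff_optionEquivLeft (a' i) 0 0
    rw [AlgEquiv.apply_symm_apply] at h1
    have h2 : (0 : τ →₀ ℕ).optionElim 0 = 0 := by
      ext j; cases j <;> simp
    rw [h2, MvPowerSeries.coeff_zero_eq_constantCoeff_apply,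
      MvPowerSeries.coeff_zero_eq_constantCoeff_apply,
      PowerSeries.coeff_zero_eq_constantCoeff_apply, ha] at h1
    exact h1.symm
  have hS := MvPowerSeries.hasSubst_of_constantCoeff_zero ha'
  let Θ : MvPowerSeries σ B →+* PowerSeries (MvPowerSeries τ B') :=
    ((MvPowerSeries.optionEquivLeft τ B').toRingEquiv.toRingHom.comp
      ((MvPowerSeries.substAlgHom (R := B') hS).toRingHom)).comp (MvPowerSeries.map β)
  have hΘ : ∀ f, Θ f = MvPowerSeries.optionEquivLeft τ B' (MvPowerSeries.substAlgHom (R := B') hS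
    (MvPowerSeries.map β f)) := fun f => rfl
  have hC : ∀ b, Θ (MvPowerSeries.C b) = PowerSeries.C (MvPowerSeries.C (β b)) := by
    intro b
    rw [hΘ, MvPowerSeries.map_C]
    have : (MvPowerSeries.C (β b) : MvPowerSeries σ B') =
      algebraMap B' (MvPowerSeries σ B') (β b) := rfl
    rw [this, AlgHom.commutes]
    exact MvPowerSeries.optionEquivLeft_C _
  have hX : ∀ i, Θ (MvPowerSeries.X i) = a i := by
    intro i
    rw [hΘ, MvPowerSeries.map_X, MvPowerSeries.substAlgHom_X]
    exact AlgEquiv.apply_symm_apply _ _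
  refine ⟨Θ, hC, hX, fun f => ?_⟩
  let κ : PowerSeries (MvPowerSeries τ B') →+* B' :=
    (MvPowerSeries.constantCoeff (σ := τ) (R := B')).comp PowerSeries.constantCoeff
  have h1 : Ideal.span (Set.range (MvPowerSeries.X : σ → MvPowerSeries σ B)) ≤
      RingHom.ker (κ.comp Θ) := by
    rw [Ideal.span_le]
    rintro _ ⟨i, rfl⟩
    simp only [SetLike.mem_coe, RingHom.mem_ker, RingHom.comp_apply, hX, κ, ha]
  have h2 := RingHom.mem_ker.1 (h1 (sub_C_mem_span_X f))
  rw [map_sub, sub_eq_zero] at h2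
  simp only [RingHom.comp_apply, hC, κ] at h2
  rw [h2]
  simp

variable {C : Type*} [NormedField C] [CompleteSpace C] [IsUltrametricDist C]

theorem exists_eval_powerSeries (ev : B →+* C) (hev : ∀ b, ‖ev b‖ ≤ 1) (x : τ → C)
    (hx : ∀ i, ‖x i‖ < 1) (t : C) (ht : ‖t‖ < 1) :
    ∃ φ : PowerSeries (MvPowerSeries τ B) →+* C, (∀ f, ‖φ f‖ ≤ 1) ∧
      (∀ a, φ (PowerSeries.C a) = evalHom ev hev x hx a) ∧ φ PowerSeries.X = t := by
  let x' : Option τ → C := fun o => o.elim t x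
  have hx' : ∀ i, ‖x' i‖ < 1 := by
    rintro (_ | i)
    · exact ht
    · exact hx i
  let φ : PowerSeries (MvPowerSeries τ B) →+* C :=
    (evalHom ev hev x' hx').comp ((MvPowerSeries.optionEquivLeft τ B).symm : _ →+* _)
  have hφ : ∀ f, φ f = evalHom ev hev x' hx' ((MvPowerSeries.optionEquivLeft τ B).symm f) :=
    fun f => rfl
  have hle : ∀ f, ‖φ f‖ ≤ 1 := fun f => by rw [hφ]; exact norm_evalHom_le _ _ _ _ _
  have hXs : ∀ i, φ (PowerSeries.C (MvPowerSeries.X i)) = x i := by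
    intro i
    rw [hφ, ← MvPowerSeries.optionEquivLeft_X_some, AlgEquiv.symm_apply_apply, evalHom_X]
    rfl
  refine ⟨φ, hle, ?_, ?_⟩
  · have : φ.comp PowerSeries.C = evalHom ev hev x hx := by
      refine hom_ext_of_norm_le (fun f => hle _) (fun f => norm_evalHom_le _ _ _ _ _) ?_ ?_ ?_
      · intro b
        rw [RingHom.comp_apply, hφ, ← MvPowerSeries.optionEquivLeft_C, AlgEquiv.symm_apply_apply,
          evalHom_C, evalHom_C]
      · intro i
        rw [RingHom.comp_apply, hXs, evalHom_X]
      · intro i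
        rw [RingHom.comp_apply, hXs]
        exact hx i
    exact fun a => RingHom.congr_fun this a
  · rw [hφ, ← MvPowerSeries.optionEquivLeft_X_none, AlgEquiv.symm_apply_apply, evalHom_X]
    rfl

theorem evalHom_congr {x x' : τ → C} (h : x = x') (ev : B →+* C) (hev : ∀ b, ‖ev b‖ ≤ 1)
    (hx : ∀ i, ‖x i‖ < 1) (hx' : ∀ i, ‖x' i‖ < 1) :
    evalHom ev hev x hx = evalHom ev hev x' hx' := by
  subst h; rfl

end Substitution

section Step

variable {C Ω I : Type*} [NormedField C] [CompleteSpace C] [IsUltrametricDist C] [CharZero C]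
  {𝒮 : Scales C Ω I}

/-- Elimination of one variable: a relation that is distinguished in the first coordinate after
the change of variables `z (k + 1) = ζ k + z 0 ^ e k` reduces the dichotomy for `z` to the one
for `ζ`, over a larger chart. -/
theorem Chart.step (ch ch' : Chart 𝒮) [Nontrivial ch'.B] (β : ch.B →+* ch'.B)
    (hβ : ∀ i b, ch'.ev i (β b) = ch.ev i b) (ι : ch.S → ch'.S)
    (hs : ∀ ω l, ch'.s ω (ι l) = ch.s ω l) (hwt : ∀ l, ch'.wt (ι l) = ch.wt l)
    {n : ℕ} (e : Fin n → ℕ) (z : Ω → Fin (n + 1) → C) (hz : ∀ ω k, ‖z ω k‖ < 1)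
    (ζ : Ω → Fin n → C) (hζ : ∀ ω k, ‖ζ ω k‖ < 1)
    (hζz : ∀ ω k, z ω k.succ = ζ ω k + z ω 0 ^ e k)
    (Θ : ch.R (n + 1) →+* PowerSeries (ch'.R n))
    (hΘC : ∀ b, Θ (MvPowerSeries.C b) = PowerSeries.C (MvPowerSeries.C (β b)))
    (hΘl : ∀ l, Θ (MvPowerSeries.X (Sum.inl l)) = PowerSeries.C (MvPowerSeries.X (Sum.inl (ι l))))
    (hΘ0 : Θ (MvPowerSeries.X (Sum.inr 0)) = PowerSeries.X)
    (hΘk : ∀ k : Fin n, Θ (MvPowerSeries.X (Sum.inr k.succ)) =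
      PowerSeries.C (MvPowerSeries.X (Sum.inr k)) + PowerSeries.X ^ e k)
    (evW : Ω → PowerSeries (ch'.R n) →+* C)
    (hevC : ∀ ω a, evW ω (PowerSeries.C a) = ch'.evl ζ hζ ω a)
    (hevX : ∀ ω, evW ω PowerSeries.X = z ω 0)
    (hevΘ : ∀ ω f, evW ω (Θ f) = ch.evl z hz ω f)
    (g : PowerSeries (ch'.R n)) (hg : g ∈ aeKer 𝒮.U evW) (E : ℕ)
    (hlt : ∀ j < E, MvPowerSeries.constantCoeff (PowerSeries.coeff j g) = 0)
    (hE : MvPowerSeries.constantCoeff (PowerSeries.coeff E g) = 1)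
    (ih : (𝒮.flag ∧ FewValues 𝒮 ζ) ∨ ch'.Flow ζ hζ) :
    (𝒮.flag ∧ FewValues 𝒮 z) ∨ ch.Flow z hz := by
  classical
  set PW := aeKer 𝒮.U evW with hPW
  have : PW.IsPrime := aeKer_isPrime _ _
  let ρ : Polynomial (ch'.R n) →+* PowerSeries (ch'.R n) := Polynomial.coeToPowerSeries.ringHom
  have hρ : ∀ q, ρ q = (q : PowerSeries (ch'.R n)) := fun q => rfl
  have hρC : ∀ a, ρ (Polynomial.C a) = PowerSeries.C a := fun a => by
    rw [hρ, Polynomial.coe_C]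
  obtain ⟨q, r, hr, hqr⟩ := weierstrass_mvPowerSeries g E hlt hE (PowerSeries.X ^ E)
  set Q : Polynomial (ch'.R n) := Polynomial.X ^ E - r with hQdef
  have hQ : Q.Monic := Polynomial.monic_X_pow_sub hr
  have hQdeg : Q.natDegree = E := by
    apply Polynomial.natDegree_eq_of_degree_eq_some
    rw [hQdef, Polynomial.degree_sub_eq_left_of_degree_lt (by rwa [Polynomial.degree_X_pow]),
      Polynomial.degree_X_pow]
  have hQP : ρ Q ∈ PW := by
    have : ρ Q = g * q := by
      rw [hQdef, hρ, Polynomial.coe_sub, Polynomial.coe_pow, Polynomial.coe_X, hqr]; ring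
    rw [this]
    exact PW.mul_mem_right _ hg
  rcases ih with ⟨hfl, F', b, hF'b, hF'⟩ | hflow
  · left
    refine ⟨hfl, ?_⟩
    let good : I → (Fin n → C) → Prop := fun i v =>
      ∀ o, ‖(Sum.elim (fun l => ch'.coef l i) v : ch'.S ⊕ Fin n → C) o‖ < 1
    let Qv : ∀ i v, good i v → Polynomial C := fun i v h =>
      Q.map (evalHom (ch'.ev i) (ch'.hev i) _ h)
    let F : I → Finset (Fin (n + 1) → C) := fun i => (F' i).biUnion fun v =>
      if h : good i v then (Qv i v h).roots.toFinset.image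
        fun r => Fin.cons r fun k => v k + r ^ e k else ∅
    refine ⟨F, b * E, fun i => ?_, ?_⟩
    · refine (Finset.card_biUnion_le_card_mul _ _ E fun v _ => ?_).trans
        (Nat.mul_le_mul_right _ (hF'b i))
      split_ifs with h
      · refine Finset.card_image_le.trans ((Multiset.toFinset_card_le _).trans
          ((Polynomial.card_roots' _).trans ?_))
        rw [← hQdeg]
        exact Polynomial.natDegree_map_le
      · simp
    · have hall : ∀ᶠ ω in 𝒮.U, ∀ l, ch'.s ω l = ch'.coef l (𝒮.inst ω) * 𝒮.M (ch'.wt l) ω :=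
        Filter.eventually_all.2 ch'.hcoef
      filter_upwards [hall, hF', hQP] with ω h1 h2 h3
      have h1' : Sum.elim (ch'.s ω) (ζ ω) =
          Sum.elim (fun l => ch'.coef l (𝒮.inst ω)) (ζ ω) := by
        congr 1
        funext l
        rw [h1, 𝒮.flag_eq hfl (ch'.wt l), 𝒮.M_zero, mul_one]
      have hgood : good (𝒮.inst ω) (ζ ω) := by
        intro o
        rw [← h1']
        exact ch'.pt_lt ζ hζ ω o
      simp only [F, Finset.mem_biUnion]
      refine ⟨ζ ω, h2, ?_⟩
      rw [dif_pos hgood, Finset.mem_image]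
      refine ⟨z ω 0, ?_, ?_⟩
      · rw [Multiset.mem_toFinset, Polynomial.mem_roots (hQ.map _).ne_zero, Polynomial.IsRoot,
          ← h3]
        have h4 : evalHom (ch'.ev (𝒮.inst ω)) (ch'.hev _) _ hgood = ch'.evl ζ hζ ω :=
          evalHom_congr h1'.symm _ _ _ _
        have h5 : (evW ω).comp ρ =
            (Polynomial.evalRingHom (z ω 0)).comp (Polynomial.mapRingHom (ch'.evl ζ hζ ω)) := by
          apply Polynomial.ringHom_ext
          · intro a
            simp [hρC, hevC]
          · simp [hρ, hevX]
        have h6 := RingHom.congr_fun h5 Q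
        rw [RingHom.comp_apply] at h6
        rw [h6]
        simp only [Qv, h4]
        simp
      · funext k
        refine Fin.cases ?_ (fun k => ?_) k
        · simp
        · simp [hζz]
  · right
    have hnat : ∀ k : ℕ, k ≠ 0 → (k : PowerSeries (ch'.R n)) ∉ PW := by
      intro k hk
      rw [hPW, not_mem_aeKer]
      exact Filter.Eventually.of_forall fun ω => by
        rw [map_natCast]; exact_mod_cast hk
    obtain ⟨h, hlc, hder, hext⟩ := extend_flow (C := C) ρ PW hnat Q hQ hQP E (fun f => by
      obtain ⟨q', r', hr', hq'⟩ := weierstrass_mvPowerSeries g E hlt hE f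
      refine ⟨r', hr', ?_⟩
      have : f - ρ r' = g * q' := by rw [hρ, hq']; ring
      rw [this]
      exact PW.mul_mem_right _ hg)
    have hker : ∀ᶠ ω in 𝒮.U, ∀ f ∈ PW, evW ω f = 0 := aeKer_eventually 𝒮.U evW
    filter_upwards [hflow, hker, not_mem_aeKer.1 hlc, not_mem_aeKer.1 hder] with ω h1 h2 h3 h4
    obtain ⟨Ψ', ε, hb, hC, h0, hl, hP, hfl, hne⟩ := h1
    obtain ⟨Ψ, kb, kP, k0, kC⟩ := hext (evW ω) h2 h3 h4 Ψ' hb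
      (fun a => by rw [h0, hρC, hevC])
      (fun a ha => hP a (by
        rw [hρC, hPW, mem_aeKer] at ha
        rw [mem_aeKer]
        simpa only [hevC] using ha))
    have kC' : ∀ a, Ψ (PowerSeries.C a) = Ψ' a := fun a => by rw [← hρC, kC]
    refine ⟨Ψ.comp Θ, ε, kb.comp Θ, ?_, ?_, ?_, ?_, hfl, ?_⟩
    · intro b
      rw [RingHom.comp_apply, hΘC, kC', hC, hβ]
    · intro f
      rw [RingHom.comp_apply, k0, hevΘ]
    · intro l
      rw [RingHom.comp_apply, hΘl, kC', hl, hs, hwt]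
    · intro f hf
      rw [RingHom.comp_apply]
      apply kP
      rw [hPW, mem_aeKer]
      rw [mem_aeKer] at hf
      simpa only [hevΘ] using hf
    · rcases hne with hε | ⟨k, hk⟩
      · exact Or.inl hε
      · right
        by_contra hcon
        push Not at hcon
        have e0 := hcon 0
        have ek := hcon k.succ
        rw [RingHom.comp_apply, hΘ0] at e0
        rw [RingHom.comp_apply, hΘk, map_add, map_pow, e0, kC', hζz, map_add, map_pow] at ek
        exact hk (add_right_cancel ek)

end Step

/-! ### Dominant terms of inhomogeneous relations -/

section Dominant

variable {C Ω I : Type*} [NormedField C] [CompleteSpace C] [IsUltrametricDist C] [CharZero C]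
  {𝒮 : Scales C Ω I}

theorem sum_ne_zero_of_dominant {α : Type*} (T : Finset α) (x : α → C) (a : α) (ha : a ∈ T)
    (h : ∀ b ∈ T, b ≠ a → ‖x b‖ < ‖x a‖) (hpos : x a ≠ 0) : ∑ b ∈ T, x b ≠ 0 := by
  classical
  rw [← Finset.add_sum_erase _ _ ha]
  intro h0
  have h1 : x a = - ∑ b ∈ T.erase a, x b := eq_neg_of_add_eq_zero_left h0
  have h2 : ‖x a‖ = ‖∑ b ∈ T.erase a, x b‖ := by rw [h1, norm_neg]
  by_cases hne : (T.erase a).Nonempty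
  · obtain ⟨b, hb, hle⟩ := IsUltrametricDist.exists_norm_finsetSum_le_of_nonempty hne x
    have := h b (Finset.mem_of_mem_erase hb) (Finset.ne_of_mem_erase hb)
    linarith
  · rw [Finset.not_nonempty_iff_eq_empty] at hne
    rw [hne, Finset.sum_empty, norm_zero, norm_eq_zero] at h2
    exact hpos h2

/-- If the ideal of relations is not homogeneous, there is a relation whose terms, indexed by `T`, are all
nonzero. Those in `H`, where `c h * M h.1` has the largest norm, share one monomial `M g₀`, since
norms of distinct monomials do not differ by a function of the instance alone; hence they are told
apart by their exponents of `z`. -/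
theorem Chart.nonhomogeneous_relation (ch : Chart 𝒮) {n : ℕ} (z : Ω → Fin n → C)
    (hz : ∀ ω k, ‖z ω k‖ < 1)
    (hP : ¬ ∀ f ∈ ch.P z hz, ∀ γ, wcomp (ch.gr n) γ f ∈ ch.P z hz) :
    ∃ (T H : Finset (𝒮.G × (Fin n → ℕ))) (F : 𝒮.G × (Fin n → ℕ) → ch.R n)
      (c : 𝒮.G × (Fin n → ℕ) → I → C) (g₀ : 𝒮.G), H ⊆ T ∧ H.Nonempty ∧
      (∀ h ∈ T, MvPowerSeries.constantCoeff (F h) = 1) ∧ (∀ h ∈ H, h.1 = g₀) ∧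
      ∀ᶠ ω in 𝒮.U, (∀ h ∈ T, c h (𝒮.inst ω) ≠ 0 ∧ ∏ k, z ω k ^ h.2 k ≠ 0) ∧
        (∀ h ∈ H, ∀ h' ∈ H, ‖c h (𝒮.inst ω)‖ = ‖c h' (𝒮.inst ω)‖) ∧
        (∀ h ∈ T, h ∉ H → ∀ h' ∈ H, ‖c h (𝒮.inst ω) * 𝒮.M h.1 ω‖ <
          ‖c h' (𝒮.inst ω) * 𝒮.M h'.1 ω‖) ∧
        ∑ h ∈ T, c h (𝒮.inst ω) * 𝒮.M h.1 ω * (∏ k, z ω k ^ h.2 k) * ch.evl z hz ω (F h) = 0 := by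
  classical
  push Not at hP
  obtain ⟨f, hf, γ, hγ⟩ := hP
  obtain ⟨T₀, F, hF1, hsum, hspan⟩ := graded_decomp (ch.gr n) f
  let fc : 𝒮.G × (Fin n → ℕ) → ch.R n := fun h => wcomp (ch.gr n) h f
  let T := T₀.filter fun h => fc h ∉ ch.P z hz
  let c : 𝒮.G × (Fin n → ℕ) → I → C := fun h i => ch.hval (fc h) i
  have hTne : T.Nonempty := by
    by_contra hne
    rw [Finset.not_nonempty_iff_eq_empty, Finset.filter_eq_empty_iff] at hne
    apply hγ
    have : Ideal.span ((fun h => wcomp (ch.gr n) h f) '' (T₀ : Set _)) ≤ ch.P z hz := by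
      rw [Ideal.span_le]
      rintro _ ⟨h, hh, rfl⟩
      have := hne hh
      rw [not_not] at this
      exact this
    exact this (hspan γ)
  have hsumP : ∑ h ∈ T, fc h * F h ∈ ch.P z hz := by
    have h1 : ∑ h ∈ T₀.filter (fun h => ¬ fc h ∉ ch.P z hz), fc h * F h ∈ ch.P z hz := by
      refine (ch.P z hz).sum_mem fun h hh => ?_
      rw [Finset.mem_filter, not_not] at hh
      exact (ch.P z hz).mul_mem_right _ hh.2
    have h2 : f = ∑ h ∈ T, fc h * F h +
        ∑ h ∈ T₀.filter (fun h => ¬ fc h ∉ ch.P z hz), fc h * F h := by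
      rw [Finset.sum_filter_add_sum_filter_not]; exact hsum
    have h3 : ∑ h ∈ T, fc h * F h =
        f - ∑ h ∈ T₀.filter (fun h => ¬ fc h ∉ ch.P z hz), fc h * F h := by
      rw [eq_sub_iff_add_eq]; exact h2.symm
    rw [h3]
    exact (ch.P z hz).sub_mem hf h1
  have hval : ∀ᶠ ω in 𝒮.U, ∀ h ∈ T, ch.evl z hz ω (fc h) =
      c h (𝒮.inst ω) * 𝒮.M h.1 ω * ∏ k, z ω k ^ h.2 k := by
    rw [Filter.eventually_all_finset]
    exact fun h _ => ch.evl_wcomp z hz f h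
  have hnz : ∀ᶠ ω in 𝒮.U, ∀ h ∈ T, ch.evl z hz ω (fc h) ≠ 0 := by
    rw [Filter.eventually_all_finset]
    intro h hh
    exact not_mem_aeKer.1 (Finset.mem_filter.1 hh).2
  let mx : Ω → Finset (𝒮.G × (Fin n → ℕ)) := fun ω => T.filter fun h =>
    ∀ h' ∈ T, ‖c h' (𝒮.inst ω) * 𝒮.M h'.1 ω‖ ≤ ‖c h (𝒮.inst ω) * 𝒮.M h.1 ω‖
  obtain ⟨⟨H, hHT⟩, hH⟩ := eventually_eq_of_finite 𝒮.U
    (fun ω => (⟨mx ω, Finset.mem_powerset.2 (Finset.filter_subset _ _)⟩ : T.powerset))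
  rw [Finset.mem_powerset] at hHT
  have hH' : ∀ᶠ ω in 𝒮.U, mx ω = H := by
    filter_upwards [hH] with ω hω
    exact congrArg Subtype.val hω
  have hHne : H.Nonempty := by
    obtain ⟨ω, hω⟩ := hH'.exists
    obtain ⟨h, hh, hmax⟩ := Finset.exists_max_image T
      (fun h => ‖c h (𝒮.inst ω) * 𝒮.M h.1 ω‖) hTne
    exact ⟨h, by rw [← hω]; exact Finset.mem_filter.2 ⟨hh, hmax⟩⟩
  obtain ⟨h₀, hh₀⟩ := hHne
  have heq : ∀ᶠ ω in 𝒮.U, ∀ h ∈ H, ∀ h' ∈ H, ‖c h (𝒮.inst ω) * 𝒮.M h.1 ω‖ =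
      ‖c h' (𝒮.inst ω) * 𝒮.M h'.1 ω‖ := by
    filter_upwards [hH'] with ω hω h hh h' hh'
    rw [← hω] at hh hh'
    exact le_antisymm ((Finset.mem_filter.1 hh').2 h (Finset.mem_filter.1 hh).1)
      ((Finset.mem_filter.1 hh).2 h' (Finset.mem_filter.1 hh').1)
  have hcne : ∀ᶠ ω in 𝒮.U, ∀ h ∈ T, c h (𝒮.inst ω) ≠ 0 ∧ ∏ k, z ω k ^ h.2 k ≠ 0 := by
    filter_upwards [hval, hnz] with ω h1 h2 h hh
    have := h2 h hh
    rw [h1 h hh] at this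
    exact ⟨left_ne_zero_of_mul (left_ne_zero_of_mul this), right_ne_zero_of_mul this⟩
  have hg : ∀ h ∈ H, h.1 = h₀.1 := by
    intro h hh
    rw [← sub_eq_zero]
    refine 𝒮.M_inj _ ⟨fun i => ‖c h₀ i‖ / ‖c h i‖, ?_⟩
    filter_upwards [heq, hcne] with ω h1 h2
    have h3 := h1 h hh h₀ hh₀
    have h4 := norm_ne_zero_iff.2 (h2 h (hHT hh)).1
    have h5 := norm_ne_zero_iff.2 (𝒮.M_ne h₀.1 ω)
    rw [norm_mul, norm_mul] at h3
    rw [𝒮.M_sub, norm_div, div_eq_div_iff h5 h4, mul_comm, h3]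
  refine ⟨T, H, F, c, h₀.1, hHT, ⟨h₀, hh₀⟩, fun h hh => hF1 h (Finset.mem_filter.1 hh).1, hg, ?_⟩
  filter_upwards [heq, hcne, hH', hval, hsumP] with ω h1 h2 h3 h4 h5
  refine ⟨h2, ?_, ?_, ?_⟩
  · intro h hh h' hh'
    have := h1 h hh h' hh'
    rw [norm_mul, norm_mul, hg h hh, hg h' hh'] at this
    exact mul_right_cancel₀ (norm_ne_zero_iff.2 (𝒮.M_ne h₀.1 ω)) this
  · intro h hh hnot h' hh'
    by_contra hcon
    push Not at hcon
    apply hnot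
    rw [← h3] at hh' ⊢
    refine Finset.mem_filter.2 ⟨hh, fun h'' hh'' => ?_⟩
    exact ((Finset.mem_filter.1 hh').2 h'' hh'').trans hcon
  · rw [map_sum] at h5
    rw [← h5]
    refine Finset.sum_congr rfl fun h hh => ?_
    rw [map_mul, h4 h hh]

theorem base_expansion_inj (n b : ℕ) (ν μ : Fin n → ℕ) (hν : ∀ k, ν k < b) (hμ : ∀ k, μ k < b)
    (h : ∑ k, ν k * b ^ (k : ℕ) = ∑ k, μ k * b ^ (k : ℕ)) : ν = μ := by
  induction n with
  | zero => exact Subsingleton.elim _ _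
  | succ n ih =>
    rw [Fin.sum_univ_succ, Fin.sum_univ_succ] at h
    have key : ∀ ν : Fin (n + 1) → ℕ, ∑ k : Fin n, ν k.succ * b ^ ((k.succ : Fin (n + 1)) : ℕ) =
        b * ∑ k : Fin n, ν k.succ * b ^ (k : ℕ) := by
      intro ν
      rw [Finset.mul_sum]
      refine Finset.sum_congr rfl fun k _ => ?_
      rw [Fin.val_succ, pow_succ]; ring
    rw [key, key] at h
    simp only [Fin.val_zero, pow_zero, mul_one] at h
    have h0 : ν 0 = μ 0 := by
      have := congrArg (· % b) h
      simp only [Nat.add_mul_mod_self_left] at this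
      rwa [Nat.mod_eq_of_lt (hν 0), Nat.mod_eq_of_lt (hμ 0)] at this
    have hb : 0 < b := lt_of_le_of_lt (Nat.zero_le _) (hν 0)
    rw [h0] at h
    have h1 := Nat.eq_of_mul_eq_mul_left hb (Nat.add_left_cancel h)
    have h2 := ih (fun k => ν k.succ) (fun k => μ k.succ) (fun k => hν _) (fun k => hμ _) h1
    funext k
    refine Fin.cases h0 (fun k => congrFun h2 k) k

/-- Weights of base-expansion type make a substitution `z (k + 1) = ζ k + z 0 ^ e k` separate finitely
many exponents by their order in `z 0`. -/
theorem exists_separating_weights (n : ℕ) (s : Finset (Fin (n + 1) → ℕ)) :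
    ∃ e : Fin n → ℕ, (∀ k, 0 < e k) ∧ ∀ ν ∈ s, ∀ μ ∈ s,
      ν 0 + ∑ k, e k * ν k.succ = μ 0 + ∑ k, e k * μ k.succ → ν = μ := by
  let b := 1 + s.sup fun ν => Finset.univ.sup ν
  have hb : ∀ ν ∈ s, ∀ k, ν k < b := by
    intro ν hν k
    have h1 : ν k ≤ Finset.univ.sup ν := Finset.le_sup (Finset.mem_univ k)
    have h2 := Finset.le_sup (f := fun ν : Fin (n + 1) → ℕ => Finset.univ.sup ν) hν
    simp only [b]
    omega
  refine ⟨fun k => b ^ ((k.succ : Fin (n + 1)) : ℕ), fun k => by positivity, ?_⟩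
  intro ν hν μ hμ h
  apply base_expansion_inj _ b ν μ (hb ν hν) (hb μ hμ)
  rw [Fin.sum_univ_succ, Fin.sum_univ_succ]
  simp only [Fin.val_zero, pow_zero, mul_one]
  simpa only [mul_comm] using h

theorem norm_eval₂_le_one {κ B : Type*} [CommRing B] (ev : B →+* C) (hev : ∀ b, ‖ev b‖ ≤ 1)
    (x : κ → C) (hx : ∀ h, ‖x h‖ ≤ 1) (p : MvPolynomial κ B) : ‖eval₂Hom ev x p‖ ≤ 1 := by
  induction p using MvPolynomial.induction_on with
  | C b => simpa using hev b
  | add p q hp hq =>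
    rw [map_add]
    exact (IsUltrametricDist.norm_add_le_max _ _).trans (max_le hp hq)
  | mul_X p h hp =>
    rw [map_mul, norm_mul]
    refine mul_le_one₀ hp (norm_nonneg _) ?_
    simpa using hx h

open Classical in
/-- Adjoin to a chart the ratios `c h * M (g h) / (c h₀ * M (g h₀))`: those of norm one, indexed by
`H`, enter as new coefficients, the others as new small parameters. -/
noncomputable def Chart.enlarge (ch : Chart 𝒮) {κ : Type} [Fintype κ] (g : κ → 𝒮.G) (c : κ → I → C)
    (H : Set κ) (h₀ : κ)
    (hlt : ∀ᶠ ω in 𝒮.U, ∀ h ∉ H, ‖c h (𝒮.inst ω) * 𝒮.M (g h) ω‖ <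
      ‖c h₀ (𝒮.inst ω) * 𝒮.M (g h₀) ω‖) : Chart 𝒮 where
  B := MvPolynomial κ ch.B
  S := ch.S ⊕ κ
  ev i := eval₂Hom (ch.ev i) fun h => if ‖c h i / c h₀ i‖ ≤ 1 then c h i / c h₀ i else 0
  hev i b := norm_eval₂_le_one _ (ch.hev i) _ (fun h => by split_ifs with hh; exacts [hh, by simp]) b
  wt := Sum.elim ch.wt fun h => g h - g h₀
  s ω := Sum.elim (ch.s ω) fun h => if h ∈ H then 0 else
    if ‖c h (𝒮.inst ω) * 𝒮.M (g h) ω / (c h₀ (𝒮.inst ω) * 𝒮.M (g h₀) ω)‖ < 1 then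
      c h (𝒮.inst ω) * 𝒮.M (g h) ω / (c h₀ (𝒮.inst ω) * 𝒮.M (g h₀) ω) else 0
  hs ω := by
    rintro (l | h)
    · exact ch.hs ω l
    · simp only [Sum.elim_inr]
      split_ifs with h1 h2
      · simp
      · exact h2
      · simp
  coef := Sum.elim ch.coef fun h i => if h ∈ H then 0 else c h i / c h₀ i
  hcoef := by
    rintro (l | h)
    · exact ch.hcoef l
    · filter_upwards [hlt] with ω hω
      simp only [Sum.elim_inr]
      split_ifs with h1 h2
      · simp
      · rw [𝒮.M_sub]
        field_simp
      · refine absurd ?_ h2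
        rw [norm_div]
        exact (div_lt_one ((norm_nonneg _).trans_lt (hω h h1))).2 (hω h h1)

end Dominant

/-! ### The dichotomy between few values and arcs -/

section Dichotomy

variable {C Ω I : Type*} [NormedField C] [CompleteSpace C] [IsUltrametricDist C] [CharZero C]
  {𝒮 : Scales C Ω I}

/-- Either almost all points deform along an arc respecting all relations, or (in the degenerate
case) they take boundedly many values in each instance. -/
theorem Chart.dichotomy (n : ℕ) : ∀ (ch : Chart 𝒮) [Nontrivial ch.B] (z : Ω → Fin n → C)
    (hz : ∀ ω k, ‖z ω k‖ < 1), (𝒮.flag ∧ FewValues 𝒮 z) ∨ ch.Flow z hz := by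
  classical
  induction n with
  | zero =>
    intro ch _ z hz
    by_cases hP : ∀ f ∈ ch.P z hz, ∀ γ, wcomp (ch.gr 0) γ f ∈ ch.P z hz
    · exact ch.flow_of_homogeneous z hz hP
    exfalso
    obtain ⟨T, H, F, c, g₀, hHT, ⟨h₀, hh₀⟩, hF, hg, hev⟩ := ch.nonhomogeneous_relation z hz hP
    obtain ⟨ω, h1, h2, h3, h4⟩ := hev.exists
    have hn1 : ∀ h ∈ T, ‖c h (𝒮.inst ω) * 𝒮.M h.1 ω * (∏ k, z ω k ^ h.2 k) *
        ch.evl z hz ω (F h)‖ = ‖c h (𝒮.inst ω) * 𝒮.M h.1 ω‖ := by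
      intro h hh
      have : ‖ch.evl z hz ω (F h)‖ = 1 := norm_evalHom_eq_one _ _ _ _ _ (hF h hh)
      rw [norm_mul, this, mul_one, Finset.univ_eq_empty, Finset.prod_empty, mul_one]
    refine sum_ne_zero_of_dominant T _ h₀ (hHT hh₀) (fun h hh hne => ?_) ?_ h4
    · rw [hn1 h hh, hn1 h₀ (hHT hh₀)]
      refine h3 h hh (fun hH => hne ?_) h₀ hh₀
      exact Prod.ext ((hg h hH).trans (hg h₀ hh₀).symm) (Subsingleton.elim _ _)
    · rw [← norm_ne_zero_iff, hn1 h₀ (hHT hh₀), norm_ne_zero_iff]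
      exact mul_ne_zero (h1 h₀ (hHT hh₀)).1 (𝒮.M_ne _ _)
  | succ n ih =>
    intro ch _ z hz
    by_cases hP : ∀ f ∈ ch.P z hz, ∀ γ, wcomp (ch.gr (n + 1)) γ f ∈ ch.P z hz
    · exact ch.flow_of_homogeneous z hz hP
    obtain ⟨T, H, F, c, g₀, hHT, hHne, hF, hg, hev⟩ := ch.nonhomogeneous_relation z hz hP
    obtain ⟨e, he, hinj⟩ := exists_separating_weights n (H.image Prod.snd)
    let w : 𝒮.G × (Fin (n + 1) → ℕ) → ℕ := fun h => h.2 0 + ∑ k, e k * h.2 k.succ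
    obtain ⟨h₀, hh₀, hmin⟩ := Finset.exists_min_image H w hHne
    have hwlt : ∀ h ∈ H, h ≠ h₀ → w h₀ < w h := by
      intro h hh hne
      refine lt_of_le_of_ne (hmin h hh) fun heq => hne ?_
      exact Prod.ext ((hg h hh).trans (hg h₀ hh₀).symm)
        (hinj _ (Finset.mem_image_of_mem _ hh) _ (Finset.mem_image_of_mem _ hh₀) heq.symm)
    have hlt' : ∀ᶠ ω in 𝒮.U, ∀ h : T, h ∉ {h : T | h.1 ∈ H} → ‖c h.1 (𝒮.inst ω) * 𝒮.M h.1.1 ω‖ <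
        ‖c (⟨h₀, hHT hh₀⟩ : T).1 (𝒮.inst ω) * 𝒮.M (⟨h₀, hHT hh₀⟩ : T).1.1 ω‖ := by
      filter_upwards [hev] with ω hω h hh
      exact hω.2.2.1 h.1 h.2 hh h₀ hh₀
    let ch' : Chart 𝒮 := ch.enlarge (κ := T) (fun h => h.1.1) (fun h => c h.1) {h | h.1 ∈ H}
      ⟨h₀, hHT hh₀⟩ hlt'
    have : Nontrivial ch'.B := inferInstanceAs (Nontrivial (MvPolynomial T ch.B))
    let β : ch.B →+* ch'.B := (MvPolynomial.C : ch.B →+* MvPolynomial T ch.B)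
    let ιl : ch.S → ch'.S := fun l => (Sum.inl l : ch.S ⊕ T)
    let ιr : T → ch'.S := fun h => (Sum.inr h : ch.S ⊕ T)
    let xv : T → ch'.B := fun h => (MvPolynomial.X h : MvPolynomial T ch.B)
    let ζ : Ω → Fin n → C := fun ω k => z ω k.succ - z ω 0 ^ e k
    have hζ : ∀ ω k, ‖ζ ω k‖ < 1 := by
      intro ω k
      refine lt_of_le_of_lt (b := max ‖z ω k.succ‖ ‖z ω 0 ^ e k‖) ?_ (max_lt (hz _ _) ?_)
      · simpa [ζ, sub_eq_add_neg] using
          IsUltrametricDist.norm_add_le_max (z ω k.succ) (-(z ω 0 ^ e k))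
      rw [norm_pow]
      exact pow_lt_one₀ (norm_nonneg _) (hz _ _) (he k).ne'
    let av : ch.S ⊕ Fin (n + 1) → PowerSeries (ch'.R n) := Sum.elim
      (fun l => PowerSeries.C (MvPowerSeries.X (Sum.inl (ιl l))))
      (Fin.cons PowerSeries.X fun k => PowerSeries.C (MvPowerSeries.X (Sum.inr k)) +
        PowerSeries.X ^ e k)
    obtain ⟨Θ, hΘC, hΘX, hΘ1⟩ := exists_subst β av (by
      rintro (l | k)
      · simp [av]
      · refine Fin.cases ?_ (fun k => ?_) k
        · simp [av]
        · simp [av, (he k).ne'])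
    choose evW hevle hevC hevX using fun ω => exists_eval_powerSeries (ch'.ev (𝒮.inst ω))
      (ch'.hev _) (Sum.elim (ch'.s ω) (ζ ω)) (ch'.pt_lt ζ hζ ω) (z ω 0) (hz ω 0)
    replace hevC : ∀ ω a, evW ω (PowerSeries.C a) = ch'.evl ζ hζ ω a := hevC
    have hΘl : ∀ l, Θ (MvPowerSeries.X (Sum.inl l)) =
        PowerSeries.C (MvPowerSeries.X (Sum.inl (ιl l))) := fun l => hΘX _
    have hΘ0 : Θ (MvPowerSeries.X (Sum.inr 0)) = PowerSeries.X := hΘX _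
    have hΘk : ∀ k : Fin n, Θ (MvPowerSeries.X (Sum.inr k.succ)) =
      PowerSeries.C (MvPowerSeries.X (Sum.inr k)) + PowerSeries.X ^ e k := fun k => hΘX _
    have hβ : ∀ i b, ch'.ev i (β b) = ch.ev i b := fun i b => eval₂Hom_C _ _ _
    have hsl : ∀ ω l, ch'.s ω (ιl l) = ch.s ω l := fun ω l => rfl
    have hevΘX : ∀ ω o, evW ω (Θ (MvPowerSeries.X o)) = ch.evl z hz ω (MvPowerSeries.X o) := by
      rintro ω (l | k)
      · rw [hΘl, hevC, ch'.evl_inl, ch.evl_inl, hsl]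
      · rw [ch.evl_inr]
        refine Fin.cases ?_ (fun k => ?_) k
        · rw [hΘ0, hevX]
        · rw [hΘk, map_add, map_pow, hevC, hevX, ch'.evl_inr]
          simp [ζ]
    have hevΘ : ∀ ω f, evW ω (Θ f) = ch.evl z hz ω f := by
      intro ω
      have : (evW ω).comp Θ = ch.evl z hz ω := by
        refine hom_ext_of_norm_le (fun f => hevle _ _) (fun f => norm_evalHom_le _ _ _ _ _) ?_ ?_ ?_
        · intro b
          rw [RingHom.comp_apply, hΘC, hevC, ch'.evl_C, ch.evl_C, hβ]
        · exact fun o => hevΘX ω o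
        · intro o
          rw [RingHom.comp_apply, hevΘX]
          rcases o with l | k
          · rw [ch.evl_inl]; exact ch.hs ω l
          · rw [ch.evl_inr]; exact hz ω k
      exact fun f => RingHom.congr_fun this f
    -- the relation divided by its dominant coefficient
    let t : T → PowerSeries (ch'.R n) := fun h => if h.1 = h₀ then 1 else
      if h.1 ∈ H then PowerSeries.C (MvPowerSeries.C (xv h))
      else PowerSeries.C (MvPowerSeries.X (Sum.inl (ιr h)))
    let mono : T → ch.R (n + 1) := fun h => ∏ k, MvPowerSeries.X (Sum.inr k) ^ h.1.2 k
    let g : PowerSeries (ch'.R n) := ∑ h : T, t h * Θ (mono h) * Θ (F h.1)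
    have hgP : g ∈ aeKer 𝒮.U evW := by
      rw [mem_aeKer]
      filter_upwards [hev, hlt'] with ω hω hω'
      obtain ⟨h1, h2, h3, h4⟩ := hω
      have hc0 := (h1 h₀ (hHT hh₀)).1
      have hM0 := 𝒮.M_ne h₀.1 ω
      have ht : ∀ h : T, c h₀ (𝒮.inst ω) * 𝒮.M h₀.1 ω * evW ω (t h) =
          c h.1 (𝒮.inst ω) * 𝒮.M h.1.1 ω := by
        intro h
        simp only [t]
        split_ifs with e1 e2
        · rw [map_one, mul_one, e1]
        · have hle : ‖c h.1 (𝒮.inst ω) / c h₀ (𝒮.inst ω)‖ ≤ 1 := by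
            rw [norm_div, h2 h.1 e2 h₀ hh₀, div_self (norm_ne_zero_iff.2 hc0)]
          have hv : ch'.ev (𝒮.inst ω) (xv h) =
              c h.1 (𝒮.inst ω) / c h₀ (𝒮.inst ω) := by
            refine (eval₂Hom_X' _ _ _).trans ?_
            rw [if_pos hle]
          rw [hevC, ch'.evl_C, hv, hg h.1 e2, hg h₀ hh₀]
          field_simp
        · have hlt1 : ‖c h.1 (𝒮.inst ω) * 𝒮.M h.1.1 ω / (c h₀ (𝒮.inst ω) * 𝒮.M h₀.1 ω)‖ < 1 := by
            rw [norm_div]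
            exact (div_lt_one ((norm_nonneg _).trans_lt (hω' h e2))).2 (hω' h e2)
          have hv : ch'.s ω (ιr h) =
              c h.1 (𝒮.inst ω) * 𝒮.M h.1.1 ω / (c h₀ (𝒮.inst ω) * 𝒮.M h₀.1 ω) := by
            refine (if_neg e2).trans ?_
            rw [if_pos hlt1]
          rw [hevC, ch'.evl_inl, hv]
          field_simp
      have hmono : ∀ h : T, evW ω (Θ (mono h)) = ∏ k, z ω k ^ h.1.2 k := by
        intro h
        rw [hevΘ, map_prod]
        refine Finset.prod_congr rfl fun k _ => ?_
        rw [map_pow, ch.evl_inr]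
      have : c h₀ (𝒮.inst ω) * 𝒮.M h₀.1 ω * evW ω g = 0 := by
        rw [← h4, map_sum, Finset.mul_sum, ← Finset.sum_coe_sort T]
        refine Finset.sum_congr rfl fun h _ => ?_
        rw [map_mul, map_mul, hmono, hevΘ, ← ht]
        ring
      exact (mul_eq_zero.1 this).resolve_left (mul_ne_zero hc0 hM0)
    -- reduction of the relation modulo all variables but the first
    let π : PowerSeries (ch'.R n) →+* PowerSeries ch'.B :=
      PowerSeries.map (MvPowerSeries.constantCoeff)
    have hπ : ∀ j f, MvPowerSeries.constantCoeff (PowerSeries.coeff j f) =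
        PowerSeries.coeff j (π f) := fun j f => by rw [PowerSeries.coeff_map]
    have hπm : ∀ h : T, π (Θ (mono h)) = PowerSeries.X ^ w h.1 := by
      intro h
      rw [map_prod, map_prod, Fin.prod_univ_succ]
      simp only [map_pow, hΘ0, hΘk, map_add]
      simp only [π, PowerSeries.map_C, PowerSeries.map_X, MvPowerSeries.constantCoeff_X, map_zero,
        zero_add, ← pow_mul, Finset.prod_pow_eq_pow_sum, ← pow_add, w]
    have hπ0 : ∀ h : T, PowerSeries.constantCoeff (π (Θ (F h.1))) = 1 := by
      intro h
      rw [← PowerSeries.coeff_zero_eq_constantCoeff_apply, ← hπ,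
        PowerSeries.coeff_zero_eq_constantCoeff_apply, hΘ1, hF h.1 h.2, map_one]
    have hπt : ∀ h : T, h.1 ∉ H → π (t h) = 0 := by
      intro h hh
      have h1 : h.1 ≠ h₀ := fun h1 => hh (h1 ▸ hh₀)
      simp only [t, if_neg h1, if_neg hh, π, PowerSeries.map_C, MvPowerSeries.constantCoeff_X,
        map_zero]
    have hterm : ∀ (h : T) (j : ℕ), j < w h.1 ∨ h.1 ∉ H →
        PowerSeries.coeff j (π (t h * Θ (mono h) * Θ (F h.1))) = 0 := by
      intro h j hj
      rw [π.map_mul, π.map_mul, hπm]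
      rcases hj with hj | hj
      · have : π (t h) * PowerSeries.X ^ w h.1 * π (Θ (F h.1)) =
            PowerSeries.X ^ w h.1 * (π (t h) * π (Θ (F h.1))) := by ring
        rw [this, PowerSeries.coeff_X_pow_mul', if_neg (by omega)]
      · rw [hπt h hj]; simp
    refine ch.step ch' β hβ ιl hsl (fun l => rfl) e z hz ζ hζ
      (fun ω k => by simp [ζ]) Θ hΘC hΘl hΘ0 hΘk evW hevC hevX hevΘ g hgP (w h₀) ?_ ?_
      (ih ch' ζ hζ)
    · intro j hj
      rw [hπ, map_sum, map_sum]
      refine Finset.sum_eq_zero fun h _ => hterm h j ?_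
      by_cases hh : h.1 ∈ H
      · exact Or.inl (hj.trans_le (hmin h.1 hh))
      · exact Or.inr hh
    · rw [hπ, map_sum, map_sum, Finset.sum_eq_single (⟨h₀, hHT hh₀⟩ : T)]
      · rw [π.map_mul, π.map_mul, hπm]
        have : t ⟨h₀, hHT hh₀⟩ = 1 := if_pos rfl
        rw [this, map_one, one_mul, PowerSeries.coeff_X_pow_mul', if_pos le_rfl, Nat.sub_self,
          PowerSeries.coeff_zero_eq_constantCoeff_apply]
        exact hπ0 ⟨h₀, hHT hh₀⟩
      · intro h _ hne
        apply hterm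
        by_cases hh : h.1 ∈ H
        · exact Or.inl (hwlt h.1 hh fun h1 => hne (Subtype.ext h1))
        · exact Or.inr hh
      · intro h; exact absurd (Finset.mem_univ _) h

end Dichotomy

/-! ### Splitting of exponents, directions, and roots of principal units -/

section Lattice

variable {Ω I : Type*} (inst : Ω → I) (U : Ultrafilter Ω)

/-- Integer-valued functions `h l` on `Ω` can be split, up to functions of the instance, along a
group `Q` none of whose nontrivial elements gives a function of the instance. -/
theorem exists_splitting {𝒥 : Type} [Fintype 𝒥] (h : 𝒥 → Ω → ℤ) :
    ∃ (Q : Type) (_ : AddCommGroup Q) (N : 𝒥 → Q) (s : Q →+ (𝒥 → ℤ)) (f : 𝒥 → I → ℤ),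
      (∀ᶠ ω in U, ∀ l, h l ω = ∑ l', s (N l) l' * h l' ω + f l (inst ω)) ∧
      (∀ q, (∃ c : I → ℤ, ∀ᶠ ω in U, ∑ l, s q l * h l ω = c (inst ω)) → q = 0) := by
  classical
  let L : Submodule ℤ (𝒥 → ℤ) :=
    { carrier := {β | ∃ c : I → ℤ, ∀ᶠ ω in U, ∑ l, β l * h l ω = c (inst ω)}
      zero_mem' := ⟨0, by simp⟩
      add_mem' := by
        rintro a b ⟨c, hc⟩ ⟨c', hc'⟩
        refine ⟨c + c', ?_⟩
        filter_upwards [hc, hc'] with ω h1 h2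
        simp [add_mul, Finset.sum_add_distrib, h1, h2]
      smul_mem' := by
        rintro k a ⟨c, hc⟩
        refine ⟨fun i => k * c i, ?_⟩
        filter_upwards [hc] with ω h1
        simp only [Pi.smul_apply, smul_eq_mul, mul_assoc, ← Finset.mul_sum, h1] }
  have hL : ∀ β, β ∈ L ↔ ∃ c : I → ℤ, ∀ᶠ ω in U, ∑ l, β l * h l ω = c (inst ω) := fun β => Iff.rfl
  have htf : Module.IsTorsionFree ℤ ((𝒥 → ℤ) ⧸ L) := by
    rw [Module.isTorsionFree_int_iff_isAddTorsionFree]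
    refine ⟨fun k hk x y hxy => ?_⟩
    obtain ⟨x, rfl⟩ := L.mkQ_surjective x
    obtain ⟨y, rfl⟩ := L.mkQ_surjective y
    have hxy' : k • L.mkQ x = k • L.mkQ y := hxy
    rw [← map_nsmul, ← map_nsmul, ← sub_eq_zero, ← map_sub, Submodule.mkQ_apply,
      Submodule.Quotient.mk_eq_zero, hL] at hxy'
    rw [← sub_eq_zero, ← map_sub, Submodule.mkQ_apply, Submodule.Quotient.mk_eq_zero, hL]
    obtain ⟨c, hc⟩ := hxy'
    refine ⟨fun i => c i / k, ?_⟩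
    filter_upwards [hc] with ω hω
    rw [← hω]
    have : ∑ l, (k • x - k • y) l * h l ω = (k : ℤ) * ∑ l, (x - y) l * h l ω := by
      rw [Finset.mul_sum]
      refine Finset.sum_congr rfl fun l _ => ?_
      rw [Pi.sub_apply, Pi.smul_apply, Pi.smul_apply, Pi.sub_apply, nsmul_eq_mul, nsmul_eq_mul]
      ring
    rw [this, Int.mul_ediv_cancel_left _ (by exact_mod_cast hk)]
  have hfree : Module.Free ℤ ((𝒥 → ℤ) ⧸ L) := inferInstance
  obtain ⟨s, hs⟩ := Module.projective_lifting_property L.mkQ LinearMap.id L.mkQ_surjective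
  have hs' : ∀ q, L.mkQ (s q) = q := fun q => LinearMap.congr_fun hs q
  have hN : ∀ l : 𝒥, ∃ c : I → ℤ, ∀ᶠ ω in U,
      ∑ l', (Pi.single l 1 - s (L.mkQ (Pi.single l 1)) : 𝒥 → ℤ) l' * h l' ω = c (inst ω) := by
    intro l
    rw [← hL, ← Submodule.Quotient.mk_eq_zero, ← Submodule.mkQ_apply, map_sub, hs', sub_self]
  choose f hf using hN
  refine ⟨(𝒥 → ℤ) ⧸ L, inferInstance, fun l => L.mkQ (Pi.single l 1), s.toAddMonoidHom, f, ?_, ?_⟩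
  · rw [Filter.eventually_all]
    intro l
    filter_upwards [hf l] with ω hω
    rw [← hω]
    simp [sub_mul, Finset.sum_sub_distrib, Pi.single_apply, ite_mul]
  · intro q hq
    rw [← hs' q, Submodule.mkQ_apply, Submodule.Quotient.mk_eq_zero, hL]
    exact hq

/-- If `v` is not a function of the instance, differences of its values within the instances
provide an integral direction with a coordinate prime to `p`. -/
theorem exists_direction (p : ℕ) [hp : Fact p.Prime] {n : ℕ} (v : Ω → Fin n → ℤ) (E : Set Ω)
    (hE : E ∈ U) (hv : ¬ ∃ f : I → Fin n → ℤ, ∀ᶠ ω in U, v ω = f (inst ω)) :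
    ∃ (e : I → Fin n → ℤ) (k₀ : Fin n), ∀ᶠ ω in U, ¬ (p : ℤ) ∣ e (inst ω) k₀ ∧
      ∃ ω' ∈ E, ∃ ω'' ∈ E, inst ω' = inst ω ∧ inst ω'' = inst ω ∧ ∃ N : ℤ, N ≠ 0 ∧
        ∀ k, N * e (inst ω) k = v ω' k - v ω'' k := by
  classical
  let Pr : I → Prop := fun i => ∃ ω' ∈ E, ∃ ω'' ∈ E, inst ω' = i ∧ inst ω'' = i ∧ v ω' ≠ v ω''
  have hPr : ∀ᶠ ω in U, Pr (inst ω) := by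
    by_contra hcon
    rw [← Ultrafilter.eventually_not] at hcon
    apply hv
    refine ⟨fun i => if hi : ∃ ω ∈ E, inst ω = i then v hi.choose else 0, ?_⟩
    filter_upwards [hcon, hE] with ω h1 h2
    have hi : ∃ ω' ∈ E, inst ω' = inst ω := ⟨ω, h2, rfl⟩
    rw [dif_pos hi]
    by_contra hne
    exact h1 ⟨ω, h2, hi.choose, hi.choose_spec.1, rfl, hi.choose_spec.2, hne⟩
  have key : ∀ i, Pr i → ∃ (e : Fin n → ℤ) (k : Fin n), ¬ (p : ℤ) ∣ e k ∧
      ∃ ω' ∈ E, ∃ ω'' ∈ E, inst ω' = i ∧ inst ω'' = i ∧ ∃ N : ℤ, N ≠ 0 ∧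
        ∀ k, N * e k = v ω' k - v ω'' k := by
    rintro i ⟨ω', h1, ω'', h2, h3, h4, hne⟩
    have hx : ∃ k, v ω' k - v ω'' k ≠ 0 := by
      by_contra hcon
      push Not at hcon
      exact hne (funext fun k => sub_eq_zero.1 (hcon k))
    obtain ⟨g, hg, hgcd⟩ := Finset.extract_gcd (fun k => v ω' k - v ω'' k)
      (s := Finset.univ) (Finset.univ_nonempty_iff.2 ⟨hx.choose⟩)
    have hG : (Finset.univ.gcd fun k => v ω' k - v ω'' k) ≠ 0 := by
      intro h0
      rw [Finset.gcd_eq_zero_iff] at h0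
      exact hx.choose_spec (h0 _ (Finset.mem_univ _))
    have hk : ∃ k, ¬ (p : ℤ) ∣ g k := by
      by_contra hcon
      push Not at hcon
      have : (p : ℤ) ∣ Finset.univ.gcd g := Finset.dvd_gcd fun k _ => hcon k
      rw [hgcd] at this
      have h1 := Int.isUnit_iff.1 (isUnit_of_dvd_one this)
      have h2 := hp.out.two_le
      omega
    obtain ⟨k, hk⟩ := hk
    exact ⟨g, k, hk, ω', h1, ω'', h2, h3, h4, _, hG, fun k => (hg k (Finset.mem_univ k)).symm⟩
  have hne : Nonempty (Fin n) := by
    obtain ⟨ω, hω⟩ := hPr.exists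
    obtain ⟨_, k, _⟩ := key _ hω
    exact ⟨k⟩
  choose! e k he using key
  obtain ⟨k₀, hk₀⟩ := eventually_eq_of_finite U fun ω => k (inst ω)
  refine ⟨e, k₀, ?_⟩
  filter_upwards [hPr, hk₀] with ω h1 h2
  rw [← h2]
  exact he _ h1

end Lattice

section Units

variable {C : Type*} [NormedField C] [IsUltrametricDist C]

theorem norm_eq_one_of_sub_one {u : C} {ρ : ℝ} (hρ : ρ < 1) (hu : ‖u - 1‖ ≤ ρ) : ‖u‖ = 1 := by
  have h1 : u = (u - 1) + 1 := by ring
  have h2 : ‖u - 1‖ ≠ ‖(1 : C)‖ := by rw [norm_one]; linarith [hu.trans_lt hρ] |> ne_of_lt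
  rw [h1, IsUltrametricDist.norm_add_eq_max_of_norm_ne_norm h2, norm_one]
  exact max_eq_right (hu.trans hρ.le)

/-- The subgroup of principal units of level `ρ`. -/
def nearOne (C : Type*) [NormedField C] [IsUltrametricDist C] (ρ : ℝ) (hρ0 : 0 ≤ ρ) (hρ : ρ < 1) :
    Subgroup Cˣ where
  carrier := {u | ‖(u : C) - 1‖ ≤ ρ}
  one_mem' := by simpa using hρ0
  mul_mem' := by
    intro a b ha hb
    have ha' : ‖(a : C) - 1‖ ≤ ρ := ha
    have hb' : ‖(b : C) - 1‖ ≤ ρ := hb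
    change ‖((a * b : Cˣ) : C) - 1‖ ≤ ρ
    have : ((a * b : Cˣ) : C) - 1 = a * (b - 1) + (a - 1) := by push_cast; ring
    rw [this]
    refine (IsUltrametricDist.norm_add_le_max _ _).trans (max_le ?_ ha')
    rw [norm_mul, norm_eq_one_of_sub_one hρ ha', one_mul]
    exact hb'
  inv_mem' := by
    intro a ha
    have ha' : ‖(a : C) - 1‖ ≤ ρ := ha
    change ‖((a⁻¹ : Cˣ) : C) - 1‖ ≤ ρ
    have h1 : ((a⁻¹ : Cˣ) : C) - 1 = - ((a : C) - 1) * (a : C)⁻¹ := by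
      rw [Units.val_inv_eq_inv_val]
      field_simp
      ring
    rw [h1, norm_mul, norm_neg, norm_inv, norm_eq_one_of_sub_one hρ ha', inv_one, mul_one]
    exact ha'

theorem norm_sub_one_mul_zpow {ρ : ℝ} (hρ0 : 0 ≤ ρ) (hρ : ρ < 1) {u r : C} (hu : ‖u - 1‖ ≤ ρ)
    (hr : ‖r - 1‖ ≤ ρ) (e : ℤ) : ‖u * r ^ e - 1‖ ≤ ρ := by
  have hu0 : u ≠ 0 := norm_ne_zero_iff.1 (by rw [norm_eq_one_of_sub_one hρ hu]; exact one_ne_zero)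
  have hr0 : r ≠ 0 := norm_ne_zero_iff.1 (by rw [norm_eq_one_of_sub_one hρ hr]; exact one_ne_zero)
  have h1 : Units.mk0 u hu0 ∈ nearOne C ρ hρ0 hρ := hu
  have h2 : Units.mk0 r hr0 ∈ nearOne C ρ hρ0 hρ := hr
  have h3 : ‖((Units.mk0 u hu0 * Units.mk0 r hr0 ^ e : Cˣ) : C) - 1‖ ≤ ρ :=
    mul_mem h1 (zpow_mem h2 e)
  simpa using h3

/-- Among the `N`-th roots of `u`, the one nearest to `1` is as close to `1` as `u` is. -/
theorem exists_root_nat [IsAlgClosed C] (N : ℕ) (hN : ‖(N : C)‖ = 1) (u : C) :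
    ∃ r : C, r ^ N = u ∧ ‖r - 1‖ ≤ ‖u - 1‖ := by
  by_cases hu : u = 1
  · exact ⟨1, by simp [hu], by simp⟩
  have hN0 : N ≠ 0 := by rintro rfl; simp at hN
  let f : Polynomial C := Polynomial.X ^ N - Polynomial.C u
  have hf1 : f.eval 1 ≠ 0 := by
    simp only [f, Polynomial.eval_sub, Polynomial.eval_pow, Polynomial.eval_X, one_pow,
      Polynomial.eval_C]
    exact sub_ne_zero.2 (Ne.symm hu)
  have hf0 : f ≠ 0 := by rintro h; simp [h] at hf1
  have key := (IsAlgClosed.splits f).eval_derivative_div_eval_of_ne_zero hf1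
  have hd : f.derivative.eval 1 = N := by simp [f, Polynomial.derivative_X_pow]
  by_contra hcon
  push Not at hcon
  have hbig : ∀ r ∈ f.roots, ‖1 / (1 - r)‖ < ‖u - 1‖⁻¹ := by
    intro r hr
    rw [Polynomial.mem_roots hf0, Polynomial.IsRoot] at hr
    simp only [f, Polynomial.eval_sub, Polynomial.eval_pow, Polynomial.eval_X,
      Polynomial.eval_C, sub_eq_zero] at hr
    have h1 := hcon r hr
    rw [norm_div, norm_one, one_div, ← norm_neg, neg_sub]
    exact inv_strictAnti₀ (norm_pos_iff.2 (sub_ne_zero.2 hu)) h1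
  have hlt : ∀ s : Multiset C, (∀ r ∈ s, ‖1 / (1 - r)‖ < ‖u - 1‖⁻¹) →
      ‖(s.map fun x => 1 / (1 - x)).sum‖ < ‖u - 1‖⁻¹ := by
    intro s
    induction s using Multiset.induction_on with
    | empty => intro _; simpa using sub_ne_zero.2 hu
    | cons a s ih =>
      intro h
      rw [Multiset.map_cons, Multiset.sum_cons]
      exact (IsUltrametricDist.norm_add_le_max _ _).trans_lt (max_lt (h a (by simp))
        (ih fun r hr => h r (by simp [hr])))
  have h2 := hlt _ hbig
  rw [← key, hd, norm_div, hN, one_div] at h2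
  simp only [f, Polynomial.eval_sub, Polynomial.eval_pow, Polynomial.eval_X, one_pow,
      Polynomial.eval_C] at h2
  rw [← norm_neg (1 - u), neg_sub] at h2
  exact lt_irrefl _ h2

theorem exists_root_int [IsAlgClosed C] (e : ℤ) (he : ‖(e : C)‖ = 1) {ρ : ℝ} (hρ0 : 0 ≤ ρ)
    (hρ : ρ < 1) (u : C) (hu : ‖u - 1‖ ≤ ρ) : ∃ r : C, r ^ e = u ∧ ‖r - 1‖ ≤ ρ := by
  obtain ⟨N, rfl | rfl⟩ := e.eq_nat_or_neg
  · obtain ⟨r, h1, h2⟩ := exists_root_nat N (by simpa using he) u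
    exact ⟨r, by simpa using h1, h2.trans hu⟩
  · obtain ⟨r, h1, h2⟩ := exists_root_nat N (by simpa using he) u
    refine ⟨r⁻¹, by simpa using h1, ?_⟩
    have := norm_sub_one_mul_zpow hρ0 hρ (u := 1) (r := r) (by simpa using hρ0) (h2.trans hu) (-1)
    simpa using this

end Units

/-! ### Binomial series with indeterminate exponent -/

section BinomialPowers

variable {C : Type*} [NormedField C] [IsUltrametricDist C]

/-- A power series in one variable whose coefficients specialise to those of `(1 + b X) ^ a` is
mapped to such a power by every homomorphism with bounded coefficients. -/
theorem CoeffBdd.map_binomial {𝔅 σ : Type*} [CommRing 𝔅] {Ψ : MvPowerSeries σ 𝔅 →+* PowerSeries C}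
    (h : CoeffBdd Ψ) (φ : 𝔅 →+* C) (hC : ∀ b, Ψ (MvPowerSeries.C b) = PowerSeries.C (φ b)) (s : σ)
    (hs : ‖PowerSeries.constantCoeff (Ψ (MvPowerSeries.X s))‖ < 1) (f : PowerSeries 𝔅) (a : ℕ)
    (b : C) (hf : ∀ N, φ (PowerSeries.coeff N f) = b ^ N * a.choose N) :
    Ψ (PowerSeries.toMvPowerSeries s f) =
      (1 + PowerSeries.C b * Ψ (MvPowerSeries.X s)) ^ a := by
  have key : ∀ N ≥ a + 1, Ψ (PowerSeries.toMvPowerSeries s f) -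
      (1 + PowerSeries.C b * Ψ (MvPowerSeries.X s)) ^ a =
      Ψ (MvPowerSeries.X s ^ N *
        PowerSeries.toMvPowerSeries s (PowerSeries.mk fun i ↦ PowerSeries.coeff (i + N) f)) := by
    intro N hN
    have h1 := congrArg (fun g => Ψ (PowerSeries.toMvPowerSeries s g))
      (f.eq_X_pow_mul_shift_add_trunc N)
    simp only [map_add, map_mul, map_pow, PowerSeries.toMvPowerSeries_X] at h1
    have h2 : Ψ (PowerSeries.toMvPowerSeries s (f.trunc N : PowerSeries 𝔅)) =
        (1 + PowerSeries.C b * Ψ (MvPowerSeries.X s)) ^ a := by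
      have h3 : ∀ q : Polynomial 𝔅, Ψ (PowerSeries.toMvPowerSeries s (q : PowerSeries 𝔅)) =
          Polynomial.eval₂ ((PowerSeries.C (R := C)).comp φ) (Ψ (MvPowerSeries.X s)) q := by
        intro q
        induction q using Polynomial.induction_on' with
        | add q q' hq hq' => rw [Polynomial.coe_add, map_add, map_add, hq, hq', Polynomial.eval₂_add]
        | monomial k b =>
          rw [Polynomial.eval₂_monomial, Polynomial.coe_monomial,
            PowerSeries.monomial_eq_C_mul_X_pow, map_mul, map_pow, PowerSeries.toMvPowerSeries_X,
            PowerSeries.toMvPowerSeries_C, map_mul, map_pow, hC, RingHom.comp_apply]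
      rw [h3, PowerSeries.eval₂_trunc_eq_sum_range, add_comm (1 : PowerSeries C), add_pow,
        ← Finset.sum_subset (Finset.range_subset_range.2 hN)]
      · refine Finset.sum_congr rfl fun k _ => ?_
        rw [RingHom.comp_apply, hf, map_mul, map_pow, map_natCast, one_pow, mul_pow]
        ring
      · intro k _ hk
        rw [RingHom.comp_apply, hf, Nat.choose_eq_zero_of_lt (by simpa using hk)]
        simp
    rw [h1, h2, map_mul, map_pow]
    ring
  rw [← sub_eq_zero]
  refine PowerSeries.eq_zero_of_gaussLe fun j => ?_
  obtain ⟨ρ, hρ, r, hr0, hr1, K, hK, hN⟩ := h.eq_zero_of_mem_pow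
    (fun _ : Unit => (MvPowerSeries.X s : MvPowerSeries σ 𝔅)) (fun _ => hs) j
  refine ⟨ρ, hρ, r, hr0, hr1, K, a + 1, fun N hNN => ?_⟩
  rw [key N hNN]
  refine hN N _ (Ideal.mul_mem_right _ _ (Ideal.pow_mem_pow (Ideal.subset_span (Set.mem_range_self ())) N))

end BinomialPowers

section PadicBinomial

variable (p : ℕ) [hp : Fact p.Prime]

/-- `p ^ j / j!` is a `p`-adic integer. -/
theorem exists_pow_eq_mul_factorial (j : ℕ) :
    ∃ κ : ℤ_[p], κ * (j.factorial : ℤ_[p]) = (p : ℤ_[p]) ^ j := by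
  have h1 : padicValNat p j.factorial ≤ j := by
    have h2 := sub_one_mul_padicValNat_factorial (p := p) j
    have h3 := hp.out.two_le
    have h4 : 1 * padicValNat p j.factorial ≤ (p - 1) * padicValNat p j.factorial :=
      Nat.mul_le_mul_right _ (by omega)
    omega
  have h5 : (j.factorial : ℤ_[p]) ∣ (p : ℤ_[p]) ^ j := by
    have h6 := Nat.ordProj_mul_ordCompl_eq_self j.factorial p
    have h7 : IsUnit ((j.factorial / p ^ j.factorial.factorization p : ℕ) : ℤ_[p]) := by
      rw [PadicInt.isUnit_iff, PadicInt.norm_natCast_eq_one_iff]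
      exact (hp.out.coprime_iff_not_dvd).2 (Nat.not_dvd_ordCompl hp.out (Nat.factorial_ne_zero j))
    rw [← h6]
    rw [Nat.cast_mul, h7.mul_right_dvd, Nat.cast_pow, Nat.factorization_def _ hp.out]
    exact pow_dvd_pow _ h1
  obtain ⟨κ, hκ⟩ := h5
  exact ⟨κ, by rw [hκ, mul_comm]⟩

/-- The `p`-adic number `p ^ j / j!`. -/
noncomputable def padicKappa (j : ℕ) : ℤ_[p] := (exists_pow_eq_mul_factorial p j).choose

theorem padicKappa_mul (j : ℕ) : padicKappa p j * (j.factorial : ℤ_[p]) = (p : ℤ_[p]) ^ j :=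
  (exists_pow_eq_mul_factorial p j).choose_spec

/-- The series `(1 + p X) ^ A = ∑ κ_N A (A - 1) ⋯ (A - N + 1) X ^ N` with indeterminate exponent. -/
noncomputable def genBinomial {𝔅 : Type*} [CommRing 𝔅] (c : ℤ_[p] →+* 𝔅) (A : 𝔅) : PowerSeries 𝔅 :=
  PowerSeries.mk fun N => c (padicKappa p N) * (descPochhammer 𝔅 N).eval A

theorem map_coeff_genBinomial {𝔅 C : Type*} [CommRing 𝔅] [Field C] [CharZero C] (c : ℤ_[p] →+* 𝔅)
    (A : 𝔅) (φ : 𝔅 →+* C) (a : ℕ) (hA : φ A = a) (N : ℕ) :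
    φ (PowerSeries.coeff N (genBinomial p c A)) = (p : C) ^ N * a.choose N := by
  have h1 : φ ((descPochhammer 𝔅 N).eval A) = (a.descFactorial N : C) := by
    rw [← descPochhammer_eval_eq_descFactorial, ← hA, ← descPochhammer_map φ,
      Polynomial.eval_map, Polynomial.eval₂_hom]
  have h2 := congrArg (fun x => φ (c x)) (padicKappa_mul p N)
  simp only [map_mul, map_pow, map_natCast] at h2
  rw [genBinomial, PowerSeries.coeff_mk, map_mul, h1, Nat.descFactorial_eq_factorial_mul_choose,
    ← h2]
  push_cast
  ring

end PadicBinomial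

/-! ### Scales attached to exponents and principal units -/

section ScalesConstruction

variable {C Ω I : Type*} [NormedField C]

theorem norm_intCast_eq_one (p : ℕ) [hp : Fact p.Prime] [NormedAlgebra ℚ_[p] C] {e : ℤ} (he : ¬ (p : ℤ) ∣ e) : ‖(e : C)‖ = 1 := by
  have h1 : (e : C) = algebraMap ℚ_[p] C e := by simp
  rw [h1, norm_algebraMap', Padic.norm_intCast_eq_one_iff]
  exact ((Nat.prime_iff_prime_int.1 hp.out).coprime_iff_not_dvd.2 he).symm

theorem norm_natCast_p_lt_one (p : ℕ) [hp : Fact p.Prime] [NormedAlgebra ℚ_[p] C] : ‖(p : C)‖ < 1 := by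
  have h1 : (p : C) = algebraMap ℚ_[p] C p := by simp
  rw [h1, norm_algebraMap']
  exact Padic.norm_p_lt_one

theorem norm_natCast_p_pos (p : ℕ) [hp : Fact p.Prime] [NormedAlgebra ℚ_[p] C] : 0 < ‖(p : C)‖ := by
  have h1 : (p : C) = algebraMap ℚ_[p] C p := by simp
  rw [h1, norm_algebraMap', norm_pos_iff]
  exact_mod_cast hp.out.ne_zero

/-- Integer exponents `v` and principal units `u` give rise to scales governing the monomials with
exponents `χ l`. The direction `e` is proportional to a difference of exponents at two points of one
instance, and the unit `r` is chosen so that `r ^ e` agrees with `u` in one coordinate. -/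
theorem exists_scales (p : ℕ) [hp : Fact p.Prime] [NormedAlgebra ℚ_[p] C]
    [IsUltrametricDist C] [IsAlgClosed C] {n : ℕ} {𝒥 : Type} [Fintype 𝒥] (inst : Ω → I) (U : Ultrafilter Ω)
    (χ : 𝒥 → I → Fin n → ℤ) (π : C) (hπ0 : 0 < ‖π‖) (hπ1 : ‖π‖ < 1) (v : Ω → Fin n → ℤ)
    (u : Ω → Fin n → C) (ρ : ℝ) (hρ0 : 0 ≤ ρ) (hρ1 : ρ < 1) (hu : ∀ ω k, ‖u ω k - 1‖ ≤ ρ) :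
    ∃ (𝒮 : Scales C Ω I) (_ : 𝒮.inst = inst) (_ : 𝒮.U = U) (N : 𝒥 → 𝒮.G) (f : 𝒥 → I → ℤ)
      (e : I → Fin n → ℤ) (r : Ω → C), (∀ ω, ‖r ω - 1‖ ≤ ρ) ∧
      (∀ᶠ ω in U, ∀ l, π ^ (∑ k, χ l (inst ω) k * v ω k) * r ω ^ (∑ k, χ l (inst ω) k * e (inst ω) k)
        = π ^ f l (inst ω) * 𝒮.M (N l) ω) ∧
      (∀ᶠ ω in U, ∀ l, 𝒮.lam (N l) (inst ω) = ∑ k, χ l (inst ω) k * e (inst ω) k) ∧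
      (𝒮.flag → ∃ f : I → Fin n → ℤ, ∀ᶠ ω in U, v ω = f (inst ω)) ∧
      (𝒮.flag → ∀ ω, r ω = 1) ∧
      (¬ 𝒮.flag → ∃ k₀, ∀ᶠ ω in U, e (inst ω) k₀ ≠ 0 ∧ r ω ^ e (inst ω) k₀ = u ω k₀) ∧
      (∀ k, (∀ᶠ ω in U, v ω k = 0) → ∀ᶠ ω in U, e (inst ω) k = 0) := by
  classical
  obtain ⟨Q, _, N, s, f, hsplit, hinj⟩ := exists_splitting inst U
    (fun l ω => ∑ k, χ l (inst ω) k * v ω k)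
  have hπ : π ≠ 0 := norm_pos_iff.1 hπ0
  -- everything except the choice of `e` and `r`
  have main : ∀ (flag : Prop) (hflag : flag → ∃ f : I → Fin n → ℤ, ∀ᶠ ω in U, v ω = f (inst ω))
      (e : I → Fin n → ℤ) (r : Ω → C) (hr : ∀ ω, ‖r ω - 1‖ ≤ ρ)
      (hl : ∀ᶠ ω in U, ∀ l, ∑ l', s (N l) l' * ∑ k, χ l' (inst ω) k * e (inst ω) k =
        ∑ k, χ l (inst ω) k * e (inst ω) k),
      ∃ (𝒮 : Scales C Ω I) (_ : 𝒮.inst = inst) (_ : 𝒮.U = U) (_ : 𝒮.flag = flag) (N : 𝒥 → 𝒮.G)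
        (f : 𝒥 → I → ℤ),
      (∀ᶠ ω in U, ∀ l, π ^ (∑ k, χ l (inst ω) k * v ω k) * r ω ^ (∑ k, χ l (inst ω) k * e (inst ω) k)
        = π ^ f l (inst ω) * 𝒮.M (N l) ω) ∧
      (∀ᶠ ω in U, ∀ l, 𝒮.lam (N l) (inst ω) = ∑ k, χ l (inst ω) k * e (inst ω) k) := by
    intro flag hflag e r hr hl
    have hr1 : ∀ ω, ‖r ω‖ = 1 := fun ω => norm_eq_one_of_sub_one hρ1 (hr ω)
    have hr0 : ∀ ω, r ω ≠ 0 := fun ω => norm_pos_iff.1 (by rw [hr1]; exact one_pos)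
    let lam : Q →+ (I → ℤ) :=
      { toFun := fun q i => ∑ l', s q l' * ∑ k, χ l' i k * e i k
        map_zero' := by ext i; simp
        map_add' := fun q q' => by ext i; simp [add_mul, Finset.sum_add_distrib] }
    let E : Q → Ω → ℤ := fun q ω => ∑ l, s q l * ∑ k, χ l (inst ω) k * v ω k
    let 𝒮 : Scales C Ω I :=
      { inst := inst
        U := U
        G := Q
        M := fun q ω => π ^ E q ω * r ω ^ lam q (inst ω)
        M_zero := fun ω => by simp [E]
        M_add := fun q q' ω => by
          have h1 : E (q + q') ω = E q ω + E q' ω := by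
            simp [E, add_mul, Finset.sum_add_distrib]
          rw [h1, map_add, Pi.add_apply, zpow_add₀ hπ, zpow_add₀ (hr0 ω)]
          ring
        M_inj := by
          rintro q ⟨c, hc⟩
          apply hinj
          refine ⟨fun i => if hi : ∃ t : ℤ, ‖π‖ ^ t = c i then hi.choose else 0, ?_⟩
          filter_upwards [hc] with ω hω
          rw [norm_mul, norm_zpow, norm_zpow, hr1, one_zpow, mul_one] at hω
          have hi : ∃ t : ℤ, ‖π‖ ^ t = c (inst ω) := ⟨_, hω⟩
          rw [dif_pos hi]
          exact zpow_right_injective₀ hπ0 hπ1.ne (hω.trans hi.choose_spec.symm)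
        lam := lam
        flag := flag
        flag_eq := by
          intro hfl q
          obtain ⟨g, hg⟩ := hflag hfl
          apply hinj
          refine ⟨fun i => ∑ l, s q l * ∑ k, χ l i k * g i k, ?_⟩
          filter_upwards [hg] with ω hω
          rw [hω] }
    refine ⟨𝒮, rfl, rfl, rfl, N, f, ?_, hl⟩
    filter_upwards [hsplit, hl] with ω h1 h2 l
    change _ = π ^ f l (inst ω) * (π ^ E (N l) ω * r ω ^ lam (N l) (inst ω))
    have h3 : lam (N l) (inst ω) = ∑ k, χ l (inst ω) k * e (inst ω) k := h2 l
    rw [h3, h1 l, zpow_add₀ hπ]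
    ring
  by_cases hv : ∃ f : I → Fin n → ℤ, ∀ᶠ ω in U, v ω = f (inst ω)
  · obtain ⟨𝒮, h1, h2, h3, N', f', h4, h5⟩ := main True (fun _ => hv) 0 (fun _ => 1) (fun _ => by simpa using hρ0)
      (Filter.Eventually.of_forall fun ω l => by simp)
    refine ⟨𝒮, h1, h2, N', f', 0, fun _ => 1, fun _ => by simpa using hρ0, h4, h5, fun _ => hv, fun _ _ => rfl,
      fun h => absurd (by rw [h3]; trivial) h, fun k _ => by simp⟩
  · let E : Set Ω := {ω | (∀ l, ∑ k, χ l (inst ω) k * v ω k =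
      ∑ l', s (N l) l' * (∑ k, χ l' (inst ω) k * v ω k) + f l (inst ω)) ∧
      ∀ k, (∀ᶠ ω in U, v ω k = 0) → v ω k = 0}
    have hE : E ∈ U := by
      have : ∀ᶠ ω in U, ∀ k, (∀ᶠ ω in U, v ω k = 0) → v ω k = 0 := by
        rw [Filter.eventually_all]
        intro k
        by_cases hk : ∀ᶠ ω in U, v ω k = 0
        · filter_upwards [hk] with ω h _ using h
        · exact Filter.Eventually.of_forall fun ω h => absurd h hk
      exact hsplit.and this
    obtain ⟨e, k₀, he⟩ := exists_direction inst U p v E hE hv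
    have hroot : ∀ ω, ∃ r : C, ‖r - 1‖ ≤ ρ ∧ (¬ (p : ℤ) ∣ e (inst ω) k₀ →
        r ^ e (inst ω) k₀ = u ω k₀) := by
      intro ω
      by_cases hd : (p : ℤ) ∣ e (inst ω) k₀
      · exact ⟨1, by simpa using hρ0, fun h => absurd hd h⟩
      · obtain ⟨r, h1, h2⟩ := exists_root_int _ (norm_intCast_eq_one p hd) hρ0 hρ1 (u ω k₀) (hu ω k₀)
        exact ⟨r, h2, fun _ => h1⟩
    choose r hr1 hr2 using hroot
    obtain ⟨𝒮, h1, h2, h3, N', f', h4, h5⟩ := main False False.elim e r hr1 (by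
      filter_upwards [he] with ω hω l
      obtain ⟨-, ω', h1, ω'', h2, hi1, hi2, K, hK, hKe⟩ := hω
      have h3 := h1.1 l
      have h4 := h2.1 l
      simp only [hi1, hi2] at h3 h4
      have h5 : ∀ l, ∑ k, χ l (inst ω) k * v ω' k - ∑ k, χ l (inst ω) k * v ω'' k =
          K * ∑ k, χ l (inst ω) k * e (inst ω) k := by
        intro l
        rw [← Finset.sum_sub_distrib, Finset.mul_sum]
        refine Finset.sum_congr rfl fun k _ => ?_
        rw [← mul_sub, ← hKe]
        ring
      have h6 := h5 l
      apply mul_left_cancel₀ hK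
      rw [← h6, h3, h4, Finset.mul_sum]
      have h7 : ∀ l', K * (s (N l) l' * ∑ k, χ l' (inst ω) k * e (inst ω) k) =
          s (N l) l' * (∑ k, χ l' (inst ω) k * v ω' k) -
          s (N l) l' * (∑ k, χ l' (inst ω) k * v ω'' k) := by
        intro l'
        rw [← mul_sub, h5]
        ring
      simp only [h7, Finset.sum_sub_distrib]
      ring)
    refine ⟨𝒮, h1, h2, N', f', e, r, hr1, h4, h5, fun h => absurd h (by rw [h3]; exact id),
      fun h => absurd h (by rw [h3]; exact id), fun _ => ⟨k₀, ?_⟩, ?_⟩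
    · filter_upwards [he] with ω hω
      refine ⟨fun h0 => hω.1 (by rw [h0]; exact dvd_zero _), hr2 ω hω.1⟩
    · intro k hk
      filter_upwards [he] with ω hω
      obtain ⟨-, ω', h1, ω'', h2, hi1, hi2, K, hK, hKe⟩ := hω
      have h3 := hKe k
      rw [h1.2 k hk, h2.2 k hk, sub_zero] at h3
      exact (mul_eq_zero.1 h3).resolve_left hK

end ScalesConstruction

/-! ### Arcs through the roots of sparse systems -/

section CoreAux

theorem prod_zpow_eq_zpow_sum {C ι : Type*} [Field C] {x : C} (hx : x ≠ 0) (s : Finset ι)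
    (f : ι → ℤ) : ∏ k ∈ s, x ^ f k = x ^ ∑ k ∈ s, f k := by
  classical
  induction s using Finset.induction_on with
  | empty => simp
  | insert a s ha ih => rw [Finset.prod_insert ha, Finset.sum_insert ha, zpow_add₀ hx, ih]

theorem prod_binomialSeries {C ι : Type*} [Field C] (s : Finset ι)
    (f : ι → ℤ) (g : ι → ℕ) : ∏ k ∈ s, PowerSeries.binomialSeries C (f k) ^ g k =
      PowerSeries.binomialSeries C (∑ k ∈ s, g k * f k) := by
  classical
  have hpow : ∀ (x : ℤ) (b : ℕ), PowerSeries.binomialSeries C x ^ b =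
      PowerSeries.binomialSeries C (b * x) := by
    intro x b
    induction b with
    | zero => simp
    | succ b ih =>
      rw [pow_succ, ih, ← PowerSeries.binomialSeries_add]
      congr 1
      push_cast
      ring
  induction s using Finset.induction_on with
  | empty => simp
  | insert a s ha ih =>
    rw [Finset.prod_insert ha, Finset.sum_insert ha, PowerSeries.binomialSeries_add, ih, hpow]

/-- The algebraic identity behind the chart of a sparse system: a monomial with exponent `a`
equals the monomial with exponent `b`, times the Laurent monomial with exponent `a - b`. -/
theorem prod_pow_shift {C ι : Type*} [Field C] [Fintype ι] (y : ι → C) (hy : ∀ k, y k ≠ 0)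
    (a b : ι → ℕ) : ∏ k, y k ^ a k = (∏ k, y k ^ b k) * ∏ k, y k ^ ((a k : ℤ) - b k) := by
  rw [← Finset.prod_mul_distrib]
  refine Finset.prod_congr rfl fun k _ => ?_
  rw [zpow_sub₀ (hy k), zpow_natCast, zpow_natCast]
  field_simp [hy k]

variable {C Ω I : Type*} [NormedField C] [CompleteSpace C] [IsUltrametricDist C] [IsAlgClosed C]
  [CharZero C]

/-- Points `π ^ v * ζ * u` with fixed units `ζ`, principal units `u`, and the `J i`-th term dominant in
the `i`-th equation. Almost everywhere for the ultrafilter, either they lie in families of bounded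
size within each instance, or each deforms along a nonconstant formal arc of zeros of its system.
Dividing the `i`-th equation by its dominant monomial turns it into a relation between the small
parameters of a chart, to which `Chart.dichotomy` applies. The last clause keeps a coordinate
constantly equal to `ζ k` fixed along the arc; it serves for points with vanishing coordinates. -/
theorem core_aux (p : ℕ) [hp : Fact p.Prime] [NormedAlgebra ℚ_[p] C] {m n : ℕ} (inst : Ω → I)
    (U : Ultrafilter Ω) (a : I → Fin m → Fin n → ℕ) (ct : I → Fin m → Fin m → C) (ζ : Fin n → C)
    (hζ : ∀ k, ‖ζ k‖ = 1) (π : C) (hπ0 : 0 < ‖π‖) (hπ1 : ‖π‖ < 1) (v : Ω → Fin n → ℤ)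
    (u : Ω → Fin n → C) (hu : ∀ ω k, ‖u ω k - 1‖ ≤ ‖(p : C)‖ ^ 2) (J : Fin m → Fin m)
    (hroot : ∀ᶠ ω in U, ∀ i, ∑ j, ct (inst ω) i j *
      ∏ k, (π ^ v ω k * ζ k * u ω k) ^ a (inst ω) j k = 0)
    (hmax : ∀ᶠ ω in U, ∀ i j, ‖ct (inst ω) i j * π ^ (∑ k, (a (inst ω) j k : ℤ) * v ω k)‖ ≤
      ‖ct (inst ω) i (J i) * π ^ (∑ k, (a (inst ω) (J i) k : ℤ) * v ω k)‖) :
    (∃ f : I → Fin n → ℤ, (∀ᶠ ω in U, v ω = f (inst ω)) ∧ ∃ (F : I → Finset (Fin n → C)) (b : ℕ),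
      (∀ i, (F i).card ≤ b) ∧ ∀ᶠ ω in U, u ω ∈ F (inst ω)) ∨
    ∀ᶠ ω in U, ∃ Y : Fin n → PowerSeries C,
      (∀ k, PowerSeries.constantCoeff (Y k) = π ^ v ω k * ζ k * u ω k) ∧
      (∃ k, Y k ≠ PowerSeries.C (π ^ v ω k * ζ k * u ω k)) ∧
      (∀ i, ∑ j, PowerSeries.C (ct (inst ω) i j) * ∏ k, Y k ^ a (inst ω) j k = 0) ∧
      ∀ k, (∀ᶠ ω in U, v ω k = 0) → (∀ᶠ ω in U, u ω k = 1) → Y k = PowerSeries.C (ζ k) := by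
  classical
  have hp1 : ‖(p : C)‖ < 1 := norm_natCast_p_lt_one p
  have hp0 : 0 < ‖(p : C)‖ := norm_natCast_p_pos p
  have hpne : (p : C) ≠ 0 := norm_pos_iff.1 hp0
  have hρ0 : 0 ≤ ‖(p : C)‖ ^ 2 := by positivity
  have hρ1 : ‖(p : C)‖ ^ 2 < 1 := pow_lt_one₀ hp0.le hp1 two_ne_zero
  have hπ : π ≠ 0 := norm_pos_iff.1 hπ0
  have hζ0 : ∀ k, ζ k ≠ 0 := fun k => norm_pos_iff.1 (by rw [hζ]; exact one_pos)
  let χ : Fin m × Fin m → I → Fin n → ℤ := fun l i k => (a i l.2 k : ℤ) - a i (J l.1) k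
  obtain ⟨𝒮, rfl, rfl, N, f, e, r, hr, hM, hlam, hflag, hflag1, hnflag, htriv⟩ :=
    exists_scales p inst U χ π hπ0 hπ1 v u _ hρ0 hρ1 hu
  have hr1 : ∀ ω, ‖r ω‖ = 1 := fun ω => norm_eq_one_of_sub_one hρ1 (hr ω)
  have hr0 : ∀ ω, r ω ≠ 0 := fun ω => norm_pos_iff.1 (by rw [hr1]; exact one_pos)
  let w : Ω → Fin n → C := fun ω k => (u ω k * r ω ^ (-e (𝒮.inst ω) k) - 1) / p
  have hw : ∀ ω k, ‖w ω k‖ < 1 := by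
    intro ω k
    have h1 := norm_sub_one_mul_zpow hρ0 hρ1 (hu ω k) (hr ω) (-e (𝒮.inst ω) k)
    simp only [w]
    rw [norm_div, div_lt_one hp0]
    refine h1.trans_lt ?_
    nlinarith
  have huw : ∀ ω k, u ω k = (1 + p * w ω k) * r ω ^ e (𝒮.inst ω) k := by
    intro ω k
    simp only [w]
    rw [mul_div_cancel₀ _ hpne, add_sub_cancel, mul_assoc, ← zpow_add₀ (hr0 ω)]
    simp
  let c : Fin m × Fin m → I → C := fun l i =>
    ct i l.1 l.2 / ct i l.1 (J l.1) * (∏ k, ζ k ^ χ l i k) * π ^ f l i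
  let st : Ω → Fin m × Fin m → C := fun ω l => c l (𝒮.inst ω) * 𝒮.M (N l) ω
  let y : Ω → Fin n → C := fun ω k => π ^ v ω k * ζ k * r ω ^ e (𝒮.inst ω) k
  have hy0 : ∀ ω k, y ω k ≠ 0 := fun ω k =>
    mul_ne_zero (mul_ne_zero (zpow_ne_zero _ hπ) (hζ0 k)) (zpow_ne_zero _ (hr0 ω))
  have hX : ∀ ω k, π ^ v ω k * ζ k * u ω k = y ω k * (1 + p * w ω k) := by
    intro ω k
    rw [huw]
    simp only [y]
    ring
  have hct : ∀ᶠ ω in 𝒮.U, ∀ i j, ct (𝒮.inst ω) i (J i) = 0 → ct (𝒮.inst ω) i j = 0 := by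
    filter_upwards [hmax] with ω hω i j h0
    have h1 := hω i j
    rw [h0, zero_mul, norm_zero] at h1
    exact (mul_eq_zero.1 (norm_le_zero_iff.1 h1)).resolve_right (zpow_ne_zero _ hπ)
  -- a monomial term is the dominant one times a small parameter
  have hterm : ∀ᶠ ω in 𝒮.U, ∀ i j, ct (𝒮.inst ω) i j * ∏ k, y ω k ^ a (𝒮.inst ω) j k =
      (ct (𝒮.inst ω) i (J i) * ∏ k, y ω k ^ a (𝒮.inst ω) (J i) k) * st ω (i, j) := by
    filter_upwards [hct, hM] with ω h1 h2 i j
    by_cases h0 : ct (𝒮.inst ω) i (J i) = 0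
    · rw [h0, h1 i j h0]; ring
    rw [prod_pow_shift (y ω) (hy0 ω) (a (𝒮.inst ω) j) (a (𝒮.inst ω) (J i))]
    have h3 : ∏ k, y ω k ^ ((a (𝒮.inst ω) j k : ℤ) - a (𝒮.inst ω) (J i) k) =
        (∏ k, ζ k ^ χ (i, j) (𝒮.inst ω) k) * (π ^ f (i, j) (𝒮.inst ω) * 𝒮.M (N (i, j)) ω) := by
      rw [← h2 (i, j), ← prod_zpow_eq_zpow_sum hπ, ← prod_zpow_eq_zpow_sum (hr0 ω),
        ← Finset.prod_mul_distrib, ← Finset.prod_mul_distrib]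
      refine Finset.prod_congr rfl fun k _ => ?_
      simp only [y, χ]
      rw [mul_zpow, mul_zpow, ← zpow_mul, ← zpow_mul, mul_comm (v ω k), mul_comm (e _ k)]
      ring
    rw [h3]
    simp only [st, c]
    field_simp
  have hst : ∀ᶠ ω in 𝒮.U, ∀ l, ‖st ω l‖ ≤ 1 := by
    filter_upwards [hM, hmax] with ω h2 h3 l
    simp only [st, c]
    have h4 := congrArg norm (h2 l)
    simp only [norm_mul, norm_zpow, hr1, one_zpow, mul_one] at h4
    rw [mul_assoc, norm_mul, norm_mul, norm_mul (π ^ _), norm_zpow, ← h4, norm_prod]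
    simp only [norm_zpow, hζ, one_zpow, Finset.prod_const_one, mul_one]
    have h5 := h3 l.1 l.2
    rw [norm_mul, norm_mul, norm_zpow, norm_zpow] at h5
    have h6 : ∑ k, χ l (𝒮.inst ω) k * v ω k = ∑ k, (a (𝒮.inst ω) l.2 k : ℤ) * v ω k -
        ∑ k, (a (𝒮.inst ω) (J l.1) k : ℤ) * v ω k := by
      rw [← Finset.sum_sub_distrib]
      exact Finset.sum_congr rfl fun k _ => by simp only [χ]; ring
    rw [h6, zpow_sub₀ hπ0.ne', norm_div, div_mul_div_comm]
    exact div_le_one_of_le₀ h5 (by positivity)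
  -- `sm` singles out the ratios that serve as small parameters; the others have norm one and become
  -- coefficients of the chart
  let sm : Fin m × Fin m → Prop := fun l => ∀ᶠ ω in 𝒮.U, ‖st ω l‖ < 1
  have hnsm : ∀ l, ¬ sm l → N l = 0 ∧ ∀ᶠ ω in 𝒮.U, ‖c l (𝒮.inst ω)‖ = 1 := by
    intro l hl
    have h1 : ∀ᶠ ω in 𝒮.U, ‖st ω l‖ = 1 := by
      filter_upwards [hst, Ultrafilter.eventually_not.2 hl] with ω h1 h2
      exact le_antisymm (h1 l) (not_lt.1 h2)
    have h2 : N l = 0 := by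
      apply 𝒮.M_inj
      refine ⟨fun i => ‖c l i‖⁻¹, ?_⟩
      filter_upwards [h1] with ω hω
      simp only [st] at hω
      rw [norm_mul] at hω
      exact eq_inv_of_mul_eq_one_right hω
    refine ⟨h2, ?_⟩
    filter_upwards [h1] with ω hω
    simp only [st] at hω
    rwa [h2, 𝒮.M_zero, mul_one] at hω
  let κ : ℤ_[p] →+* C := (algebraMap ℚ_[p] C).comp PadicInt.Coe.ringHom
  have hκ : ∀ b, ‖κ b‖ ≤ 1 := by
    intro b
    simp only [κ, RingHom.comp_apply, norm_algebraMap']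
    exact b.norm_le_one
  let x : I → (Fin m × Fin m) ⊕ (Fin m × Fin n) → C := fun i =>
    Sum.elim (fun l => if ‖c l i‖ ≤ 1 then c l i else 0) (fun jk => (a i jk.1 jk.2 : C))
  have hx : ∀ i h, ‖x i h‖ ≤ 1 := by
    rintro i (l | jk)
    · simp only [x, Sum.elim_inl]
      split_ifs with h
      · exact h
      · simp
    · simp only [x, Sum.elim_inr]
      have h1 : ((a i jk.1 jk.2 : ℕ) : C) = κ (a i jk.1 jk.2 : ℕ) := by simp
      rw [h1]
      exact hκ _
  let 𝔅 := MvPolynomial ((Fin m × Fin m) ⊕ (Fin m × Fin n)) ℤ_[p]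
  let ch : Chart 𝒮 :=
    { B := 𝔅
      S := Fin m × Fin m
      ev := fun i => eval₂Hom κ (x i)
      hev := fun i b => norm_eval₂_le_one κ hκ (x i) (hx i) b
      wt := N
      s := fun ω l => if sm l ∧ ‖st ω l‖ < 1 then st ω l else 0
      hs := fun ω l => by
        split_ifs with h
        · exact h.2
        · simp
      coef := fun l => if sm l then c l else 0
      hcoef := fun l => by
        by_cases hl : sm l
        · filter_upwards [hl] with ω hω
          rw [if_pos ⟨hl, hω⟩, if_pos hl]
        · refine Filter.Eventually.of_forall fun ω => ?_
          rw [if_neg (fun h => hl h.1), if_neg hl]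
          simp }
  have hnt : Nontrivial ch.B := inferInstanceAs (Nontrivial 𝔅)
  let t : Fin m × Fin m → MvPowerSeries ((Fin m × Fin m) ⊕ Fin n) 𝔅 := fun l =>
    if sm l then MvPowerSeries.X (Sum.inl l) else MvPowerSeries.C (X (Sum.inl l))
  let bs : Fin m → Fin n → MvPowerSeries ((Fin m × Fin m) ⊕ Fin n) 𝔅 := fun j k =>
    PowerSeries.toMvPowerSeries (Sum.inr k) (genBinomial p (MvPolynomial.C : ℤ_[p] →+* 𝔅)
      (X (Sum.inr (j, k))))
  let Φ : Fin m → ch.R n := fun i => ∑ j, t (i, j) * ∏ k, bs j k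
  have hevl : ∀ i jk, ch.ev i (X (Sum.inr jk) : 𝔅) = (a i jk.1 jk.2 : C) := by
    intro i jk
    change eval₂Hom κ (x i) (X (Sum.inr jk)) = _
    simp [x]
  -- any arc takes the expected values on the two kinds of series
  have hbs : ∀ (ω : Ω) (Ψ : ch.R n →+* PowerSeries C) (hΨ : CoeffBdd Ψ)
      (hC : ∀ b, Ψ (MvPowerSeries.C b) = PowerSeries.C (ch.ev (𝒮.inst ω) b))
      (hev : ∀ g, PowerSeries.constantCoeff (Ψ g) = ch.evl w hw ω g) (j : Fin m) (k : Fin n),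
      Ψ (bs j k) = (1 + PowerSeries.C (p : C) * Ψ (MvPowerSeries.X (Sum.inr k))) ^
        a (𝒮.inst ω) j k := by
    intro ω Ψ hΨ hC hev j k
    refine hΨ.map_binomial (ch.ev (𝒮.inst ω)) hC (Sum.inr k) ?_ _ _ _ ?_
    · rw [hev, Chart.evl_inr]
      exact hw ω k
    · intro M
      exact map_coeff_genBinomial p _ _ (ch.ev (𝒮.inst ω)) _ (hevl _ (j, k)) M
  have ht : ∀ᶠ ω in 𝒮.U, ∀ (Ψ : ch.R n →+* PowerSeries C) (ε : ℤ)
      (hC : ∀ b, Ψ (MvPowerSeries.C b) = PowerSeries.C (ch.ev (𝒮.inst ω) b))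
      (hs : ∀ l, Ψ (MvPowerSeries.X (Sum.inl l)) = PowerSeries.C (ch.s ω l) *
        PowerSeries.binomialSeries C (ε * 𝒮.lam (ch.wt l) (𝒮.inst ω))) (l : Fin m × Fin m),
      Ψ (t l) = PowerSeries.C (st ω l) *
        PowerSeries.binomialSeries C (ε * ∑ k, χ l (𝒮.inst ω) k * e (𝒮.inst ω) k) := by
    have h1 : ∀ᶠ ω in 𝒮.U, ∀ l, sm l → ‖st ω l‖ < 1 := by
      rw [Filter.eventually_all]
      intro l
      by_cases hl : sm l
      · filter_upwards [hl] with ω h _ using h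
      · exact Filter.Eventually.of_forall fun ω h => absurd h hl
    have h2 : ∀ᶠ ω in 𝒮.U, ∀ l, ¬ sm l → ‖c l (𝒮.inst ω)‖ = 1 := by
      rw [Filter.eventually_all]
      intro l
      by_cases hl : sm l
      · exact Filter.Eventually.of_forall fun ω h => absurd hl h
      · filter_upwards [(hnsm l hl).2] with ω h _ using h
    filter_upwards [h1, h2, hlam] with ω h1 h2 h3 Ψ ε hC hs l
    rw [← h3 l]
    by_cases hl : sm l
    · simp only [t, if_pos hl]
      have h4 := hs l
      have h5 : ch.s ω l = st ω l := if_pos ⟨hl, h1 l hl⟩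
      rw [h5] at h4
      exact h4
    · simp only [t, if_neg hl]
      have h4 := hC (X (Sum.inl l) : 𝔅)
      have h5 : ch.ev (𝒮.inst ω) (X (Sum.inl l) : 𝔅) = c l (𝒮.inst ω) := by
        change eval₂Hom κ (x (𝒮.inst ω)) (X (Sum.inl l)) = _
        simp [x, (h2 l hl).le]
      rw [h5] at h4
      rw [(hnsm l hl).1, map_zero, Pi.zero_apply, mul_zero, PowerSeries.binomialSeries_zero,
        mul_one]
      simp only [st, (hnsm l hl).1, 𝒮.M_zero, mul_one]
      exact h4
  have hΦ : ∀ᶠ ω in 𝒮.U, ∀ i, ch.evl w hw ω (Φ i) = 0 := by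
    filter_upwards [ht, hterm, hroot] with ω h1 h2 h3 i
    have hb : CoeffBdd ((PowerSeries.C (R := C)).comp (ch.evl w hw ω)) :=
      CoeffBdd.of_C fun g => norm_evalHom_le _ _ _ _ g
    have hC : ∀ b, ((PowerSeries.C (R := C)).comp (ch.evl w hw ω)) (MvPowerSeries.C b) =
        PowerSeries.C (ch.ev (𝒮.inst ω) b) := fun b => by
      rw [RingHom.comp_apply, Chart.evl_C]
    have h4 := h1 _ 0 hC (fun l => by
      rw [RingHom.comp_apply, Chart.evl_inl, zero_mul, PowerSeries.binomialSeries_zero, mul_one])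
    have h5 := hbs ω _ hb hC (fun g => by simp)
    have h6 : ch.evl w hw ω (Φ i) = ∑ j, st ω (i, j) *
        ∏ k, (1 + p * w ω k) ^ a (𝒮.inst ω) j k := by
      simp only [Φ]
      rw [map_sum]
      refine Finset.sum_congr rfl fun j _ => ?_
      rw [map_mul, map_prod]
      congr 1
      · have := congrArg PowerSeries.constantCoeff (h4 (i, j))
        simpa using this
      · refine Finset.prod_congr rfl fun k _ => ?_
        have := congrArg PowerSeries.constantCoeff (h5 j k)
        simpa [Chart.evl_inr] using this
    by_cases h0 : ct (𝒮.inst ω) i (J i) = 0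
    · rw [h6]
      refine Finset.sum_eq_zero fun j _ => ?_
      simp [st, c, h0]
    · have h7 : (ct (𝒮.inst ω) i (J i) * ∏ k, y ω k ^ a (𝒮.inst ω) (J i) k) *
          ch.evl w hw ω (Φ i) = 0 := by
        rw [← h3 i, h6, Finset.mul_sum]
        refine Finset.sum_congr rfl fun j _ => ?_
        rw [← mul_assoc, ← h2 i j, mul_assoc, ← Finset.prod_mul_distrib]
        simp only [hX, mul_pow]
      refine (mul_eq_zero.1 h7).resolve_left (mul_ne_zero h0 ?_)
      exact Finset.prod_ne_zero_iff.2 fun k _ => pow_ne_zero _ (hy0 ω k)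
  rcases ch.dichotomy n w hw with ⟨hfl, F, b, hF, hwF⟩ | hflow
  · left
    obtain ⟨g, hg⟩ := hflag hfl
    refine ⟨g, hg, fun i => (F i).image fun w k => 1 + p * w k, b,
      fun i => Finset.card_image_le.trans (hF i), ?_⟩
    filter_upwards [hwF] with ω hω
    refine Finset.mem_image.2 ⟨_, hω, funext fun k => ?_⟩
    rw [huw, hflag1 hfl, one_zpow, mul_one]
  right
  have htr : ∀ᶠ ω in 𝒮.U, ∀ k, (∀ᶠ ω in 𝒮.U, v ω k = 0) → (∀ᶠ ω in 𝒮.U, u ω k = 1) →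
      v ω k = 0 ∧ e (𝒮.inst ω) k = 0 ∧ MvPowerSeries.X (Sum.inr k) ∈ ch.P w hw := by
    rw [Filter.eventually_all]
    intro k
    by_cases hk : (∀ᶠ ω in 𝒮.U, v ω k = 0) ∧ (∀ᶠ ω in 𝒮.U, u ω k = 1)
    · filter_upwards [hk.1, htriv k hk.1] with ω h1 h2 _ _
      refine ⟨h1, h2, ?_⟩
      rw [mem_aeKer]
      filter_upwards [hk.2, htriv k hk.1] with ω' h3 h4
      rw [Chart.evl_inr]
      simp [w, h3, h4]
    · exact Filter.Eventually.of_forall fun ω h1 h2 => absurd ⟨h1, h2⟩ hk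
  have hk₀ : ¬ 𝒮.flag → ∃ k₀, MvPowerSeries.X (Sum.inr k₀) ∈ ch.P w hw ∧
      ∀ᶠ ω in 𝒮.U, e (𝒮.inst ω) k₀ ≠ 0 := by
    intro hfl
    obtain ⟨k₀, hk⟩ := hnflag hfl
    refine ⟨k₀, ?_, hk.mono fun ω h => h.1⟩
    rw [mem_aeKer]
    filter_upwards [hk] with ω hω
    rw [Chart.evl_inr]
    simp only [w]
    rw [← hω.2, ← zpow_add₀ (hr0 ω)]
    simp
  have hk₁ : ∀ᶠ ω in 𝒮.U, ¬ 𝒮.flag → ∃ k₀, MvPowerSeries.X (Sum.inr k₀) ∈ ch.P w hw ∧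
      e (𝒮.inst ω) k₀ ≠ 0 := by
    by_cases hfl : 𝒮.flag
    · exact Filter.Eventually.of_forall fun ω h => absurd hfl h
    · obtain ⟨k₀, h1, h2⟩ := hk₀ hfl
      filter_upwards [h2] with ω h _ using ⟨k₀, h1, h⟩
  filter_upwards [hflow, ht, hterm, htr, hk₁] with ω hω h1 h2 h3 h4
  obtain ⟨Ψ, ε, hΨ, hC, hev, hs, hP, hfl, hne⟩ := hω
  refine ⟨fun k => PowerSeries.C (y ω k) * PowerSeries.binomialSeries C (ε * e (𝒮.inst ω) k) *
    (1 + PowerSeries.C (p : C) * Ψ (MvPowerSeries.X (Sum.inr k))), ?_, ?_, ?_, ?_⟩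
  · intro k
    rw [hX]
    simp [hev, Chart.evl_inr]
  · by_cases hε : ε = 0
    · obtain ⟨k, hk⟩ := hne.resolve_left (not_not.2 hε)
      refine ⟨k, fun h => hk ?_⟩
      beta_reduce at h
      rw [hε, zero_mul, PowerSeries.binomialSeries_zero, mul_one, hX,
        map_mul PowerSeries.C (y ω k) (1 + p * w ω k)] at h
      have hy' : (PowerSeries.C (y ω k) : PowerSeries C) ≠ 0 := by simpa using hy0 ω k
      have h5 := mul_left_cancel₀ hy' h
      rw [map_add, map_one, add_right_inj, map_mul] at h5
      have hp' : (PowerSeries.C (p : C) : PowerSeries C) ≠ 0 := by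
        rw [Ne, ← map_zero (PowerSeries.C (R := C)), PowerSeries.C_injective.eq_iff]
        exact hpne
      exact mul_left_cancel₀ hp' h5
    · obtain ⟨k, hk1, hk2⟩ := h4 fun h => hε (hfl h)
      refine ⟨k, fun h => ?_⟩
      have h5 := congrArg (PowerSeries.coeff 1) h
      simp only [hP _ hk1, mul_zero, add_zero, mul_one, PowerSeries.coeff_C_mul,
        PowerSeries.binomialSeries_coeff, PowerSeries.coeff_C, one_ne_zero, if_false,
        Ring.choose_one_right, mul_eq_zero, hy0, false_or] at h5
      simp [hε, hk2] at h5
  · intro i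
    have h5 : Ψ (Φ i) = 0 := by
      apply hP
      rw [mem_aeKer]
      filter_upwards [hΦ] with ω hω using hω i
    have h6 : Ψ (Φ i) = ∑ j, Ψ (t (i, j)) * ∏ k, Ψ (bs j k) := by
      simp only [Φ]
      rw [map_sum]
      refine Finset.sum_congr rfl fun j _ => ?_
      rw [map_mul, map_prod]
    have h7 := h1 Ψ ε hC hs
    have h8 := hbs ω Ψ hΨ hC hev
    rw [← mul_zero (PowerSeries.C (ct (𝒮.inst ω) i (J i) * ∏ k, y ω k ^ a (𝒮.inst ω) (J i) k) *
      PowerSeries.binomialSeries C (∑ k, (a (𝒮.inst ω) (J i) k : ℤ) * (ε * e (𝒮.inst ω) k))),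
      ← h5, h6, Finset.mul_sum]
    refine Finset.sum_congr rfl fun j _ => ?_
    rw [h7 (i, j)]
    simp only [h8, mul_pow, Finset.prod_mul_distrib]
    rw [prod_binomialSeries]
    have h9 : ∑ k, (a (𝒮.inst ω) j k : ℤ) * (ε * e (𝒮.inst ω) k) =
        ∑ k, (a (𝒮.inst ω) (J i) k : ℤ) * (ε * e (𝒮.inst ω) k) +
          ε * ∑ k, χ (i, j) (𝒮.inst ω) k * e (𝒮.inst ω) k := by
      rw [Finset.mul_sum, ← Finset.sum_add_distrib]
      refine Finset.sum_congr rfl fun k _ => ?_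
      simp only [χ]
      ring
    rw [h9, PowerSeries.binomialSeries_add]
    have h10 := congrArg (PowerSeries.C (R := C)) (h2 i j)
    simp only [map_mul, map_prod, map_pow] at h10 ⊢
    linear_combination (PowerSeries.binomialSeries C
      (∑ k, (a (𝒮.inst ω) (J i) k : ℤ) * (ε * e (𝒮.inst ω) k)) *
      PowerSeries.binomialSeries C (ε * ∑ k, χ (i, j) (𝒮.inst ω) k * e (𝒮.inst ω) k) *
      ∏ k, (1 + PowerSeries.C (p : C) * Ψ (MvPowerSeries.X (Sum.inr k))) ^ a (𝒮.inst ω) j k) * h10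
  · intro k hk1 hk2
    obtain ⟨h5, h6, h7⟩ := h3 k hk1 hk2
    simp [hP _ h7, h6, y, h5]

end CoreAux

/-! ### Algebraically isolated roots and the uniform bound -/

section Isolated

/-- Algebraic isolation of a root `x`: locally at `x`, each `X k - x k` is nilpotent modulo the
system. -/
def AlgIsolated {F κ : Type*} [Field F] {n : ℕ} (G : κ → MvPolynomial (Fin n) F) (x : Fin n → F) :
    Prop :=
  (∀ i, eval x (G i) = 0) ∧ ∀ k, ∃ (N : ℕ) (q : MvPolynomial (Fin n) F), eval x q ≠ 0 ∧
    q * (X k - MvPolynomial.C (x k)) ^ N ∈ Ideal.span (Set.range G)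

/-- There is no nonconstant formal arc of zeros through an algebraically isolated root. -/
theorem AlgIsolated.arc_eq {F κ : Type*} [Field F] {n : ℕ} {G : κ → MvPolynomial (Fin n) F}
    {x : Fin n → F} (h : AlgIsolated G x) (Y : Fin n → PowerSeries F)
    (hY : ∀ k, PowerSeries.constantCoeff (Y k) = x k)
    (hG : ∀ i, eval₂Hom PowerSeries.C Y (G i) = 0) (k : Fin n) : Y k = PowerSeries.C (x k) := by
  obtain ⟨N, q, hq, hmem⟩ := h.2 k
  have h1 : Ideal.span (Set.range G) ≤ RingHom.ker (eval₂Hom PowerSeries.C Y) := by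
    rw [Ideal.span_le]
    rintro _ ⟨i, rfl⟩
    exact hG i
  have h2 : eval₂Hom PowerSeries.C Y (q * (X k - MvPolynomial.C (x k)) ^ N) = 0 := h1 hmem
  rw [map_mul, map_pow, map_sub, eval₂Hom_X', eval₂Hom_C] at h2
  have h3 : eval₂Hom PowerSeries.C Y q ≠ 0 := by
    intro h0
    apply hq
    have h4 : (PowerSeries.constantCoeff (R := F)).comp (eval₂Hom PowerSeries.C Y) = eval x := by
      apply MvPolynomial.ringHom_ext
      · intro r; simp
      · intro i; simp [hY]
    have h5 := RingHom.congr_fun h4 q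
    rw [← h5, RingHom.comp_apply, h0, map_zero]
  exact sub_eq_zero.1 (eq_zero_of_pow_eq_zero ((mul_eq_zero.1 h2).resolve_left h3))

/-- The polynomial system with coefficient matrix `c` and exponents `a`. -/
noncomputable def sparseSys {F : Type*} [CommRing F] {l m n : ℕ} (c : Fin l → Fin m → F)
    (a : Fin m → Fin n → ℕ) (i : Fin l) : MvPolynomial (Fin n) F :=
  ∑ j, MvPolynomial.C (c i j) * ∏ k, X k ^ a j k

theorem eval₂_sparseSys {F R : Type*} [CommRing F] [CommRing R] {l m n : ℕ} (c : Fin l → Fin m → F)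
    (a : Fin m → Fin n → ℕ) (i : Fin l) (φ : F →+* R) (x : Fin n → R) :
    eval₂Hom φ x (sparseSys c a i) = ∑ j, φ (c i j) * ∏ k, x k ^ a j k := by
  simp [sparseSys, map_sum, map_prod]

/-- Setting the coordinates outside the support `b` to zero kills the monomials involving them. -/
theorem prod_pow_support {R : Type*} [CommRing R] {n : ℕ} (b : Fin n → Bool) (a : Fin n → ℕ)
    (x y : Fin n → R) (h1 : ∀ k, b k = true → x k = y k) (h0 : ∀ k, b k = false → x k = 0)
    [Decidable (∀ k, b k = false → a k = 0)] :
    ∏ k, x k ^ a k = if ∀ k, b k = false → a k = 0 then ∏ k, y k ^ a k else 0 := by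
  split_ifs with h
  · refine Finset.prod_congr rfl fun k _ => ?_
    cases hb : b k
    · rw [h k hb, pow_zero, pow_zero]
    · rw [h1 k hb]
  · push Not at h
    obtain ⟨k, hb, hk⟩ := h
    exact Finset.prod_eq_zero (Finset.mem_univ k) (by rw [h0 k hb, zero_pow hk])

end Isolated

section Core

/-- Finite sets of unbounded size carry an ultrafilter avoiding all families of subsets of bounded
size. -/
theorem exists_ultrafilter_not_few {α : Type*} (A : ℕ → Finset α) (hA : ∀ M, M < (A M).card) :
    ∃ U : Ultrafilter (Σ M, {x // x ∈ A M}), ∀ (F : ℕ → Finset α) (b : ℕ),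
      (∀ M, (F M).card ≤ b) → ¬ ∀ᶠ ω : (Σ M, {x // x ∈ A M}) in U, (ω.2 : α) ∈ F ω.1 := by
  classical
  let 𝓕 : Filter (Σ M, {x // x ∈ A M}) :=
    { sets := {S | ∃ (F : ℕ → Finset α) (b : ℕ), (∀ M, (F M).card ≤ b) ∧
        ∀ ω : (Σ M, {x // x ∈ A M}), (ω.2 : α) ∉ F ω.1 → ω ∈ S}
      univ_sets := ⟨fun _ => ∅, 0, by simp, by simp⟩
      sets_of_superset := by
        rintro S T ⟨F, b, h1, h2⟩ hST
        exact ⟨F, b, h1, fun ω hω => hST (h2 ω hω)⟩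
      inter_sets := by
        rintro S T ⟨F, b, h1, h2⟩ ⟨F', b', h1', h2'⟩
        refine ⟨fun M => F M ∪ F' M, b + b', fun M => (Finset.card_union_le _ _).trans
          (add_le_add (h1 M) (h1' M)), fun ω hω => ?_⟩
        rw [Finset.mem_union, not_or] at hω
        exact ⟨h2 ω hω.1, h2' ω hω.2⟩ }
  have hne : 𝓕.NeBot := by
    rw [Filter.neBot_iff, ne_eq, ← Filter.empty_mem_iff_bot]
    rintro ⟨F, b, h1, h2⟩
    have h3 : A b ⊆ F b := by
      intro x hx
      by_contra hxF
      exact h2 ⟨b, x, hx⟩ hxF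
    have := Finset.card_le_card h3
    have := hA b
    have := h1 b
    omega
  refine ⟨Ultrafilter.of 𝓕, fun F b hF hev => ?_⟩
  have h1 : ∀ᶠ ω : (Σ M, {x // x ∈ A M}) in Ultrafilter.of 𝓕, (ω.2 : α) ∉ F ω.1 := by
    have h2 : {ω : (Σ M, {x // x ∈ A M}) | (ω.2 : α) ∉ F ω.1} ∈ 𝓕 := ⟨F, b, hF, fun ω h => h⟩
    exact Ultrafilter.of_le 𝓕 h2
  obtain ⟨ω, h2, h3⟩ := (hev.and h1).exists
  exact h3 h2

variable {C : Type} [NormedField C] [CompleteSpace C] [IsUltrametricDist C] [IsAlgClosed C]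
  [CharZero C]

/-- Uniform bound for the algebraically isolated roots of the form `π ^ v * ζ * u` (or zero) of systems
of `m` equations in `m` monomials. For systems with more and more such roots, an ultrafilter fixes
the vanishing coordinates, the units `ζ` and the dominant terms; `core_aux` then produces an arc,
excluded by `AlgIsolated.arc_eq`. -/
theorem core_bound (p : ℕ) [hp : Fact p.Prime] [NormedAlgebra ℚ_[p] C] (m n : ℕ) (𝒯 : Finset C)
    (h𝒯 : ∀ ζ ∈ 𝒯, ‖ζ‖ = 1) (π : C) (hπ0 : 0 < ‖π‖) (hπ1 : ‖π‖ < 1) :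
    ∃ M : ℕ, ∀ (c : Fin m → Fin m → C) (a : Fin m → Fin n → ℕ) (A : Finset (Fin n → C)),
      (∀ x ∈ A, AlgIsolated (sparseSys c a) x ∧ ∀ k, x k = 0 ∨ ∃ (v : ℤ), ∃ ζ ∈ 𝒯, ∃ u : C,
        ‖u - 1‖ ≤ ‖(p : C)‖ ^ 2 ∧ x k = π ^ v * ζ * u) → A.card ≤ M := by
  classical
  by_contra hcon
  push Not at hcon
  choose c a A hA hcard using hcon
  obtain ⟨U, hU⟩ := exists_ultrafilter_not_few A hcard
  let Ω := Σ M, {x // x ∈ A M}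
  have hdec : ∀ (ω : Ω) (k : Fin n), ∃ (v : ℤ) (ζ : {ζ // ζ ∈ insert 1 𝒯}) (u : C),
      ‖u - 1‖ ≤ ‖(p : C)‖ ^ 2 ∧ ((ω.2 : Fin n → C) k ≠ 0 → (ω.2 : Fin n → C) k = π ^ v * ζ * u) ∧
      ((ω.2 : Fin n → C) k = 0 → v = 0 ∧ u = 1) := by
    intro ω k
    by_cases h0 : (ω.2 : Fin n → C) k = 0
    · exact ⟨0, ⟨1, by simp⟩, 1, by simp, fun h => absurd h0 h, fun _ => ⟨rfl, rfl⟩⟩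
    · obtain ⟨v, ζ, hζ, u, hu, hx⟩ := ((hA ω.1 _ ω.2.2).2 k).resolve_left h0
      exact ⟨v, ⟨ζ, by simp [hζ]⟩, u, hu, fun _ => hx, fun h => absurd h h0⟩
  choose v ζ' u hu hx1 hx0 using hdec
  obtain ⟨ζ, hζ⟩ := eventually_eq_of_finite U ζ'
  obtain ⟨b, hb⟩ := eventually_eq_of_finite U fun ω k => decide ((ω.2 : Fin n → C) k ≠ 0)
  let ct : ℕ → Fin m → Fin m → C := fun M i j => if ∀ k, b k = false → a M j k = 0 then c M i j else 0
  have hJ : ∀ ω : Ω, ∃ J : Fin m → Fin m, ∀ i j,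
      ‖ct ω.1 i j * π ^ (∑ k, (a ω.1 j k : ℤ) * v ω k)‖ ≤
      ‖ct ω.1 i (J i) * π ^ (∑ k, (a ω.1 (J i) k : ℤ) * v ω k)‖ := by
    intro ω
    have : ∀ i : Fin m, ∃ j', ∀ j, ‖ct ω.1 i j * π ^ (∑ k, (a ω.1 j k : ℤ) * v ω k)‖ ≤
        ‖ct ω.1 i j' * π ^ (∑ k, (a ω.1 j' k : ℤ) * v ω k)‖ := fun i => by
      have : Nonempty (Fin m) := ⟨i⟩
      exact Finite.exists_max fun j => ‖ct ω.1 i j * π ^ (∑ k, (a ω.1 j k : ℤ) * v ω k)‖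
    choose J hJ using this
    exact ⟨J, hJ⟩
  choose J' hJ' using hJ
  obtain ⟨J, hJ⟩ := eventually_eq_of_finite U J'
  have hζ1 : ∀ k, ‖(ζ k : C)‖ = 1 := by
    intro k
    have := (ζ k).2
    rw [Finset.mem_insert] at this
    rcases this with h | h
    · rw [h, norm_one]
    · exact h𝒯 _ h
  have hbt : ∀ᶠ ω in U, ∀ k, (b k = true → (ω.2 : Fin n → C) k = π ^ v ω k * ζ k * u ω k) ∧
      (b k = false → (ω.2 : Fin n → C) k = 0 ∧ v ω k = 0 ∧ u ω k = 1) := by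
    filter_upwards [hζ, hb] with ω h1 h2 k
    rw [← h2, ← h1]
    constructor
    · intro h
      exact hx1 ω k (by simpa using h)
    · intro h
      have h0 : (ω.2 : Fin n → C) k = 0 := by simpa using h
      exact ⟨h0, hx0 ω k h0⟩
  have hsum : ∀ {R : Type} [CommRing R] (φ : C →+* R) (M : ℕ) (i : Fin m) (x y : Fin n → R),
      (∀ k, b k = true → x k = y k) → (∀ k, b k = false → x k = 0) →
      eval₂Hom φ x (sparseSys (c M) (a M) i) = ∑ j, φ (ct M i j) * ∏ k, y k ^ a M j k := by
    intro R _ φ M i x y h1 h0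
    rw [eval₂_sparseSys]
    refine Finset.sum_congr rfl fun j _ => ?_
    rw [prod_pow_support b (a M j) x y h1 h0]
    simp only [ct]
    split_ifs <;> simp
  rcases core_aux p (Sigma.fst : Ω → ℕ) U a ct (fun k => (ζ k : C)) hζ1 π hπ0 hπ1 v u hu J
    (by
      filter_upwards [hbt] with ω hω i
      have h1 := (hA ω.1 _ ω.2.2).1.1 i
      rw [← h1]
      exact (hsum (RingHom.id C) ω.1 i (ω.2 : Fin n → C) _ (fun k hk => (hω k).1 hk)
        (fun k hk => ((hω k).2 hk).1)).symm)
    (by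
      filter_upwards [hJ] with ω hω
      rw [← hω]
      exact hJ' ω) with ⟨f, hf, F, B, hF, huF⟩ | hflow
  · refine hU (fun M => (F M).image fun u k => if b k = true then π ^ f M k * ζ k * u k else 0) B
      (fun M => Finset.card_image_le.trans (hF M)) ?_
    filter_upwards [hf, huF, hbt] with ω h1 h2 h3
    refine Finset.mem_image.2 ⟨_, h2, funext fun k => ?_⟩
    split_ifs with hk
    · rw [(h3 k).1 hk, h1]
    · rw [((h3 k).2 (by simpa using hk)).1]
  · obtain ⟨ω, ⟨Y, hY1, ⟨k, hk⟩, hY3, hY4⟩, hω⟩ := (hflow.and hbt).exists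
    have harc := (hA ω.1 _ ω.2.2).1.arc_eq (fun k => if b k = true then Y k else 0)
      (by
        intro k
        split_ifs with h
        · rw [hY1, (hω k).1 h]
        · rw [map_zero, ((hω k).2 (by simpa using h)).1])
      (by
        intro i
        refine Eq.trans ?_ (hY3 i)
        exact hsum PowerSeries.C ω.1 i _ Y (fun k h => if_pos h) (fun k h => if_neg (Bool.eq_false_iff.1 h)))
      k
    cases hbk : b k
    · apply hk
      rw [hY4 k (hbt.mono fun ω h => ((h k).2 hbk).2.1) (hbt.mono fun ω h => ((h k).2 hbk).2.2),
        ((hω k).2 hbk).2.1, ((hω k).2 hbk).2.2]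
      simp
    · apply hk
      rw [if_pos hbk, (hω k).1 hbk] at harc
      exact harc

end Core

/-! ### Points over Noether normalisations -/

section MetricIsolated

/-- Lifting points along an integral extension `R ⊆ A` of a polynomial ring: every root of the
specialised minimal polynomial of `s` is the value of `s` at a point of the fibre. -/
theorem exists_point {r : ℕ} {A : Type*} [CommRing A] [IsDomain A] [Algebra ℂ A]
    [Algebra.FiniteType ℂ A] [Algebra (MvPolynomial (Fin r) ℂ) A]
    [IsScalarTower ℂ (MvPolynomial (Fin r) ℂ) A] [Algebra.IsIntegral (MvPolynomial (Fin r) ℂ) A]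
    [Module.IsTorsionFree (MvPolynomial (Fin r) ℂ) A] (s : A) (τ : Fin r → ℂ) (σ : ℂ)
    (hσ : ((minpoly (MvPolynomial (Fin r) ℂ) s).map (eval τ)).eval σ = 0) :
    ∃ φ : A →ₐ[ℂ] ℂ, (∀ f : MvPolynomial (Fin r) ℂ, φ (algebraMap _ A f) = eval τ f) ∧
      φ s = σ := by
  let R := MvPolynomial (Fin r) ℂ
  let e : Polynomial R →+* ℂ := Polynomial.eval₂RingHom (eval τ) σ
  have heC : ∀ z, e (Polynomial.C (MvPolynomial.C z)) = z := fun z =>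
    (Polynomial.eval₂_C _ _).trans (eval_C z)
  have he : Function.Surjective e := fun z => ⟨_, heC z⟩
  let : Algebra (Polynomial R) A := (Polynomial.aeval s : Polynomial R →ₐ[R] A).toRingHom.toAlgebra
  have halg : ∀ q : Polynomial R, algebraMap (Polynomial R) A q = Polynomial.aeval s q := fun _ => rfl
  have : IsScalarTower R (Polynomial R) A := IsScalarTower.of_algebraMap_eq fun f => by
    rw [halg, Polynomial.algebraMap_apply, Polynomial.aeval_C]; rfl
  have : Algebra.IsIntegral (Polynomial R) A := Algebra.IsIntegral.tower_top R
  have : (RingHom.ker e).IsMaximal := RingHom.ker_isMaximal_of_surjective e he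
  obtain ⟨Q, hQ, hQe⟩ := Ideal.exists_ideal_over_maximal_of_isIntegral (S := A) (RingHom.ker e) (by
    intro q hq
    rw [RingHom.mem_ker, halg] at hq
    obtain ⟨q', rfl⟩ := minpoly.isIntegrallyClosed_dvd (Algebra.IsIntegral.isIntegral s) hq
    rw [RingHom.mem_ker, map_mul]
    rw [Polynomial.eval_map] at hσ
    have : e (minpoly R s) = 0 := hσ
    rw [this, zero_mul])
  let : Field (A ⧸ Q) := Ideal.Quotient.field Q
  have : Algebra.FiniteType ℂ (A ⧸ Q) :=
    Algebra.FiniteType.of_surjective (Ideal.Quotient.mkₐ ℂ Q) (Ideal.Quotient.mkₐ_surjective ℂ Q)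
  have : Module.Finite ℂ (A ⧸ Q) := finite_of_finite_type_of_isJacobsonRing ℂ (A ⧸ Q)
  have hbij : Function.Bijective (Algebra.ofId ℂ (A ⧸ Q)) :=
    IsAlgClosed.algebraMap_bijective_of_isIntegral (k := ℂ) (K := A ⧸ Q)
  let E := AlgEquiv.ofBijective (Algebra.ofId ℂ (A ⧸ Q)) hbij
  have key : ∀ q : Polynomial R, E.symm (Ideal.Quotient.mk Q (algebraMap (Polynomial R) A q)) = e q := by
    intro q
    rw [AlgEquiv.symm_apply_eq]
    have h1 : q - Polynomial.C (MvPolynomial.C (e q)) ∈ RingHom.ker e := by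
      rw [RingHom.mem_ker, map_sub, heC, sub_self]
    rw [← hQe, Ideal.mem_comap, map_sub, ← Ideal.Quotient.eq] at h1
    rw [h1, halg, Polynomial.aeval_C]
    have h2 : algebraMap R A (MvPolynomial.C (e q)) = algebraMap ℂ A (e q) :=
      (IsScalarTower.algebraMap_apply ℂ R A (e q)).symm
    rw [h2]
    rfl
  refine ⟨(E.symm : (A ⧸ Q) →ₐ[ℂ] ℂ).comp (Ideal.Quotient.mkₐ ℂ Q), fun f => ?_, ?_⟩
  · have := key (Polynomial.C f)
    rw [halg, Polynomial.aeval_C] at this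
    simpa [e] using this
  · have := key Polynomial.X
    rw [halg, Polynomial.aeval_X] at this
    simpa [e] using this

/-- The product of the roots is, up to sign, the constant coefficient. -/
theorem exists_small_root (f : Polynomial ℂ) (hf : f.Monic) (hd : 0 < f.natDegree) (ε : ℝ)
    (hε : 0 < ε) (h : ‖f.coeff 0‖ < ε ^ f.natDegree) : ∃ σ, f.eval σ = 0 ∧ ‖σ‖ < ε := by
  by_contra hcon
  push Not at hcon
  have hs := IsAlgClosed.splits f
  have h1 := hs.coeff_zero_eq_prod_roots_of_monic hf
  have hcard : f.roots.card = f.natDegree := hs.natDegree_eq_card_roots.symm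
  have h2 : ε ^ f.natDegree ≤ ‖f.roots.prod‖ := by
    rw [← hcard]
    have : ∀ S : Multiset ℂ, (∀ z ∈ S, ε ≤ ‖z‖) → ε ^ S.card ≤ ‖S.prod‖ := by
      intro S
      induction S using Multiset.induction_on with
      | empty => simp
      | cons a S ih =>
        intro hS
        rw [Multiset.card_cons, Multiset.prod_cons, norm_mul, pow_succ']
        have h3 := hS a (by simp)
        have h4 := ih fun z hz => hS z (by simp [hz])
        gcongr
    exact this _ fun z hz => hcon z ((Polynomial.mem_roots hf.ne_zero).1 hz)
  rw [h1, norm_mul, norm_pow, norm_neg, norm_one, one_pow, one_mul] at h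
  linarith

theorem norm_le_of_monic_root (f : Polynomial ℂ) (hf : f.Monic) (z : ℂ) (hz : f.eval z = 0) :
    ‖z‖ ≤ 1 + ∑ i ∈ Finset.range f.natDegree, ‖f.coeff i‖ := by
  have hS : 0 ≤ ∑ i ∈ Finset.range f.natDegree, ‖f.coeff i‖ :=
    Finset.sum_nonneg fun _ _ => norm_nonneg _
  by_cases h1 : ‖z‖ ≤ 1
  · linarith
  push Not at h1
  rw [Polynomial.eval_eq_sum_range, Finset.sum_range_succ, hf.coeff_natDegree, one_mul] at hz
  have h2 : ‖z‖ ^ f.natDegree ≤ ∑ i ∈ Finset.range f.natDegree, ‖f.coeff i‖ * ‖z‖ ^ i := by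
    rw [← norm_pow, show z ^ f.natDegree = -∑ i ∈ Finset.range f.natDegree, f.coeff i * z ^ i by
      linear_combination hz, norm_neg]
    refine (norm_sum_le _ _).trans (Finset.sum_le_sum fun i _ => ?_)
    rw [norm_mul, norm_pow]
  rcases Nat.eq_zero_or_pos f.natDegree with h0 | h0
  · rw [h0] at h2; simp at h2; linarith
  have h3 : ∑ i ∈ Finset.range f.natDegree, ‖f.coeff i‖ * ‖z‖ ^ i ≤
      (∑ i ∈ Finset.range f.natDegree, ‖f.coeff i‖) * ‖z‖ ^ (f.natDegree - 1) := by
    rw [Finset.sum_mul]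
    refine Finset.sum_le_sum fun i hi => ?_
    have : i ≤ f.natDegree - 1 := by have := Finset.mem_range.1 hi; omega
    gcongr
    exact h1.le
  have h4 : ‖z‖ ^ f.natDegree = ‖z‖ * ‖z‖ ^ (f.natDegree - 1) := by
    rw [← pow_succ']; congr 1; omega
  have h5 : 0 < ‖z‖ ^ (f.natDegree - 1) := by positivity
  rw [h4] at h2
  have := le_of_mul_le_mul_right (h2.trans h3) h5
  linarith

/-- A polynomial vanishing at `x` and nonzero on the rest of a finite set. -/
theorem exists_separating {n : ℕ} (x : Fin n → ℂ) (T : Finset (Fin n → ℂ)) :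
    ∃ f : MvPolynomial (Fin n) ℂ, eval x f = 0 ∧ ∀ y ∈ T, y ≠ x → eval y f ≠ 0 := by
  classical
  have : ∀ y : Fin n → ℂ, ∃ g : MvPolynomial (Fin n) ℂ, y ≠ x → eval x g = 1 ∧ eval y g = 0 := by
    intro y
    by_cases hy : y = x
    · exact ⟨0, fun h => absurd hy h⟩
    · obtain ⟨i, hi⟩ := Function.ne_iff.1 hy
      refine ⟨MvPolynomial.C (x i - y i)⁻¹ * (X i - MvPolynomial.C (y i)), fun _ => ?_⟩
      have : x i - y i ≠ 0 := sub_ne_zero.2 (Ne.symm hi)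
      simp [this]
  choose g hg using this
  refine ⟨1 - ∏ y ∈ T.erase x, g y, ?_, fun y hy hyx => ?_⟩
  · rw [map_sub, map_one, map_prod, Finset.prod_eq_one fun y hy => (hg y (Finset.ne_of_mem_erase hy)).1,
      sub_self]
  · rw [map_sub, map_one, map_prod, Finset.prod_eq_zero (Finset.mem_erase.2 ⟨hyx, hy⟩) (hg y hyx).2]
    simp

end MetricIsolated

/-! ### Metrically isolated roots are algebraically isolated -/

section MetricIsolated2

/-- A point of a positive-dimensional irreducible affine variety is not isolated: project to an
affine space by Noether normalisation, move the image point, and lift along the root of the minimal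
polynomial of a function separating `x` from the rest of its fibre. -/
theorem exists_seq_points_aux {n : ℕ} {A : Type} [CommRing A] [IsDomain A] [Algebra ℂ A]
    [Algebra.FiniteType ℂ A] (P : Ideal (MvPolynomial (Fin n) ℂ))
    (mk : MvPolynomial (Fin n) ℂ →ₐ[ℂ] A) (hmk : Function.Surjective mk)
    (hmk0 : ∀ f, mk f = 0 ↔ f ∈ P)
    (hlift : ∀ y : Fin n → ℂ, (∀ f ∈ P, eval y f = 0) →
      ∃ φ : A →ₐ[ℂ] ℂ, ∀ f, φ (mk f) = eval y f)
    (x : Fin n → ℂ) (hx : ∀ f ∈ P, eval x f = 0) (k : Fin n)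
    (hk : X k - MvPolynomial.C (x k) ∉ P) :
    ∃ y : ℕ → Fin n → ℂ, (∀ N, ∀ f ∈ P, eval (y N) f = 0) ∧ (∀ N, y N ≠ x) ∧
      Tendsto y atTop (𝓝 x) := by
  classical
  obtain ⟨r, g, hinj, hintegral⟩ := exists_integral_inj_algHom_of_fg ℂ A
  let _ : Algebra (MvPolynomial (Fin r) ℂ) A := g.toRingHom.toAlgebra
  have halg : ∀ f, algebraMap (MvPolynomial (Fin r) ℂ) A f = g f := fun _ => rfl
  have : IsScalarTower ℂ (MvPolynomial (Fin r) ℂ) A :=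
    IsScalarTower.of_algebraMap_eq fun z => by
      rw [halg]; exact (g.commutes z).symm
  have : Algebra.IsIntegral (MvPolynomial (Fin r) ℂ) A := ⟨hintegral⟩
  have : FaithfulSMul (MvPolynomial (Fin r) ℂ) A := (faithfulSMul_iff_algebraMap_injective _ _).2 hinj
  have : Module.IsTorsionFree (MvPolynomial (Fin r) ℂ) A := inferInstance
  choose T hT using fun j : Fin r => hmk (g (X j))
  let t : (Fin n → ℂ) → Fin r → ℂ := fun y j => eval y (T j)
  -- points of `V(P)` satisfy the specialised integral equations
  have claim1 : ∀ y : Fin n → ℂ, (∀ f ∈ P, eval y f = 0) → ∀ f,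
      ((minpoly (MvPolynomial (Fin r) ℂ) (mk f)).map (eval (t y))).eval (eval y f) = 0 := by
    intro y hy f
    obtain ⟨φ, hφ⟩ := hlift y hy
    have hφg : (φ.toRingHom).comp g.toRingHom = eval (t y) := by
      apply MvPolynomial.ringHom_ext
      · intro z
        have h1 : φ (g (MvPolynomial.C z)) = z := by
          simp
        rw [eval_C]; exact h1
      · intro j
        have h1 : φ (g (X j)) = t y j := by rw [← hT, hφ]
        rw [eval_X]; exact h1
    have h0 := minpoly.aeval (MvPolynomial (Fin r) ℂ) (mk f)
    rw [Polynomial.aeval_def] at h0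
    have h1 := congrArg φ.toRingHom h0
    rw [Polynomial.hom_eval₂, map_zero] at h1
    have h2 : φ.toRingHom.comp (algebraMap (MvPolynomial (Fin r) ℂ) A) = eval (t y) := hφg
    have h3 : φ.toRingHom (mk f) = eval y f := hφ f
    rw [h2, h3] at h1
    rw [Polynomial.eval_map]
    exact h1
  have hmonic : ∀ f, (minpoly (MvPolynomial (Fin r) ℂ) (mk f)).Monic := fun f =>
    minpoly.monic (Algebra.IsIntegral.isIntegral _)
  have hr : 0 < r := by
    by_contra h0
    have h0 : r = 0 := by omega
    subst h0
    have : Algebra.IsIntegral ℂ (MvPolynomial (Fin 0) ℂ) := ⟨fun f => by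
      obtain ⟨z, rfl⟩ := C_surjective (Fin 0) f
      exact isIntegral_algebraMap⟩
    have : Algebra.IsIntegral ℂ A := Algebra.IsIntegral.trans (MvPolynomial (Fin 0) ℂ)
    obtain ⟨z, hz⟩ := (IsAlgClosed.algebraMap_bijective_of_isIntegral (k := ℂ) (K := A)).2 (mk (X k))
    have h1 : X k - MvPolynomial.C z ∈ P := by
      rw [← hmk0, map_sub, ← hz]
      exact sub_eq_zero.2 (mk.commutes z).symm
    have h2 := hx _ h1
    simp only [map_sub, eval_X, eval_C] at h2
    rw [← sub_eq_zero.1 h2] at h1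
    exact hk h1
  obtain ⟨f, hf0, hf⟩ := exists_separating x (Fintype.piFinset fun i =>
    ((minpoly (MvPolynomial (Fin r) ℂ) (mk (X i))).map (eval (t x))).roots.toFinset)
  let μ := minpoly (MvPolynomial (Fin r) ℂ) (mk f)
  have hμdeg : 0 < μ.natDegree := minpoly.natDegree_pos (Algebra.IsIntegral.isIntegral _)
  have hstep : ∀ N : ℕ, ∃ y : Fin n → ℂ, (∀ q ∈ P, eval y q = 0) ∧ t y ≠ t x ∧
      dist (t y) (t x) ≤ 1 / ((N : ℝ) + 1) ∧ ‖eval y f‖ ≤ 1 / ((N : ℝ) + 1) := by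
    intro N
    have hε : 0 < 1 / ((N : ℝ) + 1) := by positivity
    let τ : ℝ → Fin r → ℂ := fun s j => t x j + (s : ℂ)
    have hτ : Continuous τ := by fun_prop
    have hτ0 : τ 0 = t x := by ext j; simp [τ]
    have hc : Tendsto (fun s => ‖eval (τ s) (μ.coeff 0)‖) (𝓝 0) (𝓝 0) := by
      have h1 : Continuous fun s => ‖eval (τ s) (μ.coeff 0)‖ :=
        ((MvPolynomial.continuous_eval (μ.coeff 0)).comp hτ).norm
      have h2 := h1.tendsto 0
      have h3 : eval (t x) (μ.coeff 0) = 0 := by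
        have := claim1 x hx f
        rw [hf0, ← Polynomial.coeff_zero_eq_eval_zero, Polynomial.coeff_map] at this
        exact this
      rwa [hτ0, h3, norm_zero] at h2
    have hd : Tendsto (fun s => dist (τ s) (t x)) (𝓝 0) (𝓝 0) := by
      have h1 : Continuous fun s => dist (τ s) (t x) := by fun_prop
      have h2 := h1.tendsto 0
      rwa [hτ0, dist_self] at h2
    have e1 := hc.eventually (gt_mem_nhds (show (0:ℝ) < (1 / ((N : ℝ) + 1)) ^ μ.natDegree by positivity))
    have e2 := hd.eventually (gt_mem_nhds hε)
    obtain ⟨s, ⟨hs1, hs2⟩, hs0⟩ : ∃ s : ℝ, (‖eval (τ s) (μ.coeff 0)‖ < (1 / ((N : ℝ) + 1)) ^ μ.natDegree ∧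
        dist (τ s) (t x) < 1 / ((N : ℝ) + 1)) ∧ s ∈ ({0}ᶜ : Set ℝ) :=
      (((e1.and e2).filter_mono nhdsWithin_le_nhds).and self_mem_nhdsWithin).exists (f := 𝓝[≠] (0:ℝ))
    obtain ⟨σ, hσ, hσε⟩ := exists_small_root (μ.map (eval (τ s))) ((hmonic f).map _)
      (by rwa [(hmonic f).natDegree_map]) _ hε (by
        rw [(hmonic f).natDegree_map, Polynomial.coeff_map]; exact hs1)
    obtain ⟨φ, hφ1, hφ2⟩ := exists_point (mk f) (τ s) σ hσ
    let y : Fin n → ℂ := fun i => φ (mk (X i))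
    have hy : ∀ q, eval y q = φ (mk q) := by
      intro q
      have : (aeval y : MvPolynomial (Fin n) ℂ →ₐ[ℂ] ℂ) = φ.comp mk := by
        apply MvPolynomial.algHom_ext
        intro i; simp [y]
      have h2 := congrArg (fun h => h q) this
      beta_reduce at h2
      rw [aeval_eq_eval] at h2
      exact h2
    have hty : t y = τ s := by
      ext j
      change eval y (T j) = _
      rw [hy, hT, ← halg, hφ1, eval_X]
    refine ⟨y, fun q hq => by rw [hy, (hmk0 q).2 hq, map_zero], ?_, by rw [hty]; exact hs2.le, ?_⟩
    · rw [hty]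
      intro h
      have := congrFun h ⟨0, hr⟩
      apply hs0
      simpa [τ] using this
    · rw [hy, hφ2]; exact hσε.le
  choose y hyP hyt hyd hyf using hstep
  have hN1 : ∀ N : ℕ, 1 / ((N : ℝ) + 1) ≤ 1 := fun N => by
    rw [div_le_one (by positivity)]; linarith [(Nat.cast_nonneg N : (0:ℝ) ≤ N)]
  have hbdd : ∀ i : Fin n, ∃ B : ℝ, ∀ N, ‖y N i‖ ≤ B := by
    intro i
    let Mi := minpoly (MvPolynomial (Fin r) ℂ) (mk (X i))
    have hcont : Continuous fun τ : Fin r → ℂ =>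
        1 + ∑ l ∈ Finset.range Mi.natDegree, ‖eval τ (Mi.coeff l)‖ := by
      refine continuous_const.add (continuous_finset_sum _ fun l _ => ?_)
      exact (MvPolynomial.continuous_eval (Mi.coeff l)).norm
    obtain ⟨B, hB⟩ := (isCompact_closedBall (t x) 1).exists_bound_of_continuousOn hcont.continuousOn
    refine ⟨B, fun N => ?_⟩
    have h1 := norm_le_of_monic_root _ ((hmonic (X i)).map (eval (t (y N)))) _
      (claim1 (y N) (hyP N) (X i))
    rw [eval_X, (hmonic (X i)).natDegree_map] at h1
    simp only [Polynomial.coeff_map] at h1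
    exact h1.trans ((le_abs_self _).trans (hB (t (y N)) ((hyd N).trans (hN1 N))))
  choose B hB using hbdd
  have hbounded : Bornology.IsBounded (Set.range y) := by
    rw [isBounded_iff_forall_norm_le]
    refine ⟨∑ i, |B i|, ?_⟩
    rintro _ ⟨N, rfl⟩
    rw [pi_norm_le_iff_of_nonneg (Finset.sum_nonneg fun _ _ => abs_nonneg _)]
    intro i
    exact ((hB i N).trans (le_abs_self _)).trans
      (Finset.single_le_sum (f := fun i => |B i|) (fun _ _ => abs_nonneg _) (Finset.mem_univ i))
  obtain ⟨z, -, φ, hφ, hz⟩ := tendsto_subseq_of_bounded hbounded fun N => Set.mem_range_self N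
  have hlim : ∀ q : MvPolynomial (Fin n) ℂ, Tendsto (fun N => eval (y (φ N)) q) atTop (𝓝 (eval z q)) :=
    fun q => ((MvPolynomial.continuous_eval q).tendsto z).comp hz
  have hone : Tendsto (fun N => 1 / ((φ N : ℝ) + 1)) atTop (𝓝 0) :=
    (tendsto_one_div_add_atTop_nhds_zero_nat (𝕜 := ℝ)).comp hφ.tendsto_atTop
  have hzP : ∀ q ∈ P, eval z q = 0 := fun q hq => by
    have h1 := hlim q
    simp only [hyP _ q hq] at h1
    exact (tendsto_nhds_unique h1 tendsto_const_nhds)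
  have hzt : t z = t x := by
    have h1 : Tendsto (fun N => t (y (φ N))) atTop (𝓝 (t z)) := by
      rw [tendsto_pi_nhds]; exact fun j => hlim (T j)
    have h2 : Tendsto (fun N => t (y (φ N))) atTop (𝓝 (t x)) := by
      rw [tendsto_iff_dist_tendsto_zero]
      exact squeeze_zero (fun _ => dist_nonneg) (fun N => hyd (φ N)) hone
    exact tendsto_nhds_unique h1 h2
  have hzf : eval z f = 0 := by
    have h2 : Tendsto (fun N => eval (y (φ N)) f) atTop (𝓝 0) :=
      squeeze_zero_norm (fun N => hyf (φ N)) hone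
    exact tendsto_nhds_unique (hlim f) h2
  have hzx : z = x := by
    by_contra hne
    refine hf z ?_ hne hzf
    rw [Fintype.mem_piFinset]
    intro i
    rw [Multiset.mem_toFinset, Polynomial.mem_roots ((hmonic (X i)).map _).ne_zero]
    have := claim1 z hzP (X i)
    rw [eval_X, hzt] at this
    exact this
  rw [hzx] at hz
  exact ⟨y ∘ φ, fun N => hyP (φ N), fun N h => hyt (φ N) (by rw [← h]; rfl), hz⟩

/-- A point of an irreducible affine variety other than a single point is a limit of other points. -/
theorem exists_seq_points {n : ℕ} (P : Ideal (MvPolynomial (Fin n) ℂ)) (hP : P.IsPrime)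
    (x : Fin n → ℂ) (hx : ∀ f ∈ P, eval x f = 0) (k : Fin n)
    (hk : X k - MvPolynomial.C (x k) ∉ P) :
    ∃ y : ℕ → Fin n → ℂ, (∀ N, ∀ f ∈ P, eval (y N) f = 0) ∧ (∀ N, y N ≠ x) ∧
      Tendsto y atTop (𝓝 x) := by
  refine exists_seq_points_aux P (Ideal.Quotient.mkₐ ℂ P) (Ideal.Quotient.mkₐ_surjective ℂ P)
    (fun f => Ideal.Quotient.eq_zero_iff_mem) (fun y hy => ?_) x hx k hk
  refine ⟨Ideal.Quotient.liftₐ P (aeval y) (fun f hf => ?_), fun f => ?_⟩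
  · rw [aeval_eq_eval]; exact hy f hf
  · change aeval y f = _
    rw [aeval_eq_eval]

/-- Over `ℂ`, a root isolated in the metric sense is algebraically isolated. -/
theorem algIsolated_of_isolated {n l : ℕ} (G : Fin l → MvPolynomial (Fin n) ℂ) (x : Fin n → ℂ)
    (hx : ∀ i, eval x (G i) = 0) (hiso : 𝓝[{y | ∀ i, eval y (G i) = 0} \ {x}] x = ⊥) :
    AlgIsolated G x := by
  refine ⟨hx, fun k => ?_⟩
  by_contra hcon
  push Not at hcon
  let S : Submonoid (MvPolynomial (Fin n) ℂ) :=
    { carrier := {f | ∃ (N : ℕ) (q : MvPolynomial (Fin n) ℂ), eval x q ≠ 0 ∧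
        f = q * (X k - MvPolynomial.C (x k)) ^ N}
      one_mem' := ⟨0, 1, by simp, by simp⟩
      mul_mem' := by
        rintro _ _ ⟨N, q, hq, rfl⟩ ⟨N', q', hq', rfl⟩
        exact ⟨N + N', q * q', by rw [map_mul]; exact mul_ne_zero hq hq', by ring⟩ }
  obtain ⟨P, hP, hle, hdis⟩ := Ideal.exists_le_prime_disjoint (Ideal.span (Set.range G)) S (by
    rw [Set.disjoint_left]
    rintro f hf ⟨N, q, hq, rfl⟩
    exact hcon N q hq hf)
  rw [Set.disjoint_left] at hdis
  have hxP : ∀ f ∈ P, eval x f = 0 := by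
    intro f hf
    by_contra h
    exact hdis hf ⟨0, f, h, by simp⟩
  obtain ⟨y, hy1, hy2, hy3⟩ := exists_seq_points P hP x hxP k fun h =>
    hdis h ⟨1, 1, by simp, by simp⟩
  have h1 : Tendsto y atTop (𝓝[{y | ∀ i, eval y (G i) = 0} \ {x}] x) := by
    refine tendsto_nhdsWithin_iff.2 ⟨hy3, Eventually.of_forall fun N => ⟨fun i => ?_, hy2 N⟩⟩
    exact hy1 N _ (hle (Ideal.subset_span ⟨i, rfl⟩))
  rw [hiso] at h1
  exact (h1.neBot).ne rfl

end MetricIsolated2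

/-! ### Elements of bounded degree over the rationals -/

section BoundedDegree

variable {C : Type} [NormedField C] [IsUltrametricDist C] [IsAlgClosed C] [CharZero C]

theorem norm_ratCast_eq (p : ℕ) [hp : Fact p.Prime] [NormedAlgebra ℚ_[p] C] (a : ℚ) :
    ‖(a : C)‖ = ‖(a : ℚ_[p])‖ := by
  have h1 : (a : C) = algebraMap ℚ_[p] C a := by simp
  rw [h1, norm_algebraMap']

theorem exists_norm_ratCast (p : ℕ) [hp : Fact p.Prime] [NormedAlgebra ℚ_[p] C] (a : ℚ) (ha : a ≠ 0) :
    ∃ w : ℤ, ‖(a : C)‖ = ‖(p : C)‖ ^ w := by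
  have h1 : ‖(p : C)‖ = (p : ℝ)⁻¹ := by
    have h1 : (p : C) = algebraMap ℚ_[p] C p := by simp
    rw [h1, norm_algebraMap', Padic.norm_p]
  refine ⟨(a : ℚ_[p]).valuation, ?_⟩
  rw [norm_ratCast_eq p, Padic.norm_eq_zpow_neg_valuation (by exact_mod_cast ha), h1, inv_zpow, zpow_neg]

/-- The value group of elements of degree at most `D` over `ℚ` lies in `(D !)⁻¹ ℤ`: two terms of an
annihilating polynomial have equal norm. -/
theorem exists_norm_pow_factorial (p : ℕ) [hp : Fact p.Prime] [NormedAlgebra ℚ_[p] C] (D : ℕ) (y : C)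
    (hy : y ≠ 0) (q : Polynomial ℚ) (hq : q ≠ 0) (hdeg : q.natDegree ≤ D)
    (hroot : Polynomial.aeval y q = 0) : ∃ v : ℤ, ‖y‖ ^ D.factorial = ‖(p : C)‖ ^ v := by
  classical
  have hy' : 0 < ‖y‖ := norm_pos_iff.2 hy
  rw [Polynomial.aeval_eq_sum_range] at hroot
  let S := q.support
  have hSne : S.Nonempty := Polynomial.support_nonempty.2 hq
  have hsum : ∑ i ∈ S, (q.coeff i : C) * y ^ i = 0 := by
    rw [← hroot]
    refine Finset.sum_subset_zero_on_sdiff ?_ ?_ ?_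
    · intro i hi
      exact Finset.mem_range.2 (Nat.lt_succ_of_le (Polynomial.le_natDegree_of_mem_supp i hi))
    · intro i hi
      have := (Finset.mem_sdiff.1 hi).2
      rw [Polynomial.notMem_support_iff.1 this, zero_smul]
    · intro i hi
      rw [Algebra.smul_def]; rfl
  obtain ⟨i, hi, hmax⟩ := S.exists_max_image (fun i => ‖(q.coeff i : C) * y ^ i‖) hSne
  have hpos : ∀ i ∈ S, 0 < ‖(q.coeff i : C) * y ^ i‖ := fun i hi => by
    rw [norm_pos_iff]
    exact mul_ne_zero (by exact_mod_cast Polynomial.mem_support_iff.1 hi) (pow_ne_zero _ hy)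
  obtain ⟨j, hj, hij, heq⟩ : ∃ j ∈ S, j ≠ i ∧ ‖(q.coeff j : C) * y ^ j‖ = ‖(q.coeff i : C) * y ^ i‖ := by
    by_contra hcon
    push Not at hcon
    rw [← Finset.add_sum_erase S _ hi] at hsum
    have h1 : ‖(q.coeff i : C) * y ^ i‖ = ‖∑ j ∈ S.erase i, (q.coeff j : C) * y ^ j‖ := by
      rw [eq_neg_of_add_eq_zero_left hsum, norm_neg]
    rcases (S.erase i).eq_empty_or_nonempty with h0 | h0
    · rw [h0, Finset.sum_empty, norm_zero] at h1
      exact (hpos i hi).ne' h1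
    · obtain ⟨j, hj, hle⟩ := IsUltrametricDist.exists_norm_finsetSum_le_of_nonempty h0
        (fun j => (q.coeff j : C) * y ^ j)
      have hj' := Finset.mem_erase.1 hj
      have h2 := hmax j hj'.2
      exact hcon j hj'.2 hj'.1 (le_antisymm h2 (h1.le.trans hle))
  obtain ⟨w, hw⟩ := exists_norm_ratCast (C := C) p (q.coeff i) (Polynomial.mem_support_iff.1 hi)
  obtain ⟨w', hw'⟩ := exists_norm_ratCast (C := C) p (q.coeff j) (Polynomial.mem_support_iff.1 hj)
  have hp0 : ‖(p : C)‖ ≠ 0 := (norm_natCast_p_pos p).ne'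
  rw [norm_mul, norm_mul, norm_pow, norm_pow, hw, hw'] at heq
  have hiD : i ≤ D := (Polynomial.le_natDegree_of_mem_supp i hi).trans hdeg
  have hjD : j ≤ D := (Polynomial.le_natDegree_of_mem_supp j hj).trans hdeg
  have key : ∀ (i j : ℕ) (w w' : ℤ), i < j → j ≤ D → ‖(p : C)‖ ^ w' * ‖y‖ ^ j = ‖(p : C)‖ ^ w * ‖y‖ ^ i →
      ∃ v : ℤ, ‖y‖ ^ D.factorial = ‖(p : C)‖ ^ v := by
    intro i j w w' hij hjD h
    have h1 : ‖y‖ ^ (j - i) = ‖(p : C)‖ ^ (w - w') := by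
      rw [zpow_sub₀ hp0, eq_div_iff (zpow_ne_zero _ hp0)]
      have h2 : ‖y‖ ^ j = ‖y‖ ^ (j - i) * ‖y‖ ^ i := by rw [← pow_add]; congr 1; omega
      rw [h2] at h
      have h3 : ‖y‖ ^ i ≠ 0 := by positivity
      apply mul_right_cancel₀ h3
      linarith
    obtain ⟨e, he⟩ : j - i ∣ D.factorial := Nat.dvd_factorial (by omega) (by omega)
    refine ⟨(w - w') * e, ?_⟩
    rw [he, pow_mul, h1, zpow_mul, zpow_natCast]
  rcases lt_or_gt_of_ne hij with h | h
  · exact key j i w' w h hiD heq.symm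
  · exact key i j w w' h hjD heq

/-- Gauss norm bound for a split monic polynomial. -/
theorem norm_coeff_prod_X_sub_C_le (s : Multiset C) (j : ℕ) :
    ‖((s.map fun ρ => Polynomial.X - Polynomial.C ρ).prod).coeff j‖ ≤
      (s.map fun ρ => max 1 ‖ρ‖).prod := by
  induction s using Multiset.induction_on generalizing j with
  | empty =>
    simp only [Multiset.map_zero, Multiset.prod_zero, Polynomial.coeff_one]
    split_ifs <;> simp
  | cons a s ih =>
    rw [Multiset.map_cons, Multiset.prod_cons, Multiset.map_cons, Multiset.prod_cons]
    have h0 : 0 ≤ (s.map fun ρ => max 1 ‖ρ‖).prod := (norm_nonneg _).trans (ih 0)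
    have h1 : ∀ i, ‖a * ((s.map fun ρ => Polynomial.X - Polynomial.C ρ).prod).coeff i‖ ≤
        max 1 ‖a‖ * (s.map fun ρ => max 1 ‖ρ‖).prod := fun i => by
      rw [norm_mul]
      exact mul_le_mul (le_max_right _ _) (ih i) (norm_nonneg _) (by positivity)
    cases j with
    | zero =>
      rw [Polynomial.mul_coeff_zero, Polynomial.coeff_sub, Polynomial.coeff_X_zero,
        Polynomial.coeff_C_zero, zero_sub, neg_mul, norm_neg]
      exact h1 0
    | succ j =>
      rw [Polynomial.coeff_X_sub_C_mul, sub_eq_add_neg]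
      refine (IsUltrametricDist.norm_add_le_max _ _).trans (max_le ?_ ?_)
      · exact (ih j).trans (le_mul_of_one_le_left h0 (le_max_left _ _))
      · rw [norm_neg]; exact h1 _

/-- A unit at which a polynomial of Gauss norm at least one is small lies near a root: a factorisation
into linear factors bounds the value from below by the product of the distances to the roots. -/
theorem exists_close_root (ε : ℝ) (hε0 : 0 < ε) (hε1 : ε < 1) (g : Polynomial C) (D : ℕ)
    (hD : g.natDegree ≤ D) (j : ℕ) (hj : ‖g.coeff j‖ = 1) (z : C) (hz : ‖z‖ = 1)
    (hgz : ‖g.eval z‖ < ε ^ D) : ∃ ρ, g.IsRoot ρ ∧ ‖z - ρ‖ < ε ∧ ‖ρ‖ = 1 := by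
  have hg0 : g ≠ 0 := by rintro rfl; simp at hj
  have hs := IsAlgClosed.splits g
  have hg : g = Polynomial.C g.leadingCoeff * (g.roots.map fun ρ => Polynomial.X - Polynomial.C ρ).prod :=
    hs.eq_prod_roots
  have hcard : g.roots.card ≤ D := (Polynomial.card_roots' g).trans hD
  obtain ⟨ρ, hρ, hclose⟩ : ∃ ρ ∈ g.roots, ‖z - ρ‖ < ε * max 1 ‖ρ‖ := by
    by_contra hcon
    push Not at hcon
    have h1 : ∀ s : Multiset C, (∀ ρ ∈ s, ε * max 1 ‖ρ‖ ≤ ‖z - ρ‖) →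
        ε ^ s.card * (s.map fun ρ => max 1 ‖ρ‖).prod ≤
          ‖((s.map fun ρ => Polynomial.X - Polynomial.C ρ).prod).eval z‖ := by
      intro s
      induction s using Multiset.induction_on with
      | empty => simp
      | cons a s ih =>
        intro hs
        have h2 := ih fun ρ hρ => hs ρ (by simp [hρ])
        have h3 := hs a (by simp)
        rw [Multiset.map_cons, Multiset.prod_cons, Multiset.map_cons, Multiset.prod_cons,
          Polynomial.eval_mul, norm_mul, Multiset.card_cons, pow_succ]
        have h4 : Polynomial.eval z (Polynomial.X - Polynomial.C a) = z - a := by simp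
        rw [h4]
        have h5 : 0 ≤ (s.map fun ρ => max 1 ‖ρ‖).prod :=
          (norm_nonneg _).trans (norm_coeff_prod_X_sub_C_le s 0)
        calc ε ^ s.card * ε * (max 1 ‖a‖ * (s.map fun ρ => max 1 ‖ρ‖).prod)
            = (ε * max 1 ‖a‖) * (ε ^ s.card * (s.map fun ρ => max 1 ‖ρ‖).prod) := by ring
          _ ≤ _ := mul_le_mul h3 h2 (by positivity) (norm_nonneg _)
    have h2 := h1 g.roots hcon
    have h3 : ‖g.coeff j‖ ≤ ‖g.leadingCoeff‖ * (g.roots.map fun ρ => max 1 ‖ρ‖).prod := by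
      conv_lhs => rw [hg]
      rw [Polynomial.coeff_C_mul, norm_mul]
      exact mul_le_mul_of_nonneg_left (norm_coeff_prod_X_sub_C_le _ _) (norm_nonneg _)
    have h4 : ε ^ D ≤ ‖g.eval z‖ := by
      conv_rhs => rw [hg]
      rw [Polynomial.eval_mul, Polynomial.eval_C, norm_mul]
      calc ε ^ D ≤ ε ^ g.roots.card := pow_le_pow_of_le_one hε0.le hε1.le hcard
        _ = ε ^ g.roots.card * 1 := (mul_one _).symm
        _ ≤ ε ^ g.roots.card * (‖g.leadingCoeff‖ * (g.roots.map fun ρ => max 1 ‖ρ‖).prod) := by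
            rw [hj] at h3; gcongr
        _ = ‖g.leadingCoeff‖ * (ε ^ g.roots.card * (g.roots.map fun ρ => max 1 ‖ρ‖).prod) := by ring
        _ ≤ _ := mul_le_mul_of_nonneg_left h2 (norm_nonneg _)
    linarith
  have hρ1 : ‖ρ‖ ≤ 1 := by
    by_contra h
    push Not at h
    have h1 : ‖z - ρ‖ = ‖ρ‖ := by
      rw [sub_eq_add_neg, IsUltrametricDist.norm_add_eq_max_of_norm_ne_norm (by
        rw [hz, norm_neg]; exact h.ne), norm_neg, hz, max_eq_right h.le]
    rw [h1, max_eq_right h.le] at hclose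
    nlinarith
  rw [max_eq_left hρ1, mul_one] at hclose
  refine ⟨ρ, (Polynomial.mem_roots hg0).1 hρ, hclose, le_antisymm hρ1 ?_⟩
  have h1 : ‖z‖ ≤ max ‖z - ρ‖ ‖ρ‖ := by
    conv_lhs => rw [← sub_add_cancel z ρ]
    exact IsUltrametricDist.norm_add_le_max _ _
  rw [hz] at h1
  rcases le_max_iff.1 h1 with h | h
  · linarith
  · exact h

/-- The units of degree at most `D` over `ℚ` are totally bounded. -/
theorem exists_finite_net (p : ℕ) [hp : Fact p.Prime] [NormedAlgebra ℚ_[p] C] (D : ℕ) :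
    ∃ 𝒯 : Finset C, (∀ ζ ∈ 𝒯, ‖ζ‖ = 1) ∧ ∀ (z : C) (q : Polynomial ℚ), ‖z‖ = 1 → q ≠ 0 →
      q.natDegree ≤ D → Polynomial.aeval z q = 0 → ∃ ζ ∈ 𝒯, ‖z - ζ‖ ≤ ‖(p : C)‖ ^ 2 := by
  classical
  have hp0 := norm_natCast_p_pos (C := C) p
  have hp1 := norm_natCast_p_lt_one (C := C) p
  have hpC : ‖(p : C)‖ = (p : ℝ)⁻¹ := by
    have h1 : (p : C) = algebraMap ℚ_[p] C p := by simp
    rw [h1, norm_algebraMap', Padic.norm_p]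
  let N := 2 * D + 1
  let g : (Fin (D + 1) → Fin (p ^ N)) → Polynomial C := fun a =>
    ∑ i, Polynomial.C (((a i : ℕ) : C)) * Polynomial.X ^ (i : ℕ)
  have hgc : ∀ a (i : Fin (D + 1)), (g a).coeff i = ((a i : ℕ) : C) := by
    intro a i
    simp only [g, Polynomial.finset_sum_coeff, Polynomial.coeff_C_mul_X_pow]
    rw [Finset.sum_eq_single i]
    · simp
    · intro j _ hji
      rw [if_neg]
      exact fun h => hji (Fin.ext h.symm)
    · simp
  have hgd : ∀ a, (g a).natDegree ≤ D := by
    intro a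
    refine Polynomial.natDegree_sum_le_of_forall_le _ _ fun i _ => ?_
    exact (Polynomial.natDegree_C_mul_X_pow_le _ _).trans (Nat.lt_succ_iff.1 i.2)
  refine ⟨Finset.univ.biUnion fun a => (g a).roots.toFinset.filter fun ζ => ‖ζ‖ = 1, ?_, ?_⟩
  · intro ζ hζ
    obtain ⟨a, -, ha⟩ := Finset.mem_biUnion.1 hζ
    exact (Finset.mem_filter.1 ha).2
  intro z q hz hq hdeg hroot
  obtain ⟨i₀, hi₀, hmax⟩ := q.support.exists_max_image (fun i => ‖(q.coeff i : C)‖)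
    (Polynomial.support_nonempty.2 hq)
  have hi₀' : q.coeff i₀ ≠ 0 := Polynomial.mem_support_iff.1 hi₀
  have hi₀D : i₀ < D + 1 := Nat.lt_succ_of_le ((Polynomial.le_natDegree_of_mem_supp i₀ hi₀).trans hdeg)
  let b : ℕ → ℚ := fun i => q.coeff i / q.coeff i₀
  have hb : ∀ i, ‖(b i : ℚ_[p])‖ ≤ 1 := by
    intro i
    rw [← norm_ratCast_eq (C := C) p]
    by_cases hi : i ∈ q.support
    · have : (b i : C) = (q.coeff i : C) / (q.coeff i₀ : C) := by simp [b]
      rw [this, norm_div, div_le_one (by rw [norm_pos_iff]; exact_mod_cast hi₀')]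
      exact hmax i hi
    · simp [b, Polynomial.notMem_support_iff.1 hi]
  let a : Fin (D + 1) → Fin (p ^ N) := fun i =>
    ⟨PadicInt.appr (⟨(b i : ℚ_[p]), hb i⟩ : ℤ_[p]) N, PadicInt.appr_lt _ _⟩
  have ha : ∀ i, ‖((a i : ℕ) : C) - (b i : C)‖ ≤ ‖(p : C)‖ ^ N := by
    intro i
    have h1 := (PadicInt.norm_le_pow_iff_mem_span_pow _ N).2
      (PadicInt.appr_spec N (⟨(b i : ℚ_[p]), hb i⟩ : ℤ_[p]))
    rw [PadicInt.norm_def] at h1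
    have h2 : ((a i : ℕ) : C) - (b i : C) = algebraMap ℚ_[p] C (((a i : ℕ) : ℚ_[p]) - (b i : ℚ_[p])) := by
      simp
    rw [h2, norm_algebraMap', norm_sub_rev, hpC]
    rw [zpow_neg, zpow_natCast, ← inv_pow] at h1
    refine le_trans (le_of_eq ?_) h1
    congr 1
  have hsum : ∑ i : Fin (D + 1), (b i : C) * z ^ (i : ℕ) = 0 := by
    rw [Polynomial.aeval_eq_sum_range' (Nat.lt_succ_of_le hdeg)] at hroot
    rw [← Fin.sum_univ_eq_sum_range (fun i => q.coeff i • z ^ i)] at hroot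
    have : ∀ i : Fin (D + 1), (b i : C) * z ^ (i : ℕ) = (q.coeff i₀ : C)⁻¹ * (q.coeff i • z ^ (i : ℕ)) := by
      intro i
      rw [Algebra.smul_def]
      simp only [b, Rat.cast_div, eq_ratCast]
      ring
    simp only [this]
    rw [← Finset.mul_sum]
    rw [hroot, mul_zero]
  have hgz : ‖(g a).eval z‖ ≤ ‖(p : C)‖ ^ N := by
    have h1 : (g a).eval z = ∑ i : Fin (D + 1), (((a i : ℕ) : C) - (b i : C)) * z ^ (i : ℕ) := by
      simp only [sub_mul, Finset.sum_sub_distrib, hsum, sub_zero, g, Polynomial.eval_finset_sum]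
      simp
    rw [h1]
    refine IsUltrametricDist.norm_sum_le_of_forall_le_of_nonneg (by positivity) fun i _ => ?_
    rw [norm_mul, norm_pow, hz, one_pow, mul_one]
    exact ha i
  have hcoeff : ‖(g a).coeff i₀‖ = 1 := by
    have h1 := hgc a ⟨i₀, hi₀D⟩
    have h2 := ha ⟨i₀, hi₀D⟩
    have h3 : b i₀ = 1 := div_self hi₀'
    simp only [h3, Rat.cast_one] at h2 h1
    rw [h1]
    have h4 : ‖(p : C)‖ ^ N < 1 := pow_lt_one₀ hp0.le hp1 (by omega)
    have h5 := IsUltrametricDist.norm_add_eq_max_of_norm_ne_norm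
      (x := ((a ⟨i₀, hi₀D⟩ : ℕ) : C) - 1) (y := 1) (by rw [norm_one]; exact (h2.trans_lt h4).ne)
    rw [sub_add_cancel, norm_one, max_eq_right (h2.trans h4.le)] at h5
    exact h5
  obtain ⟨ρ, hρ, hclose, hρ1⟩ := exists_close_root (‖(p : C)‖ ^ 2) (by positivity)
    (pow_lt_one₀ hp0.le hp1 (by omega)) (g a) D (hgd a) i₀ hcoeff z hz (by
      refine hgz.trans_lt ?_
      rw [← pow_mul]
      exact pow_lt_pow_right_of_lt_one₀ hp0 hp1 (by omega))
  refine ⟨ρ, Finset.mem_biUnion.2 ⟨a, Finset.mem_univ _, Finset.mem_filter.2 ⟨?_, hρ1⟩⟩, hclose.le⟩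
  rw [Multiset.mem_toFinset, Polynomial.mem_roots]
  · exact hρ
  · intro h; rw [h] at hcoeff; simp at hcoeff

/-- Multiplicative decomposition, through finitely many units, of the elements of bounded degree over
`ℚ`. -/
theorem exists_decomposition (p : ℕ) [hp : Fact p.Prime] [NormedAlgebra ℚ_[p] C] (D : ℕ) :
    ∃ (𝒯 : Finset C) (π : C), (∀ ζ ∈ 𝒯, ‖ζ‖ = 1) ∧ 0 < ‖π‖ ∧ ‖π‖ < 1 ∧
      ∀ (y : C) (q : Polynomial ℚ), q ≠ 0 → q.natDegree ≤ D → Polynomial.aeval y q = 0 →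
        y = 0 ∨ ∃ (v : ℤ), ∃ ζ ∈ 𝒯, ∃ u : C, ‖u - 1‖ ≤ ‖(p : C)‖ ^ 2 ∧ y = π ^ v * ζ * u := by
  classical
  have hp0 := norm_natCast_p_pos (C := C) p
  have hp1 := norm_natCast_p_lt_one (C := C) p
  have hf := Nat.factorial_pos D
  obtain ⟨π, hπ⟩ := IsAlgClosed.exists_pow_nat_eq (p : C) hf
  obtain ⟨𝒯, h𝒯, hnet⟩ := exists_finite_net (C := C) p (D * D.factorial)
  have hπn : ‖π‖ ^ D.factorial = ‖(p : C)‖ := by rw [← norm_pow, hπ]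
  have hπ0 : 0 < ‖π‖ := by
    rw [norm_pos_iff]
    rintro rfl
    rw [norm_zero, zero_pow hf.ne'] at hπn
    exact hp0.ne hπn
  have hπ1 : ‖π‖ < 1 := by
    rw [← hπn] at hp1
    exact (pow_lt_one_iff_of_nonneg hπ0.le hf.ne').1 hp1
  have hπne : π ≠ 0 := norm_pos_iff.1 hπ0
  refine ⟨𝒯, π, h𝒯, hπ0, hπ1, fun y q hq hdeg hroot => ?_⟩
  by_cases hy : y = 0
  · exact Or.inl hy
  right
  obtain ⟨v, hv⟩ := exists_norm_pow_factorial p D y hy q hq hdeg hroot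
  have hyv : ‖y‖ = ‖π‖ ^ v := by
    rw [← hπn, ← zpow_natCast ‖π‖, ← zpow_mul, mul_comm, zpow_mul, zpow_natCast] at hv
    exact (pow_left_inj₀ (norm_nonneg _) (by positivity) hf.ne').1 hv
  let z := y / π ^ v
  have hπv : π ^ v ≠ 0 := zpow_ne_zero _ hπne
  have hz : ‖z‖ = 1 := by
    rw [norm_div, norm_zpow, hyv, div_self (by positivity)]
  have hiy : IsIntegral ℚ y := IsAlgebraic.isIntegral ⟨q, hq, hroot⟩
  have hrπ : Polynomial.aeval π (Polynomial.X ^ D.factorial - Polynomial.C (p : ℚ)) = 0 := by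
    simp [hπ]
  have hqπ : (Polynomial.X ^ D.factorial - Polynomial.C (p : ℚ)).Monic :=
    Polynomial.monic_X_pow_sub_C _ hf.ne'
  have hiπ : IsIntegral ℚ π := ⟨_, hqπ, hrπ⟩
  have hfy : FiniteDimensional ℚ (IntermediateField.adjoin ℚ {y}) := IntermediateField.adjoin.finiteDimensional hiy
  have hfπ : FiniteDimensional ℚ (IntermediateField.adjoin ℚ {π}) := IntermediateField.adjoin.finiteDimensional hiπ
  let E := IntermediateField.adjoin ℚ {y} ⊔ IntermediateField.adjoin ℚ {π}
  have hfE : FiniteDimensional ℚ E := IntermediateField.finiteDimensional_sup _ _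
  have hzE : z ∈ E := by
    have h1 : y ∈ E := (le_sup_left : _ ≤ E) (IntermediateField.mem_adjoin_simple_self ℚ y)
    have h2 : π ∈ E := (le_sup_right : _ ≤ E) (IntermediateField.mem_adjoin_simple_self ℚ π)
    exact div_mem h1 (zpow_mem h2 v)
  have hdz : (minpoly ℚ z).natDegree ≤ D * D.factorial := by
    have h1 : minpoly ℚ z = minpoly ℚ (⟨z, hzE⟩ : E) := minpoly.algebraMap_eq (A := ℚ) (B := E) (algebraMap E C).injective ⟨z, hzE⟩
    rw [h1]
    refine (minpoly.natDegree_le _).trans ((IntermediateField.finrank_sup_le _ _).trans ?_)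
    rw [IntermediateField.adjoin.finrank hiy, IntermediateField.adjoin.finrank hiπ]
    refine Nat.mul_le_mul ?_ ?_
    · exact (Polynomial.natDegree_le_of_dvd (minpoly.dvd ℚ y hroot) hq).trans hdeg
    · refine (Polynomial.natDegree_le_of_dvd (minpoly.dvd ℚ π hrπ) hqπ.ne_zero).trans ?_
      rw [Polynomial.natDegree_X_pow_sub_C]
  have hiz : IsIntegral ℚ z := by
    have : IsIntegral ℚ (⟨z, hzE⟩ : E) := Algebra.IsIntegral.isIntegral _
    exact this.algebraMap (B := C)
  obtain ⟨ζ, hζ, hzζ⟩ := hnet z (minpoly ℚ z) hz (minpoly.ne_zero hiz) hdz (minpoly.aeval ℚ z)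
  have hζ1 := h𝒯 ζ hζ
  have hζ0 : ζ ≠ 0 := by rintro rfl; simp at hζ1
  refine ⟨v, ζ, hζ, z / ζ, ?_, ?_⟩
  · rw [div_sub_one hζ0, norm_div, hζ1, div_one]
    exact hzζ
  · simp only [z]
    field_simp

end BoundedDegree

/-! ### Transfer from the complex numbers to a p-adic field -/

section Transfer

theorem mk_le_continuum_of_denseRange {D X : Type} [PseudoMetricSpace X] [T2Space X] (f : D → X)
    (hf : DenseRange f) (hD : Cardinal.mk D ≤ Cardinal.continuum) :
    Cardinal.mk X ≤ Cardinal.continuum := by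
  classical
  have hex : ∀ x : X, ∃ s : ℕ → D, Tendsto (fun N => f (s N)) atTop (𝓝 x) := by
    intro x
    obtain ⟨z, hz, hlim⟩ := mem_closure_iff_seq_limit.1 (hf x)
    choose s hs using hz
    exact ⟨s, by simpa only [hs] using hlim⟩
  choose s hs using hex
  have hinj : Function.Injective s := fun x y h => by
    have h1 := hs x
    rw [h] at h1
    exact tendsto_nhds_unique h1 (hs y)
  calc Cardinal.mk X ≤ Cardinal.mk (ℕ → D) := Cardinal.mk_le_of_injective hinj
    _ = Cardinal.mk D ^ Cardinal.aleph0 := by simp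
    _ ≤ Cardinal.continuum ^ Cardinal.aleph0 := Cardinal.power_le_power_right hD
    _ = Cardinal.continuum := Cardinal.continuum_power_aleph0

/-- Both fields are algebraically closed of characteristic zero and of the cardinality of the continuum. -/
theorem nonempty_ringEquiv_padicComplex (p : ℕ) [Fact p.Prime] : Nonempty (ℂ ≃+* PadicComplex p) := by
  have h1 : Cardinal.mk ℚ_[p] ≤ Cardinal.continuum := by
    refine mk_le_continuum_of_denseRange (fun q : ℚ => (q : ℚ_[p])) ?_ ?_
    · intro x
      rw [Metric.mem_closure_iff]
      intro ε hε
      obtain ⟨r, hr⟩ := Padic.rat_dense p x hε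
      exact ⟨r, ⟨r, rfl⟩, by rwa [dist_eq_norm]⟩
    · exact Cardinal.mk_le_aleph0.trans Cardinal.aleph0_le_continuum
  have h2 : Cardinal.mk (PadicAlgCl p) ≤ Cardinal.continuum :=
    (Algebra.IsAlgebraic.cardinalMk_le_max ℚ_[p] (PadicAlgCl p)).trans
      (max_le h1 Cardinal.aleph0_le_continuum)
  have h3 : Cardinal.mk (PadicComplex p) ≤ Cardinal.continuum :=
    mk_le_continuum_of_denseRange _ (UniformSpace.Completion.denseRange_coe (α := PadicAlgCl p)) h2
  have h4 := continuum_le_cardinal_of_nontriviallyNormedField (PadicComplex p)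
  have h5 : Cardinal.mk ℂ = Cardinal.mk (PadicComplex p) := by
    rw [Cardinal.mk_complex]; exact le_antisymm h4 h3
  exact IsAlgClosed.ringEquiv_of_equiv_of_charZero
    (by rw [Cardinal.mk_complex]; exact Cardinal.aleph0_lt_continuum) (Cardinal.eq.1 h5)

theorem AlgIsolated.congr {F κ κ' : Type*} [Field F] {n : ℕ} {G : κ → MvPolynomial (Fin n) F}
    {G' : κ' → MvPolynomial (Fin n) F} {x : Fin n → F} (h : AlgIsolated G x)
    (hspan : Ideal.span (Set.range G) = Ideal.span (Set.range G')) : AlgIsolated G' x := by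
  refine ⟨fun i => ?_, fun k => ?_⟩
  · have h1 : Ideal.span (Set.range G) ≤ RingHom.ker (eval x) := by
      rw [Ideal.span_le]
      rintro _ ⟨i, rfl⟩
      exact h.1 i
    rw [hspan] at h1
    exact h1 (Ideal.subset_span ⟨i, rfl⟩)
  · rw [← hspan]; exact h.2 k

theorem AlgIsolated.map {F F' κ : Type*} [Field F] [Field F'] {n : ℕ}
    {G : κ → MvPolynomial (Fin n) F} {x : Fin n → F} (h : AlgIsolated G x) (e : F →+* F') :
    AlgIsolated (fun i => MvPolynomial.map e (G i)) (fun k => e (x k)) := by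
  have hev : ∀ q : MvPolynomial (Fin n) F,
      eval (fun k => e (x k)) (MvPolynomial.map e q) = e (eval x q) := fun q => by
    rw [eval_map]
    exact (MvPolynomial.eval₂_comp e x q).symm
  refine ⟨fun i => by rw [hev, h.1, map_zero], fun k => ?_⟩
  obtain ⟨N, q, hq, hmem⟩ := h.2 k
  refine ⟨N, MvPolynomial.map e q, ?_, ?_⟩
  · rw [hev]
    exact (map_ne_zero e).2 hq
  · have h1 := Ideal.mem_map_of_mem (MvPolynomial.map e) hmem
    rw [Ideal.map_span, ← Set.range_comp] at h1
    simpa [Function.comp_def] using h1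

/-- A subspace of `F ^ m` is spanned by `m` vectors: the images of the standard basis under a
projection. -/
theorem exists_spanning_family {F : Type*} [Field F] {m : ℕ} (R : Submodule F (Fin m → F)) :
    ∃ c : Fin m → Fin m → F, Submodule.span F (Set.range c) = R := by
  obtain ⟨g, hg⟩ := LinearMap.exists_leftInverse_of_injective R.subtype (Submodule.ker_subtype R)
  refine ⟨fun i => (g (Pi.single i 1) : Fin m → F), le_antisymm ?_ ?_⟩
  · rw [Submodule.span_le]
    rintro _ ⟨i, rfl⟩
    exact (g (Pi.single i 1)).2
  · intro r hr
    have h1 : g r = ⟨r, hr⟩ := LinearMap.congr_fun hg ⟨r, hr⟩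
    have h2 : r = ∑ i, r i • (g (Pi.single i 1) : Fin m → F) := by
      have h3 : (g r : Fin m → F) = r := by rw [h1]
      conv_lhs => rw [← h3, pi_eq_sum_univ' r]
      rw [map_sum]
      simp only [map_smul, AddSubmonoidClass.coe_finset_sum, Submodule.coe_smul]
    rw [h2]
    exact Submodule.sum_mem _ fun i _ => Submodule.smul_mem _ _ (Submodule.subset_span ⟨i, rfl⟩)

theorem sparseSys_mem_of_mem_span {F : Type*} [Field F] {l m n : ℕ} (w : Fin l → Fin m → F)
    (a : Fin m → Fin n → ℕ) (v : Fin m → F) (hv : v ∈ Submodule.span F (Set.range w)) :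
    ∑ j, MvPolynomial.C (v j) * ∏ k, X k ^ a j k ∈ Ideal.span (Set.range (sparseSys w a)) := by
  induction hv using Submodule.span_induction with
  | mem x h =>
    obtain ⟨i, rfl⟩ := h
    exact Ideal.subset_span ⟨i, rfl⟩
  | zero => simp
  | add x y _ _ hx hy =>
    simp only [Pi.add_apply, map_add, add_mul, Finset.sum_add_distrib]
    exact add_mem hx hy
  | smul r x _ hx =>
    simp only [Pi.smul_apply, smul_eq_mul, map_mul, mul_assoc]
    rw [← Finset.mul_sum]
    exact Ideal.mul_mem_left _ _ hx

/-- A system supported on `m` monomials generates the same ideal as one with `m` equations. -/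
theorem exists_square_sparseSys {F : Type*} [Field F] {l m n : ℕ} (w : Fin l → Fin m → F)
    (a : Fin m → Fin n → ℕ) : ∃ c : Fin m → Fin m → F,
      Ideal.span (Set.range (sparseSys w a)) = Ideal.span (Set.range (sparseSys c a)) := by
  obtain ⟨c, hc⟩ := exists_spanning_family (Submodule.span F (Set.range w))
  refine ⟨c, le_antisymm ?_ ?_⟩ <;> rw [Ideal.span_le] <;> rintro _ ⟨i, rfl⟩
  · exact sparseSys_mem_of_mem_span c a (w i) (hc ▸ Submodule.subset_span ⟨i, rfl⟩)
  · exact sparseSys_mem_of_mem_span w a (c i) (hc ▸ Submodule.subset_span ⟨i, rfl⟩)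

theorem exists_eq_sparseSys {F : Type*} [Field F] {l n m : ℕ} (G : Fin l → MvPolynomial (Fin n) F)
    (S : Finset (Fin n →₀ ℕ)) (hS : ∀ i, (G i).support ⊆ S) (hm : S.card = m) :
    ∃ (w : Fin l → Fin m → F) (a : Fin m → Fin n → ℕ), G = sparseSys w a := by
  classical
  let s : Fin m ≃ S := (S.equivFinOfCardEq hm).symm
  refine ⟨fun i j => coeff (s j : Fin n →₀ ℕ) (G i), fun j k => (s j : Fin n →₀ ℕ) k, funext fun i => ?_⟩
  have h1 : G i = ∑ b ∈ S, monomial b (coeff b (G i)) := by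
    conv_lhs => rw [← support_sum_monomial_coeff (G i)]
    refine Finset.sum_subset (hS i) fun b _ hb => ?_
    rw [notMem_support_iff.1 hb, map_zero]
  conv_lhs => rw [h1, ← Finset.sum_coe_sort S, ← s.sum_comp]
  refine Finset.sum_congr rfl fun j _ => ?_
  rw [monomial_eq, Finsupp.prod_fintype _ _ (fun k => pow_zero _)]

/-- Bounded degree over a number field gives bounded degree over `ℚ`. -/
theorem HasDegreeAtMost.exists_rat {L : Type} [Field L] [Algebra ℚ L] [FiniteDimensional ℚ L]
    (ι : L →+* ℂ) (δ : ℕ) (x : ℂ) (h : HasDegreeAtMost ι δ x) :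
    ∃ q : Polynomial ℚ, q ≠ 0 ∧ q.natDegree ≤ Module.finrank ℚ L * δ ∧ Polynomial.aeval x q = 0 := by
  obtain ⟨f, hf0, hfd, hfx⟩ := h
  let _ : Algebra L ℂ := ι.toAlgebra
  have : IsScalarTower ℚ L ℂ := IsScalarTower.of_algebraMap_eq fun r => by simp
  have hroot : Polynomial.aeval x f = 0 := hfx
  have hix : IsIntegral L x := IsAlgebraic.isIntegral ⟨f, hf0, hroot⟩
  let E := IntermediateField.adjoin L {x}
  have hfE : FiniteDimensional L E := IntermediateField.adjoin.finiteDimensional hix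
  have hfE' : FiniteDimensional ℚ E := FiniteDimensional.trans ℚ L E
  have hrank : Module.finrank ℚ E ≤ Module.finrank ℚ L * δ := by
    rw [← Module.finrank_mul_finrank ℚ L E, IntermediateField.adjoin.finrank hix]
    exact Nat.mul_le_mul_left _
      ((Polynomial.natDegree_le_of_dvd (minpoly.dvd L x hroot) hf0).trans hfd)
  let z : E := ⟨x, IntermediateField.mem_adjoin_simple_self L x⟩
  have hz : IsIntegral ℚ z := Algebra.IsIntegral.isIntegral z
  refine ⟨minpoly ℚ z, minpoly.ne_zero hz, (minpoly.natDegree_le z).trans hrank, ?_⟩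
  have h1 : Polynomial.aeval (algebraMap E ℂ z) (minpoly ℚ z) = 0 := by
    rw [Polynomial.aeval_algebraMap_apply, minpoly.aeval, map_zero]
  exact h1

end Transfer

/-- **Corollary 3, number field case.** For all positive integers `d, δ, n, m` there is a
constant `γ'(d,δ,n,m)` such that any `k × n` `m`-sparse polynomial system over a degree-`d`
extension `𝓛` of `ℚ`, regarded as a subfield of `ℂ` via an embedding `ι`, has at most
`γ'(d,δ,n,m)` isolated roots in `ℂⁿ` of degree at most `δ` over `𝓛`. -/
theorem bounded_degree_roots_number_field (d δ n m : ℕ)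
    (hd : 0 < d) (hδ : 0 < δ) (hn : 0 < n) (hm : 0 < m) :
    ∃ γ' : ℕ,
      ∀ (𝓛 : Type) (_ : Field 𝓛) (_ : Algebra ℚ 𝓛) (_ : FiniteDimensional ℚ 𝓛)
        (_ : Module.finrank ℚ 𝓛 = d)
        (ι : 𝓛 →+* ℂ)
        (k : ℕ) (G : Fin k → MvPolynomial (Fin n) 𝓛), IsSparseSystem G m →
          {x : Fin n → ℂ | IsIsolatedRoot (fun i => (G i).map ι) x ∧
              ∀ i, HasDegreeAtMost ι δ (x i)}.Finite ∧
          {x : Fin n → ℂ | IsIsolatedRoot (fun i => (G i).map ι) x ∧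
              ∀ i, HasDegreeAtMost ι δ (x i)}.ncard ≤ γ' := by
  classical
  have : Fact (Nat.Prime 2) := ⟨Nat.prime_two⟩
  obtain ⟨e⟩ := nonempty_ringEquiv_padicComplex 2
  obtain ⟨𝒯, π, h𝒯, hπ0, hπ1, hdec⟩ := exists_decomposition (C := PadicComplex 2) 2 (d * δ)
  obtain ⟨M, hM⟩ := core_bound (C := PadicComplex 2) 2 m n 𝒯 h𝒯 π hπ0 hπ1
  refine ⟨M, fun 𝓛 _ _ _ hfin ι k G hG => ?_⟩
  set S : Set (Fin n → ℂ) := {x | IsIsolatedRoot (fun i => (G i).map ι) x ∧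
    ∀ i, HasDegreeAtMost ι δ (x i)} with hS
  let θ : 𝓛 →+* PadicComplex 2 := (e : ℂ →+* PadicComplex 2).comp ι
  obtain ⟨w, a, hwa⟩ := exists_eq_sparseSys (fun i => MvPolynomial.map θ (G i))
    (Finset.univ.biUnion fun i => (G i).support)
    (fun i => (MvPolynomial.support_map_subset θ (G i)).trans
      (Finset.subset_biUnion_of_mem (fun i => (G i).support) (Finset.mem_univ i))) hG.2
  obtain ⟨c, hc⟩ := exists_square_sparseSys w a
  have hbound : ∀ T : Finset (Fin n → ℂ), (T : Set (Fin n → ℂ)) ⊆ S → T.card ≤ M := by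
    intro T hT
    have hinj : Function.Injective fun (x : Fin n → ℂ) (i : Fin n) => e (x i) := fun x y h =>
      funext fun i => e.injective (congrFun h i)
    rw [← Finset.card_image_of_injective T hinj]
    refine hM c a _ fun y hy => ?_
    obtain ⟨x, hxT, rfl⟩ := Finset.mem_image.1 hy
    obtain ⟨hiso, hdeg⟩ := hT hxT
    constructor
    · have h1 := (algIsolated_of_isolated _ x hiso.1 hiso.2).map (e : ℂ →+* PadicComplex 2)
      simp only [MvPolynomial.map_map] at h1
      change AlgIsolated (fun i => MvPolynomial.map θ (G i)) _ at h1
      rw [hwa] at h1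
      exact h1.congr hc
    · intro i
      obtain ⟨q, hq0, hqd, hqx⟩ := (hdeg i).exists_rat
      rw [hfin] at hqd
      refine hdec (e (x i)) q hq0 hqd ?_
      have h2 : Polynomial.aeval (e (x i)) q = e (Polynomial.aeval (x i) q) := by
        rw [Polynomial.aeval_def, Polynomial.aeval_def, ← RingEquiv.coe_toRingHom,
          Polynomial.hom_eval₂]
        congr 1
        exact Subsingleton.elim _ _
      rw [h2, hqx, map_zero]
  have hSfin : S.Finite := by
    by_contra hinf
    obtain ⟨T, hT, hcard⟩ := Set.Infinite.exists_subset_card_eq hinf (M + 1)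
    have := hbound T hT
    omega
  refine ⟨hSfin, ?_⟩
  rw [Set.ncard_eq_toFinset_card S hSfin]
  exact hbound _ (by simp)
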